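/- arXiv:math/0212290 — 2 statements merged into one kernel-verified Lean document; each statement's English description precedes it below -/
import Mathlib

section
/- The intersection of the image of H in H_{Z[q^{±1}]} with the commutative subalgebra A generated over Z[q^{±1}] by Y_1^{±1}, Y_2^{±1}, Y_3^{±1} equals the Z[q]-subalgebra of H_{Z[q^{±1}]} generated by (Y_1Y_2Y_3)^{±1}, by q(Y_iY_j)^{±1} for 1 ≤ i ≠ j ≤ 3, and by qY_i^{±1} for 1 ≤ i ≤ 3. -/
/-- The defining relations of the affine Hecke algebra of type `A_2` (for `Gl_3`),
on the free algebra on four generators `T = X 0`, `T⁻¹ = X 1`, `S_1 = X 2`, `S_2 = X 3`. -/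
inductive HeckeRel (R : Type) [CommRing R] (q : R) :
    FreeAlgebra R (Fin 4) → FreeAlgebra R (Fin 4) → Prop
  | TTinv : HeckeRel R q (FreeAlgebra.ι R 0 * FreeAlgebra.ι R 1) 1
  | TinvT : HeckeRel R q (FreeAlgebra.ι R 1 * FreeAlgebra.ι R 0) 1
  | quad : HeckeRel R q
      ((FreeAlgebra.ι R 2 + 1) * (FreeAlgebra.ι R 2 - algebraMap R (FreeAlgebra R (Fin 4)) q)) 0
  | T3S1 : HeckeRel R q (FreeAlgebra.ι R 0 ^ 3 * FreeAlgebra.ι R 2)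
      (FreeAlgebra.ι R 2 * FreeAlgebra.ι R 0 ^ 3)
  | braid : HeckeRel R q (FreeAlgebra.ι R 2 * FreeAlgebra.ι R 3 * FreeAlgebra.ι R 2)
      (FreeAlgebra.ι R 3 * FreeAlgebra.ι R 2 * FreeAlgebra.ι R 3)
  | TS2 : HeckeRel R q (FreeAlgebra.ι R 0 * FreeAlgebra.ι R 3)
      (FreeAlgebra.ι R 2 * FreeAlgebra.ι R 0)

/-- The affine Hecke algebra `H_R` with parameter `q ∈ R`. -/
abbrev HeckeAlg (R : Type) [CommRing R] (q : R) := RingQuot (HeckeRel R q)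

namespace HeckeAlg

variable (R : Type) [CommRing R] (q : R)

noncomputable def gen (i : Fin 4) : HeckeAlg R q :=
  RingQuot.mkAlgHom R (HeckeRel R q) (FreeAlgebra.ι R i)

noncomputable def T : HeckeAlg R q := gen R q 0
noncomputable def Tinv : HeckeAlg R q := gen R q 1
noncomputable def S1 : HeckeAlg R q := gen R q 2
noncomputable def S2 : HeckeAlg R q := gen R q 3

theorem T_mul_Tinv : T R q * Tinv R q = 1 := by
  simpa [T, Tinv, gen, map_mul, map_one] using
    RingQuot.mkAlgHom_rel R (HeckeRel.TTinv (R := R) (q := q))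

theorem Tinv_mul_T : Tinv R q * T R q = 1 := by
  simpa [T, Tinv, gen, map_mul, map_one] using
    RingQuot.mkAlgHom_rel R (HeckeRel.TinvT (R := R) (q := q))

theorem quad_rel : (S1 R q + 1) * (S1 R q - algebraMap R (HeckeAlg R q) q) = 0 := by
  simpa [S1, gen, map_mul, map_add, map_sub, map_one, map_zero, AlgHom.commutes] using
    RingQuot.mkAlgHom_rel R (HeckeRel.quad (R := R) (q := q))

theorem T3_mul_S1 : T R q ^ 3 * S1 R q = S1 R q * T R q ^ 3 := by
  simpa [T, S1, gen, map_mul, map_pow] using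
    RingQuot.mkAlgHom_rel R (HeckeRel.T3S1 (R := R) (q := q))

theorem braid_rel : S1 R q * S2 R q * S1 R q = S2 R q * S1 R q * S2 R q := by
  simpa [S1, S2, gen, map_mul] using
    RingQuot.mkAlgHom_rel R (HeckeRel.braid (R := R) (q := q))

theorem T_mul_S2 : T R q * S2 R q = S1 R q * T R q := by
  simpa [T, S1, S2, gen, map_mul] using
    RingQuot.mkAlgHom_rel R (HeckeRel.TS2 (R := R) (q := q))

/-- The canonical (base change) ring homomorphism `H_R → H_S` induced by a ring
homomorphism `R → S` sending the parameter `q` to the parameter `q'`. -/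
noncomputable def map {R S : Type} [CommRing R] [CommRing S] (f : R →+* S) (q : R) (q' : S)
    (h : f q = q') : HeckeAlg R q →+* HeckeAlg S q' := by
  subst h
  letI : Algebra R (HeckeAlg S (f q)) :=
    RingHom.toAlgebra' ((algebraMap S (HeckeAlg S (f q))).comp f)
      (fun c x => by simpa using Algebra.commutes (f c) x)
  refine RingQuot.lift
    ⟨((FreeAlgebra.lift R fun i => gen S (f q) i : _ →ₐ[R] HeckeAlg S (f q)) :
        FreeAlgebra R (Fin 4) →+* HeckeAlg S (f q)), ?_⟩
  have key : ∀ i : Fin 4,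
      (FreeAlgebra.lift R fun j => gen S (f q) j) (FreeAlgebra.ι R i) = gen S (f q) i :=
    fun i => FreeAlgebra.lift_ι_apply _ _
  have keyq : (FreeAlgebra.lift R fun j => gen S (f q) j)
      (algebraMap R (FreeAlgebra R (Fin 4)) q) = algebraMap S (HeckeAlg S (f q)) (f q) := by
    rw [AlgHom.commutes]
    rfl
  intro a b hab
  cases hab with
  | TTinv => simpa [key, T, Tinv] using T_mul_Tinv S (f q)
  | TinvT => simpa [key, T, Tinv] using Tinv_mul_T S (f q)
  | quad => simpa [key, keyq, S1] using quad_rel S (f q)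
  | T3S1 => simpa [key, T, S1] using T3_mul_S1 S (f q)
  | braid => simpa [key, S1, S2] using braid_rel S (f q)
  | TS2 => simpa [key, T, S1, S2] using T_mul_S2 S (f q)

/-- `S_1⁻¹ = q⁻¹ (S_1 - q + 1)`, where `qi` is an inverse of `q` in `R`. -/
noncomputable def S1i (qi : R) : HeckeAlg R q :=
  algebraMap R (HeckeAlg R q) qi * (S1 R q - algebraMap R (HeckeAlg R q) q + 1)

/-- `S_2⁻¹ = q⁻¹ (S_2 - q + 1)`, where `qi` is an inverse of `q` in `R`. -/
noncomputable def S2i (qi : R) : HeckeAlg R q :=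
  algebraMap R (HeckeAlg R q) qi * (S2 R q - algebraMap R (HeckeAlg R q) q + 1)

/-- The Bernstein elements `Y_1 = q S_1⁻¹ S_2⁻¹ T`, `Y_2 = S_2⁻¹ T S_1`,
`Y_3 = q⁻¹ T S_1 S_2`, where `qi` is an inverse of `q` in `R`. -/
noncomputable def Y (qi : R) : Fin 3 → HeckeAlg R q :=
  ![algebraMap R (HeckeAlg R q) q * S1i R q qi * S2i R q qi * T R q,
    S2i R q qi * T R q * S1 R q,
    algebraMap R (HeckeAlg R q) qi * T R q * S1 R q * S2 R q]

end HeckeAlg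

noncomputable section

/-- `H`, the affine Hecke algebra over `ℤ[q]` (with `q` an indeterminate). -/
abbrev HPoly : Type := HeckeAlg (Polynomial ℤ) Polynomial.X

/-- `H_{ℤ[q^{±1}]}`, the base change of `H` to the Laurent polynomial ring `ℤ[q,q⁻¹]`. -/
abbrev HLau : Type := HeckeAlg (LaurentPolynomial ℤ) (LaurentPolynomial.T 1)

/-- The canonical map `ι : H → H_{ℤ[q^{±1}]}`. -/
def ιLau : HPoly →+* HLau :=
  HeckeAlg.map Polynomial.toLaurent Polynomial.X (LaurentPolynomial.T 1) Polynomial.toLaurent_X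

/-- The Bernstein elements `Y_1, Y_2, Y_3` of `H_{ℤ[q^{±1}]}`
(where `S_i⁻¹ = q⁻¹(S_i - q + 1)` and `q⁻¹` is the Laurent monomial `T (-1)`). -/
def YLau : Fin 3 → HLau :=
  HeckeAlg.Y (LaurentPolynomial ℤ) (LaurentPolynomial.T 1) (LaurentPolynomial.T (-1))

/-- The image of `q` in `H_{ℤ[q^{±1}]}`. -/
def qLau : HLau := algebraMap (LaurentPolynomial ℤ) HLau (LaurentPolynomial.T 1)

/-- The image of `q⁻¹` in `H_{ℤ[q^{±1}]}`. -/
def qLauInv : HLau := algebraMap (LaurentPolynomial ℤ) HLau (LaurentPolynomial.T (-1))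

/-- The structure map of the `ℤ[q]`-algebra `H_{ℤ[q^{±1}]}`, i.e. `ℤ[q] → ℤ[q,q⁻¹] → H_{ℤ[q^{±1}]}`.
A `ℤ[q]`-subalgebra of `H_{ℤ[q^{±1}]}` is a subring containing the range of this map. -/
def structZq : Polynomial ℤ →+* HLau :=
  (algebraMap (LaurentPolynomial ℤ) HLau).comp Polynomial.toLaurent

end

namespace HK
section grp
variable {G : Type*} [Group G] (Q t s1 s2 : G)

theorem grp_t3_s2 (h3 : t^3 * s1 = s1 * t^3) (hts : t * s2 = s1 * t) : t^3 * s2 = s2 * t^3 := by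
  have : s2 = t⁻¹ * s1 * t := by rw [mul_assoc, ← hts]; group
  have h3' : s1 = t^3 * s1 * (t^3)⁻¹ := by rw [h3]; group
  rw [this]
  nth_rewrite 2 [h3']
  group

theorem grp_s2_t2 (h3 : t^3 * s1 = s1 * t^3) (hts : t * s2 = s1 * t) :
    s2 * t^2 = t^2 * s1 := by
  have : s2 = t⁻¹ * s1 * t := by rw [mul_assoc, ← hts]; group
  have h3' : s1 = t^3 * s1 * (t^3)⁻¹ := by rw [h3]; group
  rw [this]
  nth_rewrite 1 [h3']
  group

theorem grp_prod (hQ : ∀ g, Q * g = g * Q) (hb : s1 * s2 * s1 = s2 * s1 * s2)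
    (h3 : t^3 * s1 = s1 * t^3) (hts : t * s2 = s1 * t) :
    (Q * s1⁻¹ * s2⁻¹ * t) * (s2⁻¹ * t * s1) * (Q⁻¹ * t * s1 * s2) = t^3 := by
  have h2 := grp_s2_t2 t s1 s2 h3 hts
  have h4 := grp_t3_s2 t s1 s2 h3 hts
  have e1 : t * s2⁻¹ = s1⁻¹ * t := by
    rw [mul_inv_eq_iff_eq_mul, mul_assoc, hts]; group
  have hQ' : ∀ g, g * Q⁻¹ = Q⁻¹ * g := fun g => by
    rw [mul_inv_eq_iff_eq_mul, mul_assoc, ← hQ]; group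
  calc _ = Q * s1⁻¹ * s2⁻¹ * (t * s2⁻¹) * t * s1 * Q⁻¹ * t * s1 * s2 := by group
    _ = Q * (s1⁻¹ * s2⁻¹ * (s1⁻¹ * t) * t * s1 * Q⁻¹) * t * s1 * s2 := by rw [e1]; group
    _ = s1⁻¹ * s2⁻¹ * s1⁻¹ * (t^2 * s1) * t * s1 * s2 := by rw [hQ']; simp [sq, mul_assoc]
    _ = s1⁻¹ * s2⁻¹ * s1⁻¹ * s2 * (t^3 * s1) * s2 := by rw [← h2]; group
    _ = s1⁻¹ * s2⁻¹ * s1⁻¹ * s2 * s1 * (t^3 * s2) := by rw [h3]; group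
    _ = (s1 * s2 * s1)⁻¹ * (s2 * s1 * s2) * t^3 := by rw [h4]; group
    _ = _ := by rw [hb]; group

theorem grp_comm23 (hQ : ∀ g, Q * g = g * Q) (hb : s1 * s2 * s1 = s2 * s1 * s2)
    (h3 : t^3 * s1 = s1 * t^3) (hts : t * s2 = s1 * t) :
    (s2⁻¹ * t * s1) * (Q⁻¹ * t * s1 * s2) = (Q⁻¹ * t * s1 * s2) * (s2⁻¹ * t * s1) := by
  have h2 := grp_s2_t2 t s1 s2 h3 hts
  have hQ' : ∀ g, g * Q⁻¹ = Q⁻¹ * g := fun g => by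
    rw [mul_inv_eq_iff_eq_mul, mul_assoc, ← hQ]; group
  calc _ = (s2⁻¹ * t * s1 * Q⁻¹) * t * s1 * s2 := by group
    _ = Q⁻¹ * s2⁻¹ * t * (s1 * t) * s1 * s2 := by rw [hQ']; group
    _ = Q⁻¹ * s2⁻¹ * t^2 * (s2 * s1 * s2) := by rw [← hts]; simp [sq, mul_assoc]
    _ = Q⁻¹ * s2⁻¹ * (t^2 * s1) * s2 * s1 := by rw [← hb]; group
    _ = Q⁻¹ * t * (t * s2) * s1 := by rw [← h2]; simp [sq, mul_assoc]
    _ = _ := by rw [hts]; group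

theorem grp_comm (hQ : ∀ g, Q * g = g * Q) (hb : s1 * s2 * s1 = s2 * s1 * s2)
    (h3 : t^3 * s1 = s1 * t^3) (hts : t * s2 = s1 * t) (y1 y2 y3 : G)
    (h1 : y1 = Q * s1⁻¹ * s2⁻¹ * t) (h2 : y2 = s2⁻¹ * t * s1) (h3' : y3 = Q⁻¹ * t * s1 * s2) :
    Commute y1 y2 ∧ Commute y1 y3 ∧ Commute y2 y3 := by
  have hp := grp_prod Q t s1 s2 hQ hb h3 hts
  have hc := grp_comm23 Q t s1 s2 hQ hb h3 hts
  rw [← h1, ← h2, ← h3'] at hp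
  rw [← h2, ← h3'] at hc
  have ct1 : Commute (t^3) s1 := h3
  have ct2 : Commute (t^3) s2 := grp_t3_s2 t s1 s2 h3 hts
  have ctt : Commute (t^3) t := (Commute.refl t).pow_left 3
  have ctQ : Commute (t^3) Q := (hQ _).symm
  have c2 : Commute (t^3) y2 := by
    rw [h2]; exact (ct2.inv_right.mul_right ctt).mul_right ct1
  have c3 : Commute (t^3) y3 := by
    rw [h3']; exact ((ctQ.inv_right.mul_right ctt).mul_right ct1).mul_right ct2
  have c23 : Commute y2 y3 := hc
  have e : y1 = t^3 * (y2 * y3)⁻¹ := by rw [← hp]; group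
  refine ⟨?_, ?_, c23⟩
  · rw [e]
    exact c2.mul_left ((Commute.refl y2).mul_left c23.symm).inv_left
  · rw [e]
    exact c3.mul_left (c23.mul_left (Commute.refl y3)).inv_left
end grp

section DL
variable {R K : Type*} [CommRing R] [Field K] [Algebra R K] (q : R)

/-- Demazure-Lusztig operator. -/
noncomputable def DL (s : K →ₐ[R] K) (x y : K) : Module.End R K :=
  -s.toLinearMap + (LinearMap.mulLeft R ((algebraMap R K q - 1) * (y / (y - x)))) ∘ₗ
    (LinearMap.id - s.toLinearMap)

theorem DL_apply (s : K →ₐ[R] K) (x y f : K) :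
    DL q s x y f = - s f + (algebraMap R K q - 1) * (y / (y - x)) * (f - s f) := by
  simp [DL, mul_assoc]

variable (s s' : K →ₐ[R] K) (x y z : K)

theorem DL_quad (hss : ∀ f, s (s f) = f) (hx : s x = y) (hxy : x ≠ y) (f : K) :
    DL q s x y (DL q s x y f) = (algebraMap R K q - 1) * DL q s x y f + algebraMap R K q * f := by
  have hy : s y = x := by rw [← hx, hss]
  have h1 : y - x ≠ 0 := sub_ne_zero.2 hxy.symm
  have h2 : x - y ≠ 0 := sub_ne_zero.2 hxy
  have h3 : x - y = -(y - x) := by ring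
  simp only [DL_apply, map_add, map_neg, map_sub, map_mul, map_div₀, hx, hy, hss, map_one, AlgHom.commutes]
  rw [h3]
  field_simp
  ring

theorem DL_SXS (hss : ∀ f, s (s f) = f) (hx : s x = y) (hxy : x ≠ y) (f : K) :
    DL q s x y (x * DL q s x y f) = algebraMap R K q * (y * f) := by
  have hy : s y = x := by rw [← hx, hss]
  have h1 : y - x ≠ 0 := sub_ne_zero.2 hxy.symm
  have h3 : x - y = -(y - x) := by ring
  simp only [DL_apply, map_add, map_neg, map_sub, map_mul, map_div₀, hx, hy, hss, map_one, AlgHom.commutes]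
  rw [h3]
  field_simp
  ring

theorem DL_inv (hz : s z = z) (f : K) :
    DL q s x y (z * f) = z * DL q s x y f := by
  simp only [DL_apply, map_mul, hz]
  ring

theorem DL_braid (hss : ∀ f, s (s f) = f) (hss' : ∀ f, s' (s' f) = f)
    (hb : ∀ f, s (s' (s f)) = s' (s (s' f)))
    (hx : s x = y) (hz : s z = z) (hx' : s' x = x) (hy' : s' y = z)
    (hxy : x ≠ y) (hyz : y ≠ z) (hxz : x ≠ z) (f : K) :
    DL q s x y (DL q s' y z (DL q s x y f)) = DL q s' y z (DL q s x y (DL q s' y z f)) := by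
  have hy : s y = x := by rw [← hx, hss]
  have hz' : s' z = y := by rw [← hy', hss']
  have h1 : y - x ≠ 0 := sub_ne_zero.2 hxy.symm
  have h2 : z - y ≠ 0 := sub_ne_zero.2 hyz.symm
  have h4 : z - x ≠ 0 := sub_ne_zero.2 hxz.symm
  have h3 : x - y = -(y - x) := by ring
  have h3' : y - z = -(z - y) := by ring
  simp only [DL_apply, map_add, map_neg, map_sub, map_mul, map_div₀, hx, hy, hz, hx', hy', hz', hss,
    hss', hb, map_one, AlgHom.commutes]
  rw [h3, h3']
  generalize s' (s (s' f)) = a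
  generalize s' (s f) = b
  generalize s (s' f) = c
  generalize s f = d
  generalize s' f = e
  field_simp
  ring

variable (v : K)

theorem DL_mon_gt (hx : s x = y) (hy : s y = x) (hv : s v = v) (hxy : x ≠ y)
    (hx0 : x ≠ 0) (hy0 : y ≠ 0) (b : ℤ) (n : ℕ) :
    DL q s x y (x ^ (b + n + 1) * y ^ b * v) =
      -(algebraMap R K q * (x ^ b * y ^ (b + n + 1) * v)) - (algebraMap R K q - 1) *
        ∑ i ∈ Finset.range n, x ^ (b + 1 + i) * y ^ (b + n - i) * v := by
  have h1 : y - x ≠ 0 := sub_ne_zero.2 hxy.symm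
  have hg := geom_sum₂_mul x y n
  have hsum : ∑ i ∈ Finset.range n, x ^ (b + 1 + i) * y ^ (b + n - i) * v =
      x ^ b * y ^ b * v * x * y * ∑ i ∈ Finset.range n, x ^ i * y ^ (n - 1 - i) := by
    rw [Finset.mul_sum]
    refine Finset.sum_congr rfl fun i hi => ?_
    have hi' := Finset.mem_range.1 hi
    have : (b + n - i : ℤ) = b + 1 + (n - 1 - i : ℕ) := by omega
    rw [this, zpow_add₀ hx0, zpow_add₀ hx0, zpow_add₀ hy0, zpow_add₀ hy0]
    simp only [zpow_one, zpow_natCast]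
    ring
  rw [hsum]
  generalize ∑ i ∈ Finset.range n, x ^ i * y ^ (n - 1 - i) = P at *
  simp only [DL_apply, map_mul, map_zpow₀, hx, hy, hv]
  rw [zpow_add₀ hx0, zpow_add₀ hx0, zpow_add₀ hy0, zpow_add₀ hy0]
  simp only [zpow_one, zpow_natCast]
  have hxn : x ^ n = P * (x - y) + y ^ n := by rw [hg]; ring
  rw [hxn]
  field_simp
  ring

theorem DL_mon_lt (hx : s x = y) (hy : s y = x) (hv : s v = v) (hxy : x ≠ y)
    (hx0 : x ≠ 0) (hy0 : y ≠ 0) (b : ℤ) (n : ℕ) :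
    DL q s x y (x ^ b * y ^ (b + n + 1) * v) =
      -(x ^ (b + n + 1) * y ^ b * v) + (algebraMap R K q - 1) * (x ^ b * y ^ (b + n + 1) * v)
       + (algebraMap R K q - 1) *
        ∑ i ∈ Finset.range n, x ^ (b + 1 + i) * y ^ (b + n - i) * v := by
  have h := DL_mon_gt q s x y v hx hy hv hxy hx0 hy0 b n
  simp only [DL_apply, map_mul, map_zpow₀, hx, hy, hv] at h ⊢
  linear_combination -h

theorem DL_mem (N : AddSubgroup K) (hN : ∀ f ∈ N, algebraMap R K q * f ∈ N)
    (hx : s x = y) (hy : s y = x) (hv : s v = v) (hxy : x ≠ y)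
    (hx0 : x ≠ 0) (hy0 : y ≠ 0) (a b : ℤ)
    (hgt : b < a → algebraMap R K q * (x ^ b * y ^ a * v) ∈ N)
    (hin : ∀ i j, i + j = a + b → min a b < i → i < max a b → x ^ i * y ^ j * v ∈ N)
    (hle : a ≤ b → x ^ a * y ^ b * v ∈ N)
    (hlt : a < b → x ^ b * y ^ a * v ∈ N) :
    DL q s x y (x ^ a * y ^ b * v) ∈ N := by
  have hN1 : ∀ f ∈ N, (algebraMap R K q - 1) * f ∈ N := fun f hf => by
    rw [sub_mul, one_mul]; exact N.sub_mem (hN f hf) hf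
  rcases lt_trichotomy a b with h | h | h
  · obtain ⟨n, rfl⟩ : ∃ n : ℕ, b = a + n + 1 := ⟨(b - a - 1).toNat, by omega⟩
    rw [DL_mon_lt q s x y v hx hy hv hxy hx0 hy0]
    refine N.add_mem (N.add_mem (N.neg_mem (hlt h)) (hN1 _ (hle h.le)))
      (hN1 _ (N.sum_mem fun i hi => ?_))
    have := Finset.mem_range.1 hi
    exact hin _ _ (by omega) (by omega) (by omega)
  · subst h
    rw [DL_apply]
    have : s (x ^ a * y ^ a * v) = x ^ a * y ^ a * v := by
      simp only [map_mul, map_zpow₀, hx, hy, hv]; ring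
    rw [this, sub_self, mul_zero, add_zero]
    exact N.neg_mem (hle le_rfl)
  · obtain ⟨n, rfl⟩ : ∃ n : ℕ, a = b + n + 1 := ⟨(a - b - 1).toNat, by omega⟩
    rw [DL_mon_gt q s x y v hx hy hv hxy hx0 hy0]
    refine N.sub_mem (N.neg_mem (hgt h))
      (hN1 _ (N.sum_mem fun i hi => ?_))
    have := Finset.mem_range.1 hi
    exact hin _ _ (by omega) (by omega) (by omega)
end DL

section lat
variable {K : Type*} [Field K] (Q x y z : K)

/-- The lattice spanned by `Q^k x^a y^b z^c` with `k ≥ w a b c`. -/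
def Lat (w : ℤ → ℤ → ℤ → ℤ) : AddSubgroup K :=
  AddSubgroup.closure {m | ∃ k a b c : ℤ, w a b c ≤ k ∧ m = Q ^ k * (x ^ a * y ^ b * z ^ c)}

variable {Q x y z}
theorem mem_Lat {w : ℤ → ℤ → ℤ → ℤ} {k a b c : ℤ} (h : w a b c ≤ k) :
    Q ^ k * (x ^ a * y ^ b * z ^ c) ∈ Lat Q x y z w :=
  AddSubgroup.subset_closure ⟨k, a, b, c, h, rfl⟩

theorem Lat_map {w : ℤ → ℤ → ℤ → ℤ} (N : AddSubgroup K) (F : K →+ K)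
    (h : ∀ k a b c : ℤ, w a b c ≤ k → F (Q ^ k * (x ^ a * y ^ b * z ^ c)) ∈ N) :
    ∀ f ∈ Lat Q x y z w, F f ∈ N := by
  intro f hf
  have : Lat Q x y z w ≤ N.comap F := by
    rw [Lat, AddSubgroup.closure_le]
    rintro _ ⟨k, a, b, c, hk, rfl⟩
    exact h k a b c hk
  exact this hf

theorem Lat_Q (hQ : Q ≠ 0) {w : ℤ → ℤ → ℤ → ℤ} : ∀ f ∈ Lat Q x y z w, Q * f ∈ Lat Q x y z w := by
  refine Lat_map _ (AddMonoidHom.mulLeft Q) fun k a b c hk => ?_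
  have : Q * (Q ^ k * (x ^ a * y ^ b * z ^ c)) = Q ^ (k + 1) * (x ^ a * y ^ b * z ^ c) := by
    rw [zpow_add₀ hQ]; simp; ring
  simp only [AddMonoidHom.coe_mulLeft, this]
  exact mem_Lat (by omega)

theorem Lat_shift (hQ : Q ≠ 0) (hx : x ≠ 0) (hy : y ≠ 0) (hz : z ≠ 0) {w w' : ℤ → ℤ → ℤ → ℤ}
    (k₀ a₀ b₀ c₀ : ℤ) (h : ∀ a b c, w' (a₀ + a) (b₀ + b) (c₀ + c) ≤ k₀ + w a b c) :
    ∀ f ∈ Lat Q x y z w, Q ^ k₀ * (x ^ a₀ * y ^ b₀ * z ^ c₀) * f ∈ Lat Q x y z w' := by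
  refine Lat_map _ (AddMonoidHom.mulLeft (Q ^ k₀ * (x ^ a₀ * y ^ b₀ * z ^ c₀))) fun k a b c hk => ?_
  have : Q ^ k₀ * (x ^ a₀ * y ^ b₀ * z ^ c₀) * (Q ^ k * (x ^ a * y ^ b * z ^ c)) =
      Q ^ (k₀ + k) * (x ^ (a₀ + a) * y ^ (b₀ + b) * z ^ (c₀ + c)) := by
    rw [zpow_add₀ hQ, zpow_add₀ hx, zpow_add₀ hy, zpow_add₀ hz]; ring
  simp only [AddMonoidHom.coe_mulLeft, this]
  exact mem_Lat ((h a b c).trans (by omega))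

variable {R : Type*} [CommRing R] [Algebra R K] (q : R) (s : K →ₐ[R] K)

theorem Lat_S1 (hQ : algebraMap R K q ≠ 0) (hx0 : x ≠ 0) (hy0 : y ≠ 0)
    (hx : s x = y) (hy : s y = x) (hz : s z = z) (hxy : x ≠ y)
    {w w' : ℤ → ℤ → ℤ → ℤ}
    (hgt : ∀ a b c, b < a → w' b a c ≤ w a b c + 1)
    (hin : ∀ a b c i j, i + j = a + b → min a b < i → i < max a b → w' i j c ≤ w a b c)
    (hle : ∀ a b c, a ≤ b → w' a b c ≤ w a b c)
    (hlt : ∀ a b c, a < b → w' b a c ≤ w a b c) :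
    ∀ f ∈ Lat (algebraMap R K q) x y z w, DL q s x y f ∈ Lat (algebraMap R K q) x y z w' := by
  refine Lat_map _ (DL q s x y).toAddMonoidHom fun k a b c hk => ?_
  have e : ∀ a b : ℤ, algebraMap R K q ^ k * (x ^ a * y ^ b * z ^ c) =
    x ^ a * y ^ b * (algebraMap R K q ^ k * z ^ c) := fun a b => by ring
  have e' : ∀ a b : ℤ, algebraMap R K q ^ (k+1) * (x ^ a * y ^ b * z ^ c) =
    algebraMap R K q * (x ^ a * y ^ b * (algebraMap R K q ^ k * z ^ c)) := fun a b => by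
      rw [zpow_add₀ hQ, zpow_one]; ring
  rw [e, LinearMap.toAddMonoidHom_coe]
  refine DL_mem q s x y _ _ (Lat_Q hQ) hx hy (by simp [hz]) hxy hx0 hy0 a b ?_ ?_ ?_ ?_
  · intro h; rw [← e']; exact mem_Lat ((hgt a b c h).trans (by omega))
  · intro i j h1 h2 h3; rw [← e]; exact mem_Lat ((hin a b c i j h1 h2 h3).trans hk)
  · intro h; rw [← e]; exact mem_Lat ((hle a b c h).trans hk)
  · intro h; rw [← e]; exact mem_Lat ((hlt a b c h).trans hk)

theorem Lat_S2 (hQ : algebraMap R K q ≠ 0) (hy0 : y ≠ 0) (hz0 : z ≠ 0)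
    (hy : s y = z) (hz : s z = y) (hx : s x = x) (hyz : y ≠ z)
    {w w' : ℤ → ℤ → ℤ → ℤ}
    (hgt : ∀ a b c, c < b → w' a c b ≤ w a b c + 1)
    (hin : ∀ a b c i j, i + j = b + c → min b c < i → i < max b c → w' a i j ≤ w a b c)
    (hle : ∀ a b c, b ≤ c → w' a b c ≤ w a b c)
    (hlt : ∀ a b c, b < c → w' a c b ≤ w a b c) :
    ∀ f ∈ Lat (algebraMap R K q) x y z w, DL q s y z f ∈ Lat (algebraMap R K q) x y z w' := by
  refine Lat_map _ (DL q s y z).toAddMonoidHom fun k a b c hk => ?_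
  have e : ∀ b c : ℤ, algebraMap R K q ^ k * (x ^ a * y ^ b * z ^ c) =
    y ^ b * z ^ c * (algebraMap R K q ^ k * x ^ a) := fun a b => by ring
  have e' : ∀ b c : ℤ, algebraMap R K q ^ (k+1) * (x ^ a * y ^ b * z ^ c) =
    algebraMap R K q * (y ^ b * z ^ c * (algebraMap R K q ^ k * x ^ a)) := fun a b => by
      rw [zpow_add₀ hQ, zpow_one]; ring
  rw [e, LinearMap.toAddMonoidHom_coe]
  refine DL_mem q s y z _ _ (Lat_Q hQ) hy hz (by simp [hx]) hyz hy0 hz0 b c ?_ ?_ ?_ ?_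
  · intro h; rw [← e']; exact mem_Lat ((hgt a b c h).trans (by omega))
  · intro i j h1 h2 h3; rw [← e]; exact mem_Lat ((hin a b c i j h1 h2 h3).trans hk)
  · intro h; rw [← e]; exact mem_Lat ((hle a b c h).trans hk)
  · intro h; rw [← e]; exact mem_Lat ((hlt a b c h).trans hk)

/-- The exponent `max - min`. -/
def dd (a b c : ℤ) : ℤ := max a (max b c) - min a (min b c)

theorem Lat_S1_dd (hQ : algebraMap R K q ≠ 0) (hx0 : x ≠ 0) (hy0 : y ≠ 0)
    (hx : s x = y) (hy : s y = x) (hz : s z = z) (hxy : x ≠ y) :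
    ∀ f ∈ Lat (algebraMap R K q) x y z dd, DL q s x y f ∈ Lat (algebraMap R K q) x y z dd := by
  apply Lat_S1 q s hQ hx0 hy0 hx hy hz hxy <;> intros <;> simp only [dd] <;> omega

theorem Lat_S2_dd (hQ : algebraMap R K q ≠ 0) (hy0 : y ≠ 0) (hz0 : z ≠ 0)
    (hy : s y = z) (hz : s z = y) (hx : s x = x) (hyz : y ≠ z) :
    ∀ f ∈ Lat (algebraMap R K q) x y z dd, DL q s y z f ∈ Lat (algebraMap R K q) x y z dd := by
  apply Lat_S2 q s hQ hy0 hz0 hy hz hx hyz <;> intros <;> simp only [dd] <;> omega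

theorem Lat_T_dd (s' : K →ₐ[R] K) (hQ : algebraMap R K q ≠ 0)
    (hx0 : x ≠ 0) (hy0 : y ≠ 0) (hz0 : z ≠ 0)
    (hx : s x = y) (hy : s y = x) (hz : s z = z) (hxy : x ≠ y)
    (hy' : s' y = z) (hz' : s' z = y) (hx' : s' x = x) (hyz : y ≠ z) :
    ∀ f ∈ Lat (algebraMap R K q) x y z dd,
      (algebraMap R K q)⁻¹ * DL q s' y z (DL q s x y (x * f)) ∈ Lat (algebraMap R K q) x y z dd := by
  intro f hf
  have h1 := Lat_shift (w' := fun a b c => dd (a - 1) b c) hQ hx0 hy0 hz0 0 1 0 0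
    (fun a b c => by simp [dd]) f hf
  have h2 := Lat_S1 (w' := fun a b c => if c < b then dd a b c else dd a b c + 1)
    q s hQ hx0 hy0 hx hy hz hxy
    (by intros; simp only [dd]; split <;> omega)
    (by intros; simp only [dd]; split <;> omega)
    (by intros; simp only [dd]; split <;> omega)
    (by intros; simp only [dd]; split <;> omega) _ h1
  have h3 := Lat_S2 (w' := fun a b c => dd a b c + 1)
    q s' hQ hy0 hz0 hy' hz' hx' hyz
    (by intros; simp only [dd]; split <;> omega)
    (by intros; simp only [dd]; split <;> omega)
    (by intros; simp only [dd]; split <;> omega)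
    (by intros; simp only [dd]; split <;> omega) _ h2
  have h4 := Lat_shift (w' := dd) hQ hx0 hy0 hz0 (-1) 0 0 0
    (fun a b c => by simp) _ h3
  simpa using h4
end lat
end HK

namespace HK
open HeckeAlg
section rep
variable {R K : Type} [CommRing R] [Field K] [Algebra R K] (q qi : R)

/-- Data for the sign-type polynomial representation. -/
structure Dat (R K : Type) [CommRing R] [Field K] [Algebra R K] where
  q : R
  qi : R
  hq : q * qi = 1
  s : K →ₐ[R] K
  s' : K →ₐ[R] K
  x : K
  y : K
  z : K
  hss : ∀ f, s (s f) = f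
  hss' : ∀ f, s' (s' f) = f
  hb : ∀ f, s (s' (s f)) = s' (s (s' f))
  hx : s x = y
  hz : s z = z
  hx' : s' x = x
  hy' : s' y = z
  hxy : x ≠ y
  hyz : y ≠ z
  hxz : x ≠ z
  x0 : x ≠ 0
  y0 : y ≠ 0
  z0 : z ≠ 0

namespace Dat
variable (D : Dat R K)

theorem hy : D.s D.y = D.x := by rw [← D.hx, D.hss]
theorem hz' : D.s' D.z = D.y := by rw [← D.hy', D.hss']
theorem hqK : algebraMap R K D.q * algebraMap R K D.qi = 1 := by rw [← map_mul, D.hq, map_one]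
theorem q0 : algebraMap R K D.q ≠ 0 := left_ne_zero_of_mul_eq_one D.hqK
theorem qi_eq : algebraMap R K D.qi = (algebraMap R K D.q)⁻¹ := eq_inv_of_mul_eq_one_right D.hqK

noncomputable def S1 : Module.End R K := DL D.q D.s D.x D.y
noncomputable def S2 : Module.End R K := DL D.q D.s' D.y D.z
noncomputable def T : Module.End R K :=
  LinearMap.mulLeft R (algebraMap R K D.q)⁻¹ * (D.S2 * (D.S1 * LinearMap.mulLeft R D.x))
noncomputable def Tinv : Module.End R K := LinearMap.mulLeft R (D.x * D.y * D.z)⁻¹ * (D.T * D.T)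

theorem T_apply (f : K) : D.T f = (algebraMap R K D.q)⁻¹ * D.S2 (D.S1 (D.x * f)) := rfl
theorem Tinv_apply (f : K) : D.Tinv f = (D.x * D.y * D.z)⁻¹ * D.T (D.T f) := rfl

theorem S1_quad (f : K) : D.S1 (D.S1 f) =
    (algebraMap R K D.q - 1) * D.S1 f + algebraMap R K D.q * f :=
  DL_quad _ _ _ _ D.hss D.hx D.hxy f
theorem S2_quad (f : K) : D.S2 (D.S2 f) =
    (algebraMap R K D.q - 1) * D.S2 f + algebraMap R K D.q * f :=
  DL_quad _ _ _ _ D.hss' D.hy' D.hyz f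
theorem SXS1 (f : K) : D.S1 (D.x * D.S1 f) = algebraMap R K D.q * (D.y * f) :=
  DL_SXS _ _ _ _ D.hss D.hx D.hxy f
theorem SXS2 (f : K) : D.S2 (D.y * D.S2 f) = algebraMap R K D.q * (D.z * f) :=
  DL_SXS _ _ _ _ D.hss' D.hy' D.hyz f
theorem S1_z (f : K) : D.S1 (D.z * f) = D.z * D.S1 f := DL_inv _ _ _ _ _ D.hz f
theorem S2_x (f : K) : D.S2 (D.x * f) = D.x * D.S2 f := DL_inv _ _ _ _ _ D.hx' f
theorem S1_q (r : R) (f : K) : D.S1 (algebraMap R K r * f) = algebraMap R K r * D.S1 f := by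
  rw [← Algebra.smul_def, map_smul, Algebra.smul_def]
theorem S2_q (r : R) (f : K) : D.S2 (algebraMap R K r * f) = algebraMap R K r * D.S2 f := by
  rw [← Algebra.smul_def, map_smul, Algebra.smul_def]
theorem T_q (r : R) (f : K) : D.T (algebraMap R K r * f) = algebraMap R K r * D.T f := by
  rw [← Algebra.smul_def, map_smul, Algebra.smul_def]
theorem S1_qi (f : K) :
    D.S1 ((algebraMap R K D.q)⁻¹ * f) = (algebraMap R K D.q)⁻¹ * D.S1 f := by
  rw [← D.qi_eq, S1_q]
theorem S2_qi (f : K) :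
    D.S2 ((algebraMap R K D.q)⁻¹ * f) = (algebraMap R K D.q)⁻¹ * D.S2 f := by
  rw [← D.qi_eq, S2_q]
theorem S1_xyz (f : K) : D.S1 (D.x * D.y * D.z * f) = D.x * D.y * D.z * D.S1 f :=
  DL_inv _ _ _ _ _ (by simp only [map_mul, D.hx, D.hy, D.hz]; ring) f
theorem S2_xyz (f : K) : D.S2 (D.x * D.y * D.z * f) = D.x * D.y * D.z * D.S2 f :=
  DL_inv _ _ _ _ _ (by simp only [map_mul, D.hx', D.hy', D.hz']; ring) f
theorem braid (f : K) : D.S1 (D.S2 (D.S1 f)) = D.S2 (D.S1 (D.S2 f)) :=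
  DL_braid _ _ _ _ _ _ D.hss D.hss' D.hb D.hx D.hz D.hx' D.hy' D.hxy D.hyz D.hxz f

theorem T3 (f : K) : D.T (D.T (D.T f)) = D.x * D.y * D.z * f := by
  have q0 := D.q0
  have h : D.S2 (D.S1 (D.x * D.S2 (D.S1 (D.x * D.S2 (D.S1 (D.x * f)))))) =
      algebraMap R K D.q ^ 3 * (D.x * D.y * D.z * f) := by
    simp only [← D.S2_x]
    rw [← D.braid, D.SXS1, S2_q, SXS2]
    simp only [S1_q, S1_z, SXS1]
    ring
  have e : ∀ g, D.x * ((algebraMap R K D.q)⁻¹ * g) = (algebraMap R K D.q)⁻¹ * (D.x * g) :=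
    fun g => by ring
  simp only [T_apply, e, S1_qi, S2_qi, h]
  field_simp

theorem T_xyz (f : K) : D.T (D.x * D.y * D.z * f) = D.x * D.y * D.z * D.T f := by
  rw [← D.T3, ← D.T3]

theorem xyz0 : D.x * D.y * D.z ≠ 0 := mul_ne_zero (mul_ne_zero D.x0 D.y0) D.z0

theorem T_Tinv : D.T * D.Tinv = 1 := by
  ext f
  simp only [Module.End.mul_apply, Tinv_apply, Module.End.one_apply]
  apply mul_left_cancel₀ D.xyz0
  rw [← T_xyz, mul_inv_cancel_left₀ D.xyz0, T3]

theorem Tinv_T : D.Tinv * D.T = 1 := by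
  ext f
  simp only [Module.End.mul_apply, Tinv_apply, Module.End.one_apply]
  rw [T3, inv_mul_cancel_left₀ D.xyz0]

theorem TS2 : D.T * D.S2 = D.S1 * D.T := by
  ext f
  simp only [Module.End.mul_apply, T_apply, S1_qi]
  rw [← S2_x, braid]

theorem T3_S1 : D.T ^ 3 * D.S1 = D.S1 * D.T ^ 3 := by
  ext f
  simp only [pow_succ, pow_zero, one_mul, Module.End.mul_apply, T3, S1_xyz]

theorem quadE : (D.S1 + 1) * (D.S1 - algebraMap R (Module.End R K) D.q) = 0 := by
  ext f
  simp [S1_quad, Algebra.smul_def, S1_q]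
  ring

theorem braidE : D.S1 * D.S2 * D.S1 = D.S2 * D.S1 * D.S2 := by
  ext f
  simp [braid]

noncomputable def genE : Fin 4 → Module.End R K := ![D.T, D.Tinv, D.S1, D.S2]

/-- The polynomial representation of the affine Hecke algebra. -/
noncomputable def rho : HeckeAlg R D.q →ₐ[R] Module.End R K :=
  RingQuot.liftAlgHom R ⟨FreeAlgebra.lift R D.genE, by
    intro a b hab
    cases hab with
    | TTinv => simpa [genE] using D.T_Tinv
    | TinvT => simpa [genE] using D.Tinv_T
    | quad => simpa [genE] using D.quadE
    | T3S1 => simpa [genE] using D.T3_S1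
    | braid => simpa [genE] using D.braidE
    | TS2 => simpa [genE] using D.TS2⟩

theorem rho_gen (i : Fin 4) : D.rho (gen R D.q i) = D.genE i := by
  simp only [rho, gen, RingQuot.liftAlgHom_mkAlgHom_apply, FreeAlgebra.lift_ι_apply]

theorem rho_T : D.rho (HeckeAlg.T R D.q) = D.T := D.rho_gen 0
theorem rho_Tinv : D.rho (HeckeAlg.Tinv R D.q) = D.Tinv := D.rho_gen 1
theorem rho_S1 : D.rho (HeckeAlg.S1 R D.q) = D.S1 := D.rho_gen 2
theorem rho_S2 : D.rho (HeckeAlg.S2 R D.q) = D.S2 := D.rho_gen 3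

theorem S1i_S1 (f : K) : D.rho (HeckeAlg.S1i R D.q D.qi) (D.S1 f) = f := by
  have q0 := D.q0
  simp [S1i, rho_S1, S1_quad, Algebra.smul_def, qi_eq]
  field_simp
  ring
theorem S2i_S2 (f : K) : D.rho (HeckeAlg.S2i R D.q D.qi) (D.S2 f) = f := by
  have q0 := D.q0
  simp [S2i, rho_S2, S2_quad, Algebra.smul_def, qi_eq]
  field_simp
  ring

theorem rho_Y0 (f : K) : D.rho (Y R D.q D.qi 0) f = D.x * f := by
  have q0 := D.q0
  simp [Y, rho_T, T_apply, Algebra.smul_def]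
  simp only [← S2_qi, ← S1_qi, S2i_S2, S1i_S1]
  field_simp

theorem rho_Y1 (f : K) : D.rho (Y R D.q D.qi 1) f = D.y * f := by
  have q0 := D.q0
  simp [Y, rho_T, rho_S1, T_apply, SXS1]
  simp only [← S2_qi, S2i_S2]
  field_simp

theorem rho_Y2 (f : K) : D.rho (Y R D.q D.qi 2) f = D.z * f := by
  have q0 := D.q0
  simp [Y, rho_T, rho_S1, rho_S2, T_apply, Algebra.smul_def, SXS1, S2_q, SXS2, qi_eq]
  field_simp

/-- The stable lattice. -/
def M : AddSubgroup K := Lat (algebraMap R K D.q) D.x D.y D.z dd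

theorem M_S1 : ∀ f ∈ D.M, D.S1 f ∈ D.M :=
  Lat_S1_dd _ _ D.q0 D.x0 D.y0 D.hx D.hy D.hz D.hxy
theorem M_S2 : ∀ f ∈ D.M, D.S2 f ∈ D.M :=
  Lat_S2_dd _ _ D.q0 D.y0 D.z0 D.hy' D.hz' D.hx' D.hyz
theorem M_T : ∀ f ∈ D.M, D.T f ∈ D.M :=
  Lat_T_dd _ _ _ D.q0 D.x0 D.y0 D.z0 D.hx D.hy D.hz D.hxy D.hy' D.hz' D.hx' D.hyz
theorem M_Tinv : ∀ f ∈ D.M, D.Tinv f ∈ D.M := by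
  intro f hf
  have := Lat_shift (w' := dd) D.q0 D.x0 D.y0 D.z0 0 (-1) (-1) (-1)
    (fun a b c => by simp only [dd]; omega) _ (D.M_T _ (D.M_T _ hf))
  simpa [Tinv_apply, M, mul_assoc, mul_comm, mul_left_comm] using this
theorem M_q : ∀ f ∈ D.M, algebraMap R K D.q * f ∈ D.M := Lat_Q D.q0
theorem M_one : (1 : K) ∈ D.M := by
  have := mem_Lat (Q := algebraMap R K D.q) (x := D.x) (y := D.y) (z := D.z) (w := dd) (k := 0)
    (a := 0) (b := 0) (c := 0) (by simp [dd])
  simpa [M] using this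
end Dat
end rep

theorem map_gen {R S : Type} [CommRing R] [CommRing S] (f : R →+* S) (q : R) (q' : S)
    (h : f q = q') (i : Fin 4) : HeckeAlg.map f q q' h (gen R q i) = gen S q' i := by
  subst h
  unfold HeckeAlg.map
  let _ : Algebra R (HeckeAlg S (f q)) :=
    RingHom.toAlgebra' ((algebraMap S (HeckeAlg S (f q))).comp f)
      (fun c x => by simpa using Algebra.commutes (f c) x)
  change RingQuot.lift _ _ = _
  rw [gen, RingQuot.mkAlgHom]
  simp
theorem map_alg {R S : Type} [CommRing R] [CommRing S] (f : R →+* S) (q : R) (q' : S)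
    (h : f q = q') (r : R) : HeckeAlg.map f q q' h (algebraMap R _ r) = algebraMap S _ (f r) := by
  subst h
  unfold HeckeAlg.map
  let _ : Algebra R (HeckeAlg S (f q)) :=
    RingHom.toAlgebra' ((algebraMap S (HeckeAlg S (f q))).comp f)
      (fun c x => by simpa using Algebra.commutes (f c) x)
  change RingQuot.lift _ _ = _
  have e : algebraMap R (HeckeAlg R q) r =
      RingQuot.mkRingHom (HeckeRel R q) (algebraMap R (FreeAlgebra R (Fin 4)) r) := by
    rw [← RingQuot.mkAlgHom_coe R]
    exact ((RingQuot.mkAlgHom R (HeckeRel R q)).commutes r).symm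
  rw [e, RingQuot.lift_mkRingHom_apply]
  exact AlgHom.commutes _ r
end HK

namespace HK
open HeckeAlg
noncomputable section conc

abbrev Lau := LaurentPolynomial ℤ
abbrev AA := AddMonoidAlgebra Lau (ℤ × ℤ × ℤ)
abbrev KK := FractionRing AA

def sig1 : (ℤ × ℤ × ℤ) ≃+ (ℤ × ℤ × ℤ) where
  toFun p := (p.2.1, p.1, p.2.2)
  invFun p := (p.2.1, p.1, p.2.2)
  left_inv _ := rfl
  right_inv _ := rfl
  map_add' _ _ := rfl

def sig2 : (ℤ × ℤ × ℤ) ≃+ (ℤ × ℤ × ℤ) where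
  toFun p := (p.1, p.2.2, p.2.1)
  invFun p := (p.1, p.2.2, p.2.1)
  left_inv _ := rfl
  right_inv _ := rfl
  map_add' _ _ := rfl

def liftS (e : (ℤ × ℤ × ℤ) ≃+ (ℤ × ℤ × ℤ)) : KK →ₐ[Lau] KK :=
  (IsFractionRing.algEquivOfAlgEquiv (AddMonoidAlgebra.domCongr Lau Lau e) : KK ≃ₐ[Lau] KK)

theorem liftS_alg (e) (f : AA) : liftS e (algebraMap AA KK f) =
    algebraMap AA KK (AddMonoidAlgebra.domCongr Lau Lau e f) :=
  IsFractionRing.algEquivOfAlgEquiv_algebraMap _ _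

theorem liftS_ext (F G : KK →ₐ[Lau] KK)
    (h : ∀ v, F (algebraMap AA KK (AddMonoidAlgebra.single v 1)) =
      G (algebraMap AA KK (AddMonoidAlgebra.single v 1))) (f : KK) : F f = G f := by
  have h' : ∀ a : AA, F (algebraMap AA KK a) = G (algebraMap AA KK a) := by
    intro a
    have : F.comp (IsScalarTower.toAlgHom Lau AA KK) = G.comp (IsScalarTower.toAlgHom Lau AA KK) := by
      apply AddMonoidAlgebra.algHom_ext
      · intro v
        exact h v
      · apply AlgHom.ext
        intro r
        exact ((F.comp (IsScalarTower.toAlgHom Lau AA KK)).commutes r).trans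
          ((G.comp (IsScalarTower.toAlgHom Lau AA KK)).commutes r).symm
    exact congrArg (fun φ => φ a) this
  obtain ⟨a, b, -, rfl⟩ := IsFractionRing.div_surjective AA f
  rw [map_div₀, map_div₀, h', h']

def mono (v : ℤ × ℤ × ℤ) : KK := algebraMap AA KK (AddMonoidAlgebra.single v 1)

theorem liftS_mono (e v) : liftS e (mono v) = mono (e v) := by
  rw [mono, liftS_alg, AddMonoidAlgebra.domCongr_single, mono]

theorem mono_inj {v v'} (h : mono v = mono v') : v = v' := by
  have := IsFractionRing.injective AA KK h
  have := congrArg (fun f => f.coeff v) this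
  by_contra hne
  simp [Ne.symm hne] at this

theorem mono_ne {v} : mono v ≠ 0 := by
  intro h
  rw [mono, map_eq_zero_iff _ (IsFractionRing.injective AA KK)] at h
  have := congrArg (fun f => f.coeff v) h
  simp at this

theorem mono_add (v v') : mono (v + v') = mono v * mono v' := by
  rw [mono, mono, mono, ← map_mul, AddMonoidAlgebra.single_mul_single, mul_one]

def monoHom : Multiplicative (ℤ × ℤ × ℤ) →* KKˣ where
  toFun v := Units.mk0 (mono v.toAdd) mono_ne
  map_one' := by ext; simp [mono, ← AddMonoidAlgebra.one_def]
  map_mul' _ _ := by ext; simp [mono_add]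

theorem mono_zsmul (n : ℤ) (v) : mono (n • v) = mono v ^ n := by
  have := congrArg (Units.val) (map_zpow monoHom (Multiplicative.ofAdd v) n)
  simpa [monoHom] using this

theorem mono_eq (a b c : ℤ) : mono (a, b, c) =
    mono (1,0,0) ^ a * mono (0,1,0) ^ b * mono (0,0,1) ^ c := by
  rw [← mono_zsmul, ← mono_zsmul, ← mono_zsmul, ← mono_add, ← mono_add]
  simp

def DD : Dat Lau KK where
  q := LaurentPolynomial.T 1
  qi := LaurentPolynomial.T (-1)
  hq := by rw [← LaurentPolynomial.T_add]; simp
  s := liftS sig1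
  s' := liftS sig2
  x := mono (1,0,0)
  y := mono (0,1,0)
  z := mono (0,0,1)
  hss f := liftS_ext ((liftS sig1).comp (liftS sig1)) (AlgHom.id _ _)
    (fun v => by change liftS sig1 (liftS sig1 (mono v)) = mono v; simp only [liftS_mono]; rfl) f
  hss' f := liftS_ext ((liftS sig2).comp (liftS sig2)) (AlgHom.id _ _)
    (fun v => by change liftS sig2 (liftS sig2 (mono v)) = mono v; simp only [liftS_mono]; rfl) f
  hb f := liftS_ext ((liftS sig1).comp ((liftS sig2).comp (liftS sig1)))
    ((liftS sig2).comp ((liftS sig1).comp (liftS sig2)))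
    (fun v => by
      change liftS sig1 (liftS sig2 (liftS sig1 (mono v))) =
        liftS sig2 (liftS sig1 (liftS sig2 (mono v)))
      simp only [liftS_mono]; rfl) f
  hx := liftS_mono _ _
  hz := liftS_mono _ _
  hx' := liftS_mono _ _
  hy' := liftS_mono _ _
  hxy h := by simpa using mono_inj h
  hyz h := by simpa using mono_inj h
  hxz h := by simpa using mono_inj h
  x0 := mono_ne
  y0 := mono_ne
  z0 := mono_ne

theorem T_zpow (k : ℤ) : algebraMap Lau KK (LaurentPolynomial.T 1) ^ k =
    algebraMap Lau KK (LaurentPolynomial.T k) := by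
  have e : algebraMap Lau KK (LaurentPolynomial.T (-1)) =
      (algebraMap Lau KK (LaurentPolynomial.T 1))⁻¹ := DD.qi_eq
  rcases k with n | n
  · rw [Int.ofNat_eq_natCast, zpow_natCast, ← map_pow, LaurentPolynomial.T_pow, mul_one]
  · rw [zpow_negSucc, ← inv_pow, ← e, ← map_pow, LaurentPolynomial.T_pow]
    congr 2
    push_cast
    rw [Int.negSucc_eq]; ring

/-- Coefficientwise description of the lattice. -/
def NN : AddSubgroup AA where
  carrier := {f | ∀ a b c : ℤ, ∃ p : Polynomial ℤ,
    f.coeff (a, b, c) = Polynomial.toLaurent p * LaurentPolynomial.T (dd a b c)}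
  zero_mem' a b c := ⟨0, by simp⟩
  add_mem' {f g} hf hg a b c := by
    obtain ⟨p, hp⟩ := hf a b c
    obtain ⟨p', hp'⟩ := hg a b c
    exact ⟨p + p', by rw [AddMonoidAlgebra.coeff_add, Finsupp.add_apply, hp, hp', map_add, add_mul]⟩
  neg_mem' {f} hf a b c := by
    obtain ⟨p, hp⟩ := hf a b c
    exact ⟨-p, by rw [AddMonoidAlgebra.coeff_neg, Finsupp.neg_apply, hp, map_neg, neg_mul]⟩

theorem M_coeff (f : AA) (hf : algebraMap AA KK f ∈ DD.M) : f ∈ NN := by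
  have h : DD.M ≤ NN.map (algebraMap AA KK).toAddMonoidHom := by
    rw [Dat.M, Lat, AddSubgroup.closure_le]
    rintro _ ⟨k, a, b, c, hk, rfl⟩
    refine ⟨AddMonoidAlgebra.single (a, b, c) (LaurentPolynomial.T k), ?_, ?_⟩
    · intro a' b' c'
      by_cases h : (a, b, c) = (a', b', c')
      · simp only [Prod.mk.injEq] at h
        obtain ⟨rfl, rfl, rfl⟩ := h
        refine ⟨Polynomial.X ^ (k - dd a b c).toNat, ?_⟩
        rw [Polynomial.toLaurent_X_pow, ← LaurentPolynomial.T_add, AddMonoidAlgebra.coeff_single,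
          Finsupp.single_eq_same]
        congr 1
        omega
      · refine ⟨0, ?_⟩
        rw [AddMonoidAlgebra.coeff_single, Finsupp.single_apply, if_neg h]
        simp
    · change algebraMap AA KK _ = (algebraMap Lau KK (LaurentPolynomial.T 1)) ^ k *
        (mono (1,0,0) ^ a * mono (0,1,0) ^ b * mono (0,0,1) ^ c)
      rw [T_zpow, ← mono_eq, mono, ← Algebra.smul_def]
      have := map_smul (IsScalarTower.toAlgHom Lau AA KK) (LaurentPolynomial.T k)
        (AddMonoidAlgebra.single (a, b, c) 1)
      rw [AddMonoidAlgebra.smul_single, smul_eq_mul, mul_one] at this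
      exact this
  obtain ⟨g, hg, e⟩ := h hf
  rwa [← IsFractionRing.injective AA KK e]

theorem ι_gen (i : Fin 4) : ιLau (gen _ _ i) = gen _ _ i := map_gen _ _ _ _ i
theorem ι_alg (p : Polynomial ℤ) : ιLau (algebraMap _ _ p) = structZq p := map_alg _ _ _ _ p

theorem M_poly (p : Polynomial ℤ) (m : KK) (hm : m ∈ DD.M) :
    algebraMap Lau KK (Polynomial.toLaurent p) * m ∈ DD.M := by
  induction p using Polynomial.induction_on' with
  | add p p' h h' => rw [map_add, map_add, add_mul]; exact add_mem h h'
  | monomial n a =>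
    rw [← Polynomial.C_mul_X_pow_eq_monomial, ← Polynomial.smul_eq_C_mul, map_zsmul, map_zsmul, 
      smul_mul_assoc]
    refine zsmul_mem ?_ a
    induction n with
    | zero => simpa using hm
    | succ n ih =>
      rw [pow_succ', map_mul, map_mul, mul_assoc, Polynomial.toLaurent_X]
      exact DD.M_q _ ih

/-- The polynomial representation over Laurent polynomials. -/
def rhoL : HLau →ₐ[Lau] Module.End Lau KK := DD.rho

theorem M_stable (h : HPoly) : ∀ m ∈ DD.M, rhoL (ιLau h) m ∈ DD.M := by
  obtain ⟨a, rfl⟩ := RingQuot.mkAlgHom_surjective (Polynomial ℤ) (HeckeRel (Polynomial ℤ) Polynomial.X) h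
  induction a using FreeAlgebra.induction with
  | grade0 r =>
    intro m hm
    have : ιLau (RingQuot.mkAlgHom (Polynomial ℤ) (HeckeRel (Polynomial ℤ) Polynomial.X)
      (algebraMap _ _ r)) = algebraMap Lau HLau (Polynomial.toLaurent r) := by
      rw [AlgHom.commutes]; exact ι_alg r
    rw [this]
    have e : rhoL (algebraMap Lau HLau (Polynomial.toLaurent r)) =
      algebraMap Lau _ (Polynomial.toLaurent r) := AlgHom.commutes _ _
    rw [e, Module.algebraMap_end_apply, Algebra.smul_def]
    exact M_poly r m hm
  | grade1 i =>
    intro m hm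
    have e : rhoL (ιLau (RingQuot.mkAlgHom (Polynomial ℤ) (HeckeRel (Polynomial ℤ) Polynomial.X)
      (FreeAlgebra.ι _ i))) = DD.genE i := (congrArg rhoL (ι_gen i)).trans (DD.rho_gen i)
    rw [e]
    fin_cases i
    · exact DD.M_T m hm
    · exact DD.M_Tinv m hm
    · exact DD.M_S1 m hm
    · exact DD.M_S2 m hm
  | mul a b ha hb =>
    intro m hm
    rw [map_mul, map_mul]
    have := ha _ (hb m hm)
    rwa [← Module.End.mul_apply, ← map_mul] at this
  | add a b ha hb =>
    intro m hm
    rw [map_add, map_add]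
    have := add_mem (ha m hm) (hb m hm)
    rwa [← LinearMap.add_apply, ← map_add] at this
end conc
end HK

namespace HK
open HeckeAlg
noncomputable section fin

section
variable (R : Type) [CommRing R] (q qi : R)
theorem quad_gen {E : Type*} [Ring E] [Algebra R E] (hq : q * qi = 1) (S : E)
    (h : (S + 1) * (S - algebraMap R E q) = 0) :
    S * (algebraMap R E qi * (S - algebraMap R E q + 1)) = 1 ∧
    (algebraMap R E qi * (S - algebraMap R E q + 1)) * S = 1 := by
  have hc : algebraMap R E q * S = S * algebraMap R E q := Algebra.commutes q S
  have hS : S * S = S * algebraMap R E q - S + algebraMap R E q := by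
    have : S * S - S * algebraMap R E q + S - algebraMap R E q = 0 := by rw [← h]; noncomm_ring
    rw [← sub_eq_zero, ← this]; abel
  have e1 : S * (S - algebraMap R E q + 1) = algebraMap R E q := by
    rw [mul_add, mul_sub, hS]; noncomm_ring
  have e2 : (S - algebraMap R E q + 1) * S = algebraMap R E q := by
    rw [add_mul, sub_mul, hc, hS]; noncomm_ring
  have hq' : algebraMap R E qi * algebraMap R E q = 1 := by rw [← map_mul, mul_comm, hq, map_one]
  constructor
  · rw [← mul_assoc, ← Algebra.commutes qi S, mul_assoc, e1, hq']
  · rw [mul_assoc, e2, hq']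

theorem S2_eq : S2 R q = Tinv R q * S1 R q * T R q := by
  rw [mul_assoc, ← T_mul_S2, ← mul_assoc, Tinv_mul_T, one_mul]

theorem quad_rel2 : (S2 R q + 1) * (S2 R q - algebraMap R (HeckeAlg R q) q) = 0 := by
  have h1 : S2 R q + 1 = Tinv R q * (S1 R q + 1) * T R q := by
    rw [mul_add, add_mul, mul_one, Tinv_mul_T, ← S2_eq]
  have h2 : S2 R q - algebraMap R (HeckeAlg R q) q =
      Tinv R q * (S1 R q - algebraMap R (HeckeAlg R q) q) * T R q := by
    rw [mul_sub, sub_mul, ← Algebra.commutes q (Tinv R q), mul_assoc (algebraMap _ _ q),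
      Tinv_mul_T, ← S2_eq, mul_one]
  rw [h1, h2]
  calc _ = Tinv R q * (S1 R q + 1) * (T R q * Tinv R q) *
        (S1 R q - algebraMap R (HeckeAlg R q) q) * T R q := by simp only [mul_assoc]
    _ = Tinv R q * ((S1 R q + 1) * (S1 R q - algebraMap R (HeckeAlg R q) q)) * T R q := by
        rw [T_mul_Tinv, mul_one]; simp only [mul_assoc]
    _ = 0 := by rw [quad_rel]; simp
end

theorem TT1 : (LaurentPolynomial.T 1 : Lau) * LaurentPolynomial.T (-1) = 1 := DD.hq

def tU : HLauˣ := ⟨T _ _, Tinv _ _, T_mul_Tinv _ _, Tinv_mul_T _ _⟩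
def s1U : HLauˣ := ⟨S1 _ _, S1i _ _ (LaurentPolynomial.T (-1)),
  (quad_gen _ _ _ TT1 _ (quad_rel _ _)).1, (quad_gen _ _ _ TT1 _ (quad_rel _ _)).2⟩
def s2U : HLauˣ := ⟨S2 _ _, S2i _ _ (LaurentPolynomial.T (-1)),
  (quad_gen _ _ _ TT1 _ (quad_rel2 _ _)).1, (quad_gen _ _ _ TT1 _ (quad_rel2 _ _)).2⟩
def qU : HLauˣ := ⟨qLau, qLauInv, by rw [qLau, qLauInv, ← map_mul, TT1, map_one],
  by rw [qLau, qLauInv, ← map_mul, mul_comm, TT1, map_one]⟩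

def yU : Fin 3 → HLauˣ := ![qU * s1U⁻¹ * s2U⁻¹ * tU, s2U⁻¹ * tU * s1U, qU⁻¹ * tU * s1U * s2U]

theorem yU_val (i : Fin 3) : (yU i : HLau) = YLau i := by
  fin_cases i <;> rfl

theorem qU_comm (g : HLauˣ) : qU * g = g * qU := by
  ext; exact Algebra.commutes _ _
theorem t3U : tU ^ 3 * s1U = s1U * tU ^ 3 := by
  ext; exact T3_mul_S1 _ _
theorem braidU : s1U * s2U * s1U = s2U * s1U * s2U := by
  ext; exact braid_rel _ _
theorem ts2U : tU * s2U = s1U * tU := by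
  ext; exact T_mul_S2 _ _

theorem yU_comm3 : Commute (yU 0) (yU 1) ∧ Commute (yU 0) (yU 2) ∧ Commute (yU 1) (yU 2) :=
  grp_comm qU tU s1U s2U qU_comm braidU t3U ts2U _ _ _ rfl rfl rfl

theorem yU_prod : yU 0 * yU 1 * yU 2 = tU ^ 3 := grp_prod qU tU s1U s2U qU_comm braidU t3U ts2U

theorem yU_comm (i j : Fin 3) : Commute (yU i) (yU j) := by
  obtain ⟨h1, h2, h3⟩ := yU_comm3
  fin_cases i <;> fin_cases j <;>
    first
    | exact Commute.refl _
    | exact h1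
    | exact h2
    | exact h3
    | exact h1.symm
    | exact h2.symm
    | exact h3.symm

theorem yU_pair (i j : Fin 3) (h : i ≠ j) : ∃ k, yU i * yU j = tU ^ 3 * (yU k)⁻¹ := by
  have h01 : yU 0 * yU 1 = tU ^ 3 * (yU 2)⁻¹ := by rw [← yU_prod]; group
  have h02 : yU 0 * yU 2 = tU ^ 3 * (yU 1)⁻¹ := by
    rw [← yU_prod, mul_assoc (yU 0), (yU_comm 1 2).eq]; group
  have h12 : yU 1 * yU 2 = tU ^ 3 * (yU 0)⁻¹ := by
    rw [← yU_prod, mul_assoc (yU 0), ((yU_comm 0 1).mul_right (yU_comm 0 2)).eq]; group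
  fin_cases i <;> fin_cases j
  · exact absurd rfl h
  · exact ⟨2, h01⟩
  · exact ⟨1, h02⟩
  · exact ⟨2, (yU_comm 1 0).eq.trans h01⟩
  · exact absurd rfl h
  · exact ⟨0, h12⟩
  · exact ⟨1, (yU_comm 2 0).eq.trans h02⟩
  · exact ⟨0, (yU_comm 2 1).eq.trans h12⟩
  · exact absurd rfl h

/-- The monomials `Y^λ` as units. -/
def yHom : Multiplicative (ℤ × ℤ × ℤ) →* HLauˣ where
  toFun v := yU 0 ^ v.toAdd.1 * yU 1 ^ v.toAdd.2.1 * yU 2 ^ v.toAdd.2.2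
  map_one' := by simp
  map_mul' v w := by
    simp only [toAdd_mul, Prod.fst_add, Prod.snd_add, zpow_add]
    have h10 := (yU_comm 1 0).zpow_zpow (v.toAdd.2.1) (w.toAdd.1)
    have h20 := (yU_comm 2 0).zpow_zpow (v.toAdd.2.2) (w.toAdd.1)
    have h21 := (yU_comm 2 1).zpow_zpow (v.toAdd.2.2) (w.toAdd.2.1)
    generalize yU 0 ^ v.toAdd.1 = a at *
    generalize yU 0 ^ w.toAdd.1 = a' at *
    generalize yU 1 ^ v.toAdd.2.1 = b at *
    generalize yU 1 ^ w.toAdd.2.1 = b' at *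
    generalize yU 2 ^ v.toAdd.2.2 = c at *
    generalize yU 2 ^ w.toAdd.2.2 = c' at *
    calc _ = a * (a' * b) * (b' * c) * c' := by group
      _ = a * b * (a' * c) * b' * c' := by rw [← h10.eq, ← h21.eq]; group
      _ = _ := by rw [← h20.eq]; group
  
/-- The Bernstein map `A → H`. -/
def phi : AA →ₐ[Lau] HLau := AddMonoidAlgebra.lift Lau HLau _ ((Units.coeHom HLau).comp yHom)

theorem phi_single (v : ℤ × ℤ × ℤ) (r : Lau) :
    phi (AddMonoidAlgebra.single v r) = r • (yHom (Multiplicative.ofAdd v) : HLau) := by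
  simp [phi]

theorem rho_unit (u : HLauˣ) (x : KKˣ) (h : ∀ f, rhoL u f = x * f) (n : ℤ) (f : KK) :
    rhoL ((u ^ n : HLauˣ) : HLau) f = x ^ n * f := by
  have e : Units.map (rhoL : HLau →* Module.End Lau KK) u =
      Units.map (Algebra.lmul Lau KK : KK →* Module.End Lau KK) x := by
    ext f; exact h f
  have e2 := congrArg (fun w => ((w ^ n : (Module.End Lau KK)ˣ) : Module.End Lau KK)) e
  simp only [← map_zpow] at e2
  have := congrArg (fun w => w f) e2
  rw [← Units.val_zpow_eq_zpow_val]
  exact this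

theorem rho_phi (f : AA) (g : KK) : rhoL (phi f) g = algebraMap AA KK f * g := by
  have : rhoL.comp phi = (Algebra.lmul Lau KK).comp (IsScalarTower.toAlgHom Lau AA KK) := by
    apply AddMonoidAlgebra.algHom_ext
    · rintro ⟨a, b, c⟩
      ext g
      change rhoL (phi _) g = mono (a, b, c) * g
      rw [phi_single, one_smul, mono_eq]
      change rhoL ((yU 0 ^ a : HLauˣ) * (yU 1 ^ b : HLauˣ) * (yU 2 ^ c : HLauˣ)) g = _
      have h0 := rho_unit (yU 0) (Units.mk0 (mono (1,0,0)) mono_ne)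
        (fun f => by rw [yU_val]; exact DD.rho_Y0 f)
      have h1 := rho_unit (yU 1) (Units.mk0 (mono (0,1,0)) mono_ne)
        (fun f => by rw [yU_val]; exact DD.rho_Y1 f)
      have h2 := rho_unit (yU 2) (Units.mk0 (mono (0,0,1)) mono_ne)
        (fun f => by rw [yU_val]; exact DD.rho_Y2 f)
      rw [map_mul, map_mul, Module.End.mul_apply, Module.End.mul_apply, h0, h1, h2]
      simp [mul_assoc]
    · apply AlgHom.ext
      intro r
      exact ((rhoL.comp phi).commutes r).trans
        (((Algebra.lmul Lau KK).comp (IsScalarTower.toAlgHom Lau AA KK)).commutes r).symm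
  exact congrArg (fun ψ => ψ f g) this

theorem adjoin_le_phi (u : Fin 3 → HLau) (hu : ∀ i, u i = ((yU i)⁻¹ : HLauˣ)) :
    Algebra.adjoin Lau (Set.range YLau ∪ Set.range u) ≤ phi.range := by
  have key : ∀ (i : Fin 3) (n : ℤ), ((yU i ^ n : HLauˣ) : HLau) ∈ phi.range := by
    intro i n
    fin_cases i
    · exact ⟨AddMonoidAlgebra.single (n, 0, 0) 1, by simp [phi_single, yHom]⟩
    · exact ⟨AddMonoidAlgebra.single (0, n, 0) 1, by simp [phi_single, yHom]⟩
    · exact ⟨AddMonoidAlgebra.single (0, 0, n) 1, by simp [phi_single, yHom]⟩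
  rw [Algebra.adjoin_le_iff]
  rintro _ (⟨i, rfl⟩ | ⟨i, rfl⟩)
  · have := key i 1; rwa [zpow_one, yU_val] at this
  · have := key i (-1); rwa [zpow_neg_one, ← hu] at this

/-- The generating set. -/
def gens (u : Fin 3 → HLau) : Set HLau :=
  (({YLau 0 * YLau 1 * YLau 2, u 2 * u 1 * u 0} : Set HLau) ∪
        {x : HLau | ∃ i j : Fin 3, i ≠ j ∧
          (x = qLau * (YLau i * YLau j) ∨ x = qLau * (u j * u i))} ∪
        {x : HLau | ∃ i : Fin 3, x = qLau * YLau i ∨ x = qLau * u i} ∪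
        Set.range structZq)

theorem ι_mem_T : T _ _ ∈ ιLau.range := ⟨_, ι_gen 0⟩
theorem ι_mem_Tinv : Tinv _ _ ∈ ιLau.range := ⟨_, ι_gen 1⟩
theorem ι_mem_S1 : S1 _ _ ∈ ιLau.range := ⟨_, ι_gen 2⟩
theorem ι_mem_S2 : S2 _ _ ∈ ιLau.range := ⟨_, ι_gen 3⟩
theorem ι_mem_struct (p) : structZq p ∈ ιLau.range := ⟨_, ι_alg p⟩
theorem structX : structZq Polynomial.X = qLau := by simp [structZq, qLau]
theorem ι_mem_q : qLau ∈ ιLau.range := structX ▸ ι_mem_struct _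

theorem q_s1i : qLau * ((s1U⁻¹ : HLauˣ) : HLau) = S1 _ _ - qLau + 1 := qU.mul_inv_cancel_left _
theorem q_s2i : qLau * ((s2U⁻¹ : HLauˣ) : HLau) = S2 _ _ - qLau + 1 := qU.mul_inv_cancel_left _
theorem ι_mem_s1i : qLau * ((s1U⁻¹ : HLauˣ) : HLau) ∈ ιLau.range := by
  rw [q_s1i]; exact add_mem (sub_mem ι_mem_S1 ι_mem_q) (one_mem _)
theorem ι_mem_s2i : qLau * ((s2U⁻¹ : HLauˣ) : HLau) ∈ ιLau.range := by
  rw [q_s2i]; exact add_mem (sub_mem ι_mem_S2 ι_mem_q) (one_mem _)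
theorem q_comm (a : HLau) : a * qLau = qLau * a := (Algebra.commutes _ _).symm

theorem ι_mem_qY (i : Fin 3) : qLau * (yU i : HLau) ∈ ιLau.range := by
  fin_cases i
  · have e : qU * (qU * s1U⁻¹ * s2U⁻¹ * tU) = (qU * s1U⁻¹) * (qU * s2U⁻¹) * tU := by
      have h : s1U⁻¹ * qU = qU * s1U⁻¹ := (qU_comm _).symm
      calc _ = qU * (qU * s1U⁻¹) * s2U⁻¹ * tU := by simp only [mul_assoc]
        _ = qU * (s1U⁻¹ * qU) * s2U⁻¹ * tU := by rw [h]
        _ = _ := by simp only [mul_assoc]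
    have := congrArg Units.val e
    change qLau * ((qU * s1U⁻¹ * s2U⁻¹ * tU : HLauˣ) : HLau) = _ at this
    change qLau * ((qU * s1U⁻¹ * s2U⁻¹ * tU : HLauˣ) : HLau) ∈ _
    rw [this]
    exact mul_mem (mul_mem ι_mem_s1i ι_mem_s2i) ι_mem_T
  · change qLau * (((s2U⁻¹ : HLauˣ) : HLau) * T _ _ * S1 _ _) ∈ _
    rw [← mul_assoc, ← mul_assoc]
    exact mul_mem (mul_mem ι_mem_s2i ι_mem_T) ι_mem_S1
  · have e : qU * (qU⁻¹ * tU * s1U * s2U) = tU * s1U * s2U := by group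
    have := congrArg Units.val e
    change qLau * ((qU⁻¹ * tU * s1U * s2U : HLauˣ) : HLau) = _ at this
    change qLau * ((qU⁻¹ * tU * s1U * s2U : HLauˣ) : HLau) ∈ _
    rw [this]
    exact mul_mem (mul_mem ι_mem_T ι_mem_S1) ι_mem_S2

theorem ι_mem_qu (i : Fin 3) : qLau * ((yU i)⁻¹ : HLauˣ) ∈ ιLau.range := by
  fin_cases i
  · have e : qU * (qU * s1U⁻¹ * s2U⁻¹ * tU)⁻¹ = tU⁻¹ * s2U * s1U := by
      rw [qU_comm]; group
    have := congrArg Units.val e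
    change qLau * (((qU * s1U⁻¹ * s2U⁻¹ * tU)⁻¹ : HLauˣ) : HLau) = _ at this
    change qLau * (((qU * s1U⁻¹ * s2U⁻¹ * tU)⁻¹ : HLauˣ) : HLau) ∈ _
    rw [this]
    exact mul_mem (mul_mem ι_mem_Tinv ι_mem_S2) ι_mem_S1
  · have e : qU * (s2U⁻¹ * tU * s1U)⁻¹ = (qU * s1U⁻¹) * tU⁻¹ * s2U := by group
    have := congrArg Units.val e
    change qLau * (((s2U⁻¹ * tU * s1U)⁻¹ : HLauˣ) : HLau) = _ at this
    change qLau * (((s2U⁻¹ * tU * s1U)⁻¹ : HLauˣ) : HLau) ∈ _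
    rw [this]
    exact mul_mem (mul_mem ι_mem_s1i ι_mem_Tinv) ι_mem_S2
  · have e : qU * (qU⁻¹ * tU * s1U * s2U)⁻¹ = (qU * s2U⁻¹) * (qU * s1U⁻¹) * tU⁻¹ := by
      have : (qU⁻¹ * tU * s1U * s2U)⁻¹ = s2U⁻¹ * (s1U⁻¹ * (tU⁻¹ * qU)) := by group
      rw [this, ← qU_comm, ← mul_assoc s1U⁻¹, ← qU_comm]
      group
    have := congrArg Units.val e
    change qLau * (((qU⁻¹ * tU * s1U * s2U)⁻¹ : HLauˣ) : HLau) = _ at this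
    change qLau * (((qU⁻¹ * tU * s1U * s2U)⁻¹ : HLauˣ) : HLau) ∈ _
    rw [this]
    exact mul_mem (mul_mem ι_mem_s2i ι_mem_s1i) ι_mem_Tinv

theorem gens_sub_ι (u : Fin 3 → HLau) (hu : ∀ i, u i = ((yU i)⁻¹ : HLauˣ)) :
    gens u ⊆ ιLau.range := by
  have hT3 : ((tU ^ 3 : HLauˣ) : HLau) ∈ ιLau.range := pow_mem ι_mem_T 3
  have hT3' : (((tU ^ 3)⁻¹ : HLauˣ) : HLau) ∈ ιLau.range := by
    rw [← inv_pow]; exact pow_mem ι_mem_Tinv 3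
  rintro x (((hx | ⟨i, j, hij, rfl | rfl⟩) | ⟨i, rfl | rfl⟩) | ⟨p, rfl⟩)
  · rcases hx with rfl | rfl
    · rw [← yU_val, ← yU_val, ← yU_val, ← Units.val_mul, ← Units.val_mul, yU_prod]; exact hT3
    · rw [hu, hu, hu, ← Units.val_mul, ← Units.val_mul, ← mul_inv_rev, ← mul_inv_rev,
        ← mul_assoc, yU_prod]
      exact hT3'
  · obtain ⟨k, hk⟩ := yU_pair i j hij
    rw [← yU_val, ← yU_val, ← Units.val_mul, hk, Units.val_mul, ← mul_assoc, ← q_comm, mul_assoc]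
    exact mul_mem hT3 (ι_mem_qu k)
  · obtain ⟨k, hk⟩ := yU_pair i j hij
    rw [hu, hu, ← Units.val_mul, ← mul_inv_rev, hk, mul_inv_rev, inv_inv, Units.val_mul, ← mul_assoc]
    exact mul_mem (ι_mem_qY k) hT3'
  · rw [← yU_val]; exact ι_mem_qY i
  · rw [hu]; exact ι_mem_qu i
  · exact ι_mem_struct p

theorem gens_sub_adj (u : Fin 3 → HLau) :
    gens u ⊆ Algebra.adjoin Lau (Set.range YLau ∪ Set.range u) := by
  have hY : ∀ i, YLau i ∈ Algebra.adjoin Lau (Set.range YLau ∪ Set.range u) :=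
    fun i => Algebra.subset_adjoin (Or.inl ⟨i, rfl⟩)
  have hU : ∀ i, u i ∈ Algebra.adjoin Lau (Set.range YLau ∪ Set.range u) :=
    fun i => Algebra.subset_adjoin (Or.inr ⟨i, rfl⟩)
  have hq : qLau ∈ Algebra.adjoin Lau (Set.range YLau ∪ Set.range u) :=
    Subalgebra.algebraMap_mem _ _
  rintro x (((hx | ⟨i, j, hij, rfl | rfl⟩) | ⟨i, rfl | rfl⟩) | ⟨p, rfl⟩)
  · rcases hx with rfl | rfl
    · exact mul_mem (mul_mem (hY _) (hY _)) (hY _)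
    · exact mul_mem (mul_mem (hU _) (hU _)) (hU _)
  · exact mul_mem hq (mul_mem (hY _) (hY _))
  · exact mul_mem hq (mul_mem (hU _) (hU _))
  · exact mul_mem hq (hY _)
  · exact mul_mem hq (hU _)
  · exact Subalgebra.algebraMap_mem _ _

section clo

theorem clo_diag (u : Fin 3 → HLau) (hu : ∀ i, u i = ((yU i)⁻¹ : HLauˣ))
    (c : ℤ) : phi (AddMonoidAlgebra.single (c, c, c) 1) ∈ Subring.closure (gens u) := by
  have h1 : phi (AddMonoidAlgebra.single (1, 1, 1) 1) ∈ Subring.closure (gens u) := by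
    apply Subring.subset_closure
    refine Or.inl (Or.inl (Or.inl (Or.inl ?_)))
    simp [phi_single, yHom, yU_val]
  have h2 : phi (AddMonoidAlgebra.single (-1, -1, -1) 1) ∈ Subring.closure (gens u) := by
    apply Subring.subset_closure
    refine Or.inl (Or.inl (Or.inl (Or.inr ?_)))
    have : (yU 0)⁻¹ * (yU 1)⁻¹ * (yU 2)⁻¹ = (yU 2)⁻¹ * (yU 1)⁻¹ * (yU 0)⁻¹ := by
      rw [((yU_comm 0 1).inv_inv).eq, mul_assoc, ((yU_comm 0 2).inv_inv).eq, ← mul_assoc,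
        ((yU_comm 1 2).inv_inv).eq]
    have := congrArg Units.val this
    simp only [Units.val_mul] at this
    simp [phi_single, yHom, hu, this]
  rcases Int.eq_nat_or_neg c with ⟨n, rfl | rfl⟩
  · have := pow_mem h1 n
    rw [← map_pow, AddMonoidAlgebra.single_pow] at this
    simpa using this
  · have := pow_mem h2 n
    rw [← map_pow, AddMonoidAlgebra.single_pow] at this
    simpa using this

theorem clo_comb (u : Fin 3 → HLau) (hu : ∀ i, u i = ((yU i)⁻¹ : HLauˣ))
    (v w : ℤ × ℤ × ℤ) (n m c : ℤ) (hn : 0 ≤ n) (hm : 0 ≤ m)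
    (hv : phi (AddMonoidAlgebra.single v (LaurentPolynomial.T 1)) ∈ Subring.closure (gens u))
    (hw : phi (AddMonoidAlgebra.single w (LaurentPolynomial.T 1)) ∈ Subring.closure (gens u)) :
    phi (AddMonoidAlgebra.single (n • v + m • w + (c, c, c)) (LaurentPolynomial.T (n + m))) ∈
      Subring.closure (gens u) := by
  lift n to ℕ using hn
  lift m to ℕ using hm
  have := mul_mem (mul_mem (pow_mem hv n) (pow_mem hw m)) (clo_diag u hu c)
  rw [← map_pow, ← map_pow, ← map_mul, ← map_mul, AddMonoidAlgebra.single_pow,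
    AddMonoidAlgebra.single_pow, AddMonoidAlgebra.single_mul_single,
    AddMonoidAlgebra.single_mul_single, LaurentPolynomial.T_pow, LaurentPolynomial.T_pow,
    ← LaurentPolynomial.T_add] at this
  simpa using this

theorem clo_mon (u : Fin 3 → HLau) (hu : ∀ i, u i = ((yU i)⁻¹ : HLauˣ))
    (a b c : ℤ) :
    phi (AddMonoidAlgebra.single (a, b, c) (LaurentPolynomial.T (dd a b c))) ∈
      Subring.closure (gens u) := by
  have y1 : ∀ i, qLau * YLau i ∈ Subring.closure (gens u) := fun i =>
    Subring.subset_closure (Or.inl (Or.inr ⟨i, Or.inl rfl⟩))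
  have y2 : ∀ i j, i ≠ j → qLau * (YLau i * YLau j) ∈ Subring.closure (gens u) := fun i j h =>
    Subring.subset_closure (Or.inl (Or.inl (Or.inr ⟨i, j, h, Or.inl rfl⟩)))
  have g0 : phi (AddMonoidAlgebra.single (1,0,0) (LaurentPolynomial.T 1)) ∈ Subring.closure (gens u) := by
    simpa [phi_single, yHom, yU_val, Algebra.smul_def, qLau] using y1 0
  have g1 : phi (AddMonoidAlgebra.single (0,1,0) (LaurentPolynomial.T 1)) ∈ Subring.closure (gens u) := by
    simpa [phi_single, yHom, yU_val, Algebra.smul_def, qLau] using y1 1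
  have g2 : phi (AddMonoidAlgebra.single (0,0,1) (LaurentPolynomial.T 1)) ∈ Subring.closure (gens u) := by
    simpa [phi_single, yHom, yU_val, Algebra.smul_def, qLau] using y1 2
  have g01 : phi (AddMonoidAlgebra.single (1,1,0) (LaurentPolynomial.T 1)) ∈ Subring.closure (gens u) := by
    simpa [phi_single, yHom, yU_val, Algebra.smul_def, qLau] using y2 0 1 (by decide)
  have g02 : phi (AddMonoidAlgebra.single (1,0,1) (LaurentPolynomial.T 1)) ∈ Subring.closure (gens u) := by
    simpa [phi_single, yHom, yU_val, Algebra.smul_def, qLau] using y2 0 2 (by decide)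
  have g12 : phi (AddMonoidAlgebra.single (0,1,1) (LaurentPolynomial.T 1)) ∈ Subring.closure (gens u) := by
    simpa [phi_single, yHom, yU_val, Algebra.smul_def, qLau] using y2 1 2 (by decide)
  have fin : ∀ (v w : ℤ × ℤ × ℤ) (n m k : ℤ), 0 ≤ n → 0 ≤ m →
      phi (AddMonoidAlgebra.single v (LaurentPolynomial.T 1)) ∈ Subring.closure (gens u) →
      phi (AddMonoidAlgebra.single w (LaurentPolynomial.T 1)) ∈ Subring.closure (gens u) →
      (a, b, c) = n • v + m • w + (k, k, k) → dd a b c = n + m →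
      phi (AddMonoidAlgebra.single (a, b, c) (LaurentPolynomial.T (dd a b c))) ∈
      Subring.closure (gens u) := by
    intro v w n m k hn hm hv hw e e'
    rw [e, e']
    exact clo_comb u hu v w n m k hn hm hv hw
  rcases le_total a b with h1 | h1 <;> rcases le_total b c with h2 | h2 <;>
    rcases le_total a c with h3 | h3
  · exact fin _ _ (c - b) (b - a) a (by omega) (by omega) g2 g12 (by simp) (by simp only [dd]; omega)
  · exact fin _ _ (c - b) (b - a) a (by omega) (by omega) g2 g12 (by simp) (by simp only [dd]; omega)
  · exact fin _ _ (b - c) (c - a) a (by omega) (by omega) g1 g12 (by simp) (by simp only [dd]; omega)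
  · exact fin _ _ (b - a) (a - c) c (by omega) (by omega) g1 g01 (by simp) (by simp only [dd]; omega)
  · exact fin _ _ (c - a) (a - b) b (by omega) (by omega) g2 g02 (by simp) (by simp only [dd]; omega)
  · exact fin _ _ (a - c) (c - b) b (by omega) (by omega) g0 g02 (by simp) (by simp only [dd]; omega)
  · exact fin _ _ (a - b) (b - c) c (by omega) (by omega) g0 g01 (by simp) (by simp only [dd]; omega)
  · exact fin _ _ (a - b) (b - c) c (by omega) (by omega) g0 g01 (by simp) (by simp only [dd]; omega)

theorem clo_NN (u : Fin 3 → HLau) (hu : ∀ i, u i = ((yU i)⁻¹ : HLauˣ))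
    (f : AA) (hf : f ∈ NN) : phi f ∈ Subring.closure (gens u) := by
  rw [← AddMonoidAlgebra.sum_coeff_single f, Finsupp.sum, map_sum]
  refine Subring.sum_mem _ ?_
  rintro ⟨a, b, c⟩ -
  obtain ⟨p, hp⟩ := hf a b c
  rw [hp, ← smul_eq_mul, ← AddMonoidAlgebra.smul_single, map_smul, Algebra.smul_def]
  exact mul_mem (Subring.subset_closure (Or.inr ⟨p, rfl⟩)) (clo_mon u hu a b c)
end clo

theorem main (u : Fin 3 → HLau) (hu : ∀ i, YLau i * u i = 1 ∧ u i * YLau i = 1) :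
    Set.range ιLau ∩
      (Algebra.adjoin Lau (Set.range YLau ∪ Set.range u) : Subalgebra Lau HLau) =
    (Subring.closure (gens u) : Set HLau) := by
  have hu' : ∀ i, u i = ((yU i)⁻¹ : HLauˣ) := fun i => by
    rw [Units.eq_inv_of_mul_eq_one_left (u := yU i) (a := u i)]
    rw [yU_val]; exact (hu i).1
  apply Set.Subset.antisymm
  · rintro x ⟨⟨h, rfl⟩, hx⟩
    obtain ⟨f, hf⟩ := adjoin_le_phi u hu' hx
    change phi f = _ at hf
    rw [← hf]
    refine clo_NN u hu' f (M_coeff f ?_)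
    have := M_stable h 1 DD.M_one
    rwa [← hf, rho_phi, mul_one] at this
  · have : Subring.closure (gens u) ≤ ιLau.range ⊓
        (Algebra.adjoin Lau (Set.range YLau ∪ Set.range u)).toSubring := by
      rw [Subring.closure_le]
      exact fun x hx => ⟨gens_sub_ι u hu' hx, gens_sub_adj u hx⟩
    intro x hx
    obtain ⟨h1, h2⟩ := this hx
    exact ⟨h1, h2⟩
end fin
end HK

/-- The intersection of the image of `H` in `H_{ℤ[q^{±1}]}` with the
commutative subalgebra `A` generated over `ℤ[q^{±1}]` by `Y_1^{±1}, Y_2^{±1}, Y_3^{±1}`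
equals the `ℤ[q]`-subalgebra of `H_{ℤ[q^{±1}]}` generated by `(Y_1Y_2Y_3)^{±1}`, by
`q(Y_iY_j)^{±1}` for `1 ≤ i ≠ j ≤ 3`, and by `qY_i^{±1}` for `1 ≤ i ≤ 3`.
Here `u i` denotes the (two-sided) inverse of `Y_i`, so that `(Y_1Y_2Y_3)⁻¹ = u_3 u_2 u_1`
and `(Y_iY_j)⁻¹ = u_j u_i`. -/
theorem statement0 (u : Fin 3 → HLau)
    (hu : ∀ i, YLau i * u i = 1 ∧ u i * YLau i = 1) :
    Set.range ιLau ∩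
      (Algebra.adjoin (LaurentPolynomial ℤ) (Set.range YLau ∪ Set.range u) :
        Subalgebra (LaurentPolynomial ℤ) HLau) =
    (Subring.closure
      (({YLau 0 * YLau 1 * YLau 2, u 2 * u 1 * u 0} : Set HLau) ∪
        {x : HLau | ∃ i j : Fin 3, i ≠ j ∧
          (x = qLau * (YLau i * YLau j) ∨ x = qLau * (u j * u i))} ∪
        {x : HLau | ∃ i : Fin 3, x = qLau * YLau i ∨ x = qLau * u i} ∪
        Set.range structZq) : Set HLau) := by
  exact HK.main u hu
end

section
/- The image under ι of the center of H equals the Z[q]-subalgebra of H_{Z[q^{±1}]} generated by σ_3, σ_3^{-1}, qσ_1 and qσ_2, where σ_1 = Y_1 + Y_2 + Y_3, σ_2 = Y_1Y_2 + Y_2Y_3 + Y_1Y_3 and σ_3 = Y_1Y_2Y_3. -/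
set_option linter.unusedSimpArgs false
set_option linter.unusedVariables false

section partA
section ringpart
variable {A : Type*} [Ring A]

theorem ra {x y z : A} (h : x * y = z) (w : A) : x * (y * w) = z * w := by
  rw [← mul_assoc, h]

theorem ra3 {x y z u : A} (h : x * (y * z) = u) (w : A) : x * (y * (z * w)) = u * w := by
  rw [← h]; simp only [mul_assoc]

/-- Structure of a Hecke triple: the relations of the algebra with a third reflection. -/
structure HTriple (q t ti a b d : A) : Prop where
  qc : ∀ x, q * x = x * q
  tti : t * ti = 1
  tit : ti * t = 1
  ta : t * a = d * t
  tb : t * b = a * t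
  td : t * d = b * t
  qa : a * a = q * a - a + q
  qb : b * b = q * b - b + q
  qd : d * d = q * d - d + q
  ab : a * (b * a) = b * (a * b)
  bd : b * (d * b) = d * (b * d)
  da : d * (a * d) = a * (d * a)

def zOne (q t a b d : A) : A :=
  (a * b + b * d + d * a - (q - 1) * (a + b + d) + (q - 1) * (q - 1)) * t

def zTwo (q t a b d : A) : A :=
  (b * a + a * d + d * b - (q - 1) * (a + b + d) + (q - 1) * (q - 1)) * (t * t)

theorem comm_inv {x t ti : A} (h1 : t * ti = 1) (h2 : ti * t = 1) (h : x * t = t * x) :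
    x * ti = ti * x := by
  calc x * ti = ti * t * (x * ti) := by rw [h2, one_mul]
    _ = ti * (t * x) * ti := by noncomm_ring
    _ = ti * x * (t * ti) := by rw [← h]; noncomm_ring
    _ = ti * x := by rw [h1, mul_one]

theorem HTriple.zOne_t {q t ti a b d : A} (H : HTriple q t ti a b d) :
    zOne q t a b d * t = t * zOne q t a b d := by
  obtain ⟨qc, tti, tit, ta, tb, td, -, -, -, -, -, -⟩ := H
  have hq := (qc t).symm
  unfold zOne
  simp only [mul_assoc, mul_add, add_mul, mul_sub, sub_mul, mul_one, one_mul, ta, tb, td, hq,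
    ra ta, ra tb, ra td, ra hq]
  abel

theorem HTriple.zTwo_t {q t ti a b d : A} (H : HTriple q t ti a b d) :
    zTwo q t a b d * t = t * zTwo q t a b d := by
  obtain ⟨qc, tti, tit, ta, tb, td, -, -, -, -, -, -⟩ := H
  have hq := (qc t).symm
  unfold zTwo
  simp only [mul_assoc, mul_add, add_mul, mul_sub, sub_mul, mul_one, one_mul, ta, tb, td, hq,
    ra ta, ra tb, ra td, ra hq]
  abel

theorem HTriple.zOne_a {q t ti a b d : A} (H : HTriple q t ti a b d) :
    zOne q t a b d * a = a * zOne q t a b d := by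
  obtain ⟨qc, tti, tit, ta, tb, td, qa, qb, qd, ab, bd, da⟩ := H
  have h1 := (qc t).symm
  have h2 := (qc a).symm
  have h3 := (qc b).symm
  have h4 := (qc d).symm
  clear qc
  unfold zOne
  simp only [mul_assoc, mul_add, add_mul, mul_sub, sub_mul, mul_one, one_mul, ta, tb, td, h1, h2,
    h3, h4, ra ta, ra tb, ra td, ra h1, ra h2, ra h3, ra h4, qa, qb, qd, ra qa, ra qb, ra qd,
    ab, bd, da, ra3 ab, ra3 bd, ra3 da]
  abel

theorem HTriple.zTwo_a {q t ti a b d : A} (H : HTriple q t ti a b d) :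
    zTwo q t a b d * a = a * zTwo q t a b d := by
  obtain ⟨qc, tti, tit, ta, tb, td, qa, qb, qd, ab, bd, da⟩ := H
  have h1 := (qc t).symm
  have h2 := (qc a).symm
  have h3 := (qc b).symm
  have h4 := (qc d).symm
  clear qc
  unfold zTwo
  simp only [mul_assoc, mul_add, add_mul, mul_sub, sub_mul, mul_one, one_mul, ta, tb, td, h1, h2,
    h3, h4, ra ta, ra tb, ra td, ra h1, ra h2, ra h3, ra h4, qa, qb, qd, ra qa, ra qb, ra qd,
    ab, bd, da, ra3 ab, ra3 bd, ra3 da]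
  abel

theorem comm_b_of {x q t ti a b d : A} (H : HTriple q t ti a b d) (ht : x * t = t * x)
    (ha : x * a = a * x) : x * b = b * x := by
  have hti := comm_inv H.tti H.tit ht
  have hb : b = ti * (a * t) := by rw [← H.tb, ← mul_assoc, H.tit, one_mul]
  rw [hb]
  simp only [mul_assoc, ← ht, ra hti]
  rw [ra ha]; simp only [mul_assoc]

theorem HTriple.mk' {q t ti a b : A} (qc : ∀ x, q * x = x * q) (tti : t * ti = 1)
    (tit : ti * t = 1) (tb : t * b = a * t) (t3 : t ^ 3 * a = a * t ^ 3)
    (qa : (a + 1) * (a - q) = 0) (ab : a * b * a = b * a * b) :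
    HTriple q t ti a b (t * a * ti) := by
  have qa' : a * a = q * a - a + q := by
    have := qc a
    linear_combination (norm := noncomm_ring) qa - this
  have cj : ∀ {x y : A}, t * x = y * t → y = t * x * ti := by
    intro x y h; rw [h, mul_assoc, tti, mul_one]
  have ta : t * a = (t * a * ti) * t := by simp only [mul_assoc, tit, mul_one]
  have td : t * (t * a * ti) = b * t := by
    have hb : b = ti * (a * t) := by rw [← tb, ← mul_assoc, tit, one_mul]
    have h3 : t * (t * (t * a)) = a * (t * (t * t)) := by
      have : t ^ 3 = t * (t * t) := by noncomm_ring
      rw [this] at t3; simpa only [mul_assoc] using t3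
    calc t * (t * a * ti) = ti * (t * (t * (t * a))) * ti := by
          rw [ra tit, one_mul]; simp only [mul_assoc]
      _ = ti * (a * t) * t * (t * ti) := by rw [h3]; simp only [mul_assoc]
      _ = b * t := by rw [tti, mul_one, hb]
  -- conjugation preserves relations
  have inj : ∀ {x y : A}, x * t = y * t → x = y := by
    intro x y h
    have := congrArg (· * ti) h
    simpa only [mul_assoc, tti, mul_one] using this
  have injl : ∀ {x y : A}, t * x = t * y → x = y := by
    intro x y h
    have := congrArg (ti * ·) h
    simpa only [← mul_assoc, tit, one_mul] using this
  generalize t * a * ti = d at *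
  have hq := (qc t).symm
  have qd : d * d = q * d - d + q := by
    apply inj
    have : t * (a * a) = t * (q * a - a + q) := by rw [qa']
    simp only [mul_add, mul_sub, ra ta, ta, ra hq, hq, mul_assoc] at this
    rw [mul_assoc, this]; noncomm_ring
  have qb : b * b = q * b - b + q := by
    apply injl
    have : (a * a) * t = (q * a - a + q) * t := by rw [qa']
    simp only [mul_add, mul_sub, ra tb, tb, ra hq, hq, mul_assoc] at this ⊢
    rw [this]; noncomm_ring
  have ab' : a * (b * a) = b * (a * b) := by simpa only [mul_assoc] using ab
  have da : d * (a * d) = a * (d * a) := by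
    apply inj
    have : t * (a * (b * a)) = t * (b * (a * b)) := by rw [ab']
    simpa only [ra ta, ra tb, ta, tb, mul_assoc] using this
  have bd : b * (d * b) = d * (b * d) := by
    apply inj
    have : t * (d * (a * d)) = t * (a * (d * a)) := by rw [da]
    simpa only [ra ta, ra td, ta, td, mul_assoc] using this
  exact ⟨qc, tti, tit, ta, tb, td, qa', qb, qd, ab', bd, da⟩

/-- Data for the Bernstein elements. -/
structure HInv (q qi t ti a ai b bi d : A) : Prop extends HTriple q t ti a b d where
  qic : ∀ x, qi * x = x * qi
  qqi : q * qi = 1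
  qai : q * ai = a - q + 1
  qbi : q * bi = b - q + 1
  aai : a * ai = 1
  aia : ai * a = 1
  bbi : b * bi = 1
  bib : bi * b = 1

theorem HTriple.toInv {q qi t ti a b d : A} (H : HTriple q t ti a b d)
    (qic : ∀ x, qi * x = x * qi) (qqi : q * qi = 1) :
    HInv q qi t ti a (qi * (a - q + 1)) b (qi * (b - q + 1)) d := by
  have h1 := H.qc a
  have h2 := H.qc b
  have e1 : a * (a - q + 1) = q := by
    simp only [mul_add, mul_sub, H.qa, mul_one, h1]; abel
  have e2 : b * (b - q + 1) = q := by
    simp only [mul_add, mul_sub, H.qb, mul_one, h2]; abel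
  have e3 : (a - q + 1) * a = q := by
    simp only [add_mul, sub_mul, H.qa, one_mul, h1]; abel
  have e4 : (b - q + 1) * b = q := by
    simp only [add_mul, sub_mul, H.qb, one_mul, h2]; abel
  have qiq : qi * q = 1 := by rw [qic, qqi]
  refine ⟨H, qic, qqi, ?_, ?_, ?_, ?_, ?_, ?_⟩
  · rw [← mul_assoc, qqi, one_mul]
  · rw [← mul_assoc, qqi, one_mul]
  · rw [← mul_assoc, ← qic, mul_assoc, e1, qiq]
  · rw [mul_assoc, e3, qiq]
  · rw [← mul_assoc, ← qic, mul_assoc, e2, qiq]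
  · rw [mul_assoc, e4, qiq]

namespace HInv
variable {q qi t ti a ai b bi d : A}

theorem tbi (H : HInv q qi t ti a ai b bi d) : t * bi = ai * t := by
  calc t * bi = ai * (a * t) * bi := by rw [ra H.aia, one_mul]
    _ = ai * t * (b * bi) := by rw [← H.tb]; simp only [mul_assoc]
    _ = _ := by rw [H.bbi, mul_one]

theorem br1 (H : HInv q qi t ti a ai b bi d) : ai * (bi * a) = b * (ai * bi) := by
  calc ai * (bi * a) = ai * (bi * (a * (b * (a * (ai * bi))))) := by
        rw [ra H.aai, one_mul, H.bbi, mul_one]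
    _ = ai * (bi * (b * (a * b) * (ai * bi))) := by rw [← H.ab]; simp only [mul_assoc]
    _ = _ := by simp only [mul_assoc]; rw [ra H.bib, one_mul, ra H.aia, one_mul]

theorem br2 (H : HInv q qi t ti a ai b bi d) : ai * (bi * ai) = bi * (ai * bi) := by
  calc ai * (bi * ai) = bi * (b * (ai * bi) * ai) := by
        simp only [mul_assoc]; rw [ra H.bib, one_mul]
    _ = _ := by rw [← H.br1]; simp only [mul_assoc, H.aai, mul_one]

theorem L1 (H : HInv q qi t ti a ai b bi d) : a * (q * ai * bi * t) * a = q * (bi * t * a) := by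
  have := (H.qc a).symm
  simp only [mul_assoc, ra this, ra H.aai, one_mul]

theorem L2 (H : HInv q qi t ti a ai b bi d) : b * (bi * t * a) * b = q * (qi * t * a * b) := by
  simp only [mul_assoc, ra H.bbi, ra H.qqi, one_mul]

theorem L3 (H : HInv q qi t ti a ai b bi d) : b * (q * ai * bi * t) = (q * ai * bi * t) * b := by
  have := (H.qc b).symm
  simp only [mul_assoc, ra this, H.tb, ra3 H.br1]

theorem L4 (H : HInv q qi t ti a ai b bi d) : a * (qi * t * a * b) = (qi * t * a * b) * a := by
  have := (H.qic a).symm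
  simp only [mul_assoc, ra this, H.ab, ra H.tb]

theorem Y01 (H : HInv q qi t ti a ai b bi d) : (q * ai * bi * t) * (bi * t * a) = q * (bi * (ai * (t * t))) := by
  simp only [mul_assoc, ra H.tbi, H.ta, H.td, ra H.td, ra H.ta, ra3 H.br2, ra H.bib, one_mul]

theorem Y10 (H : HInv q qi t ti a ai b bi d) : (bi * t * a) * (q * ai * bi * t) = q * (bi * (ai * (t * t))) := by
  have h1 := (H.qc a).symm
  have h2 := (H.qc bi).symm
  have h3 := (H.qc t).symm
  simp only [mul_assoc, ra h1, ra h2, ra h3, ra H.aai, one_mul, ra H.tbi]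

theorem Y012 (H : HInv q qi t ti a ai b bi d) : (q * ai * bi * t) * (bi * t * a) * (qi * t * a * b) = t ^ 3 := by
  have h1 := (H.qic ai).symm
  have h2 := (H.qic bi).symm
  have h3 := (H.qic t).symm
  have : t ^ 3 = t * (t * t) := by noncomm_ring
  rw [H.Y01, this]
  simp only [mul_assoc, ra h1, ra h2, ra h3, ra H.qqi, one_mul, ra H.ta, ra H.tb, ra H.td,
    H.ta, H.tb, H.td, ra H.aia, ra H.bib]

theorem t3c (H : HInv q qi t ti a ai b bi d) (a' : A) (h : a' = t ∨ a' = a ∨ a' = b ∨ a' = ai ∨ a' = bi ∨ a' = q ∨ a' = qi) :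
    t ^ 3 * a' = a' * t ^ 3 := by
  have : t ^ 3 = t * (t * t) := by noncomm_ring
  have ha : t ^ 3 * a = a * t ^ 3 := by
    rw [this]
    simp only [mul_assoc, ra H.ta, ra H.tb, ra H.td, H.ta, H.tb, H.td]
  have hb : t ^ 3 * b = b * t ^ 3 := by
    rw [this]
    simp only [mul_assoc, ra H.ta, ra H.tb, ra H.td, H.ta, H.tb, H.td]
  rcases h with rfl | rfl | rfl | rfl | rfl | rfl | rfl
  · noncomm_ring
  · exact ha
  · exact hb
  · exact comm_inv H.aai H.aia ha
  · exact comm_inv H.bbi H.bib hb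
  · rw [H.qc]
  · rw [H.qic]

theorem Y2eq (H : HInv q qi t ti a ai b bi d) : qi * t * a * b = (qi * ti * ti * a * b) * t ^ 3 := by
  have ha := H.t3c a (by simp)
  have hb := H.t3c b (by simp)
  have : t ^ 3 = t * (t * t) := by noncomm_ring
  have e : a * (b * t ^ 3) = t * (t * (t * (a * b))) := by
    rw [← hb, ← mul_assoc, ← ha, this]; simp only [mul_assoc]
  simp only [mul_assoc, e, ra H.tit, one_mul]

theorem Winv (H : HInv q qi t ti a ai b bi d) : (q * (bi * (ai * (t * t)))) * (qi * ti * ti * a * b) = 1 ∧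
    (qi * ti * ti * a * b) * (q * (bi * (ai * (t * t)))) = 1 := by
  have h1 := (H.qic ai).symm
  have h2 := (H.qic bi).symm
  have h3 := (H.qic t).symm
  have g1 := (H.qc ti).symm
  have g2 := (H.qc a).symm
  have g3 := (H.qc b).symm
  have qiq : qi * q = 1 := by rw [H.qic, H.qqi]
  constructor
  · simp only [mul_assoc, ra h1, ra h2, ra h3, ra H.qqi, one_mul, ra H.tti, ra H.aia, H.bib]
  · simp only [mul_assoc, ra g1, ra g2, ra g3, ra qiq, one_mul, ra H.bbi, ra H.aai, ra H.tit, H.tit]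

theorem c01 (H : HInv q qi t ti a ai b bi d) : (q * ai * bi * t) * (bi * t * a) = (bi * t * a) * (q * ai * bi * t) := by
  rw [H.Y01, H.Y10]

theorem c02 (H : HInv q qi t ti a ai b bi d) : (q * ai * bi * t) * (qi * t * a * b) = (qi * t * a * b) * (q * ai * bi * t) := by
  have h : (q * ai * bi * t) * (qi * ti * ti * a * b) = (qi * ti * ti * a * b) * (q * ai * bi * t) := by
    refine comm_inv H.Winv.1 H.Winv.2 ?_
    rw [← H.Y01, mul_assoc _ (bi * t * a), ← H.c01]
  have h3 : (q * ai * bi * t) * t ^ 3 = t ^ 3 * (q * ai * bi * t) := by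
    have e1 := H.t3c q (by simp)
    have e2 := H.t3c ai (by simp)
    have e3 := H.t3c bi (by simp)
    have e4 := H.t3c t (by simp)
    simp only [mul_assoc, ra e1, ra e2, ra e3, ← e4]
  rw [H.Y2eq, ← mul_assoc, h, mul_assoc _ _ (t ^ 3), h3, ← mul_assoc]

theorem c12 (H : HInv q qi t ti a ai b bi d) : (bi * t * a) * (qi * t * a * b) = (qi * t * a * b) * (bi * t * a) := by
  have h : (bi * t * a) * (qi * ti * ti * a * b) = (qi * ti * ti * a * b) * (bi * t * a) := by
    refine comm_inv H.Winv.1 H.Winv.2 ?_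
    rw [← H.Y01, ← mul_assoc, ← H.c01]
  have h3 : (bi * t * a) * t ^ 3 = t ^ 3 * (bi * t * a) := by
    have e1 := H.t3c a (by simp)
    have e3 := H.t3c bi (by simp)
    have e4 := H.t3c t (by simp)
    simp only [mul_assoc, ra e1, ra e3, ra e4, ← e1]
  rw [H.Y2eq, ← mul_assoc, h, mul_assoc _ _ (t ^ 3), h3, ← mul_assoc]

theorem teq (H : HInv q qi t ti a ai b bi d) : t = q * (qi * t * a * b) * bi * ai := by
  simp only [mul_assoc, ra H.qqi, one_mul, ra H.bbi, H.aai, mul_one]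

theorem sig1 (H : HInv q qi t ti a ai b bi d) : q * ((q * ai * bi * t) + (bi * t * a) + (qi * t * a * b)) = zOne q t a b d := by
  have h1 := (H.qc a).symm
  have h2 := (H.qc b).symm
  have h3 : q * (q * ai * bi * t) = (a - q + 1) * ((b - q + 1) * t) := by
    rw [← H.qai, ← H.qbi]
    have := (H.qc ai).symm
    simp only [mul_assoc, ra this]
  have h4 : q * (bi * t * a) = (b - q + 1) * (d * t) := by
    rw [← H.qbi]; simp only [mul_assoc, H.ta]
  have h5 : q * (qi * t * a * b) = d * (a * t) := by
    simp only [mul_assoc, ra H.qqi, one_mul, H.ta, ra H.ta, H.tb]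
  rw [mul_add, mul_add, h3, h4, h5]
  unfold zOne
  simp only [mul_assoc, mul_add, add_mul, mul_sub, sub_mul, mul_one, one_mul, h1, h2, ra h1, ra h2]
  abel

theorem sig2 (H : HInv q qi t ti a ai b bi d) : q * ((q * ai * bi * t) * (bi * t * a) + (bi * t * a) * (qi * t * a * b) +
    (q * ai * bi * t) * (qi * t * a * b)) = zTwo q t a b d := by
  have h1 := (H.qc a).symm
  have h2 := (H.qc b).symm
  have h3 : q * ((q * ai * bi * t) * (bi * t * a)) = (b - q + 1) * ((a - q + 1) * (t * t)) := by
    rw [H.Y01, ← H.qai, ← H.qbi]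
    have := (H.qc bi).symm
    simp only [mul_assoc, ra this]
  have g1 := (H.qic a).symm
  have g2 := (H.qic t).symm
  have g3 := (H.qic bi).symm
  have g4 := (H.qic ai).symm
  have g5 := (H.qic d).symm
  have h4 : q * ((bi * t * a) * (qi * t * a * b)) = d * (b * (t * t)) := by
    simp only [mul_assoc, ra g1, ra g2, ra g3, ra H.qqi, one_mul, H.ta, ra H.ta, H.tb, ra H.tb,
      ra H.td, H.td, ra g5]
    have e : d * (b * (d * (t * t))) = b * (d * (b * (t * t))) := by
      rw [ra3 H.bd.symm]; simp only [mul_assoc]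
    rw [e]
    rw [ra H.bib, one_mul]
  have h5 : q * ((q * ai * bi * t) * (qi * t * a * b)) = (a - q + 1) * (d * (t * t)) := by
    rw [← H.qai]
    simp only [mul_assoc, ra g1, ra g2, ra g3, ra g4, ra H.qqi, one_mul, H.ta, ra H.ta, H.tb,
      ra H.tb, ra H.td, H.td, ra H.bib]
  rw [mul_add, mul_add, h3, h4, h5]
  unfold zTwo
  simp only [mul_assoc, mul_add, add_mul, mul_sub, sub_mul, mul_one, one_mul, h1, h2, ra h1, ra h2]
  abel
end HInv
end ringpart
end partA

section partB
section ringpart2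
variable {A : Type*} [Ring A]

/-- Reconstruct `T` from the Bernstein presentation. -/
theorem bern_T {q qi a ai b bi y0 y1 y2 y2i : A} (qc : ∀ x, q * x = x * q)
    (qic : ∀ x, qi * x = x * qi) (qqi : q * qi = 1) (aai : a * ai = 1) (aia : ai * a = 1)
    (bbi : b * bi = 1) (bib : bi * b = 1) (ab : a * (b * a) = b * (a * b))
    (hy2 : y2 * y2i = 1) (hy2' : y2i * y2 = 1)
    (e1 : a * (y0 * a) = q * y1) (e2 : b * (y1 * b) = q * y2) (b0 : b * y0 = y0 * b)
    (a2 : a * y2 = y2 * a) (asig : a * (y0 * (y1 * y2)) = y0 * (y1 * y2) * a)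
    (bsig : b * (y0 * (y1 * y2)) = y0 * (y1 * y2) * b) :
    (q * (y2 * (bi * ai))) * (a * (b * (y2i * qi))) = 1 ∧
    (a * (b * (y2i * qi))) * (q * (y2 * (bi * ai))) = 1 ∧
    (q * (y2 * (bi * ai))) * b = a * (q * (y2 * (bi * ai))) ∧
    (q * (y2 * (bi * ai))) ^ 3 = y0 * (y1 * y2) := by
  have qiq : qi * q = 1 := by rw [qic, qqi]
  have g1 := (qic y2).symm
  have g2 := (qic y2i).symm
  have g3 := (qc a).symm
  have br : bi * (ai * b) = a * (bi * ai) := by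
    calc bi * (ai * b) = bi * (ai * (b * (a * (b * (bi * ai))))) := by
          rw [ra bbi, one_mul, aai, mul_one]
      _ = bi * (ai * (a * (b * a) * (bi * ai))) := by rw [ab]; simp only [mul_assoc]
      _ = _ := by simp only [mul_assoc]; rw [ra aia, one_mul, ra bib, one_mul]
  refine ⟨?_, ?_, ?_, ?_⟩
  · simp only [mul_assoc, ra aia, ra bib, one_mul, ra hy2, qqi]
  · simp only [mul_assoc, ra qiq, one_mul, ra hy2', ra bbi, aai]
  · simp only [mul_assoc, br, ra g3, ra a2]
  · have t1 : q * (y2 * (bi * ai)) = b * (y1 * ai) := by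
      rw [← mul_assoc, ← e2]; simp only [mul_assoc, ra bbi, one_mul]
    have t2 : q * (y2 * (bi * ai)) = qi * (b * (a * y0)) := by
      have : y1 = qi * (a * (y0 * a)) := by rw [e1, ← mul_assoc, qiq, one_mul]
      have g4 := (qic b).symm
      rw [t1, this]; simp only [mul_assoc, aai, mul_one, ra g4]
    have h3 : (q * (y2 * (bi * ai))) ^ 3 =
        (qi * (b * (a * y0))) * ((b * (y1 * ai)) * (q * (y2 * (bi * ai)))) := by
      rw [← t1, ← t2]; noncomm_ring
    have g5 := (qc ai).symm
    have g6 := (qc y1).symm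
    have g7 := (qc b).symm
    have g8 := (qc y0).symm
    have ai2 : ai * y2 = y2 * ai := (comm_inv aai aia a2.symm).symm
    have asig' : a * (y0 * (y1 * y2)) = y0 * (y1 * (y2 * a)) := by
      rw [asig]; simp only [mul_assoc]
    have bsig' : b * (y0 * (y1 * y2)) = y0 * (y1 * (y2 * b)) := by
      rw [bsig]; simp only [mul_assoc]
    have asig2 (w : A) : a * (y0 * (y1 * (y2 * w))) = y0 * (y1 * (y2 * (a * w))) := by
      have := congrArg (· * w) asig'; simpa only [mul_assoc] using this
    have bsig2 (w : A) : b * (y0 * (y1 * (y2 * w))) = y0 * (y1 * (y2 * (b * w))) := by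
      have := congrArg (· * w) bsig'; simpa only [mul_assoc] using this
    have brr : b * (a * (b * (ai * (bi * ai)))) = 1 := by
      have : b * (a * (b * (ai * (bi * ai)))) = b * (a * b) * (ai * (bi * ai)) := by
        simp only [mul_assoc]
      rw [this, ← ab]
      simp only [mul_assoc, ra aai, ra bbi, one_mul, aai]
    rw [h3]
    simp only [mul_assoc, ra g5, ra g6, ra g7, ra g8, ra g3, ra qiq, one_mul, ra ai2, ra b0.symm,
      asig2, bsig2, brr, mul_one]
end ringpart2

abbrev LP := LaurentPolynomial ℤ

/-- A field with three algebraically independent elements and an action of the symmetric group. -/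
structure PolRep (F : Type) [Field F] [Algebra LP F] where
  y0 : F
  y1 : F
  y2 : F
  indep : Function.Injective (MvPolynomial.aeval (R := LP) ![y0, y1, y2])
  s1 : F →ₐ[LP] F
  s2 : F →ₐ[LP] F
  s1y0 : s1 y0 = y1
  s1y1 : s1 y1 = y0
  s1y2 : s1 y2 = y2
  s2y0 : s2 y0 = y0
  s2y1 : s2 y1 = y2
  s2y2 : s2 y2 = y1
  s1s1 : ∀ f, s1 (s1 f) = f
  s2s2 : ∀ f, s2 (s2 f) = f
  braid : ∀ f, s1 (s2 (s1 f)) = s2 (s1 (s2 f))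

namespace PolRep
variable {F : Type} [Field F] [Algebra LP F] (P : PolRep F)

noncomputable def q : F := algebraMap LP F (LaurentPolynomial.T 1)
noncomputable def qi : F := algebraMap LP F (LaurentPolynomial.T (-1))

theorem LT : (LaurentPolynomial.T 1 : LP) * LaurentPolynomial.T (-1) = 1 := by
  rw [← LaurentPolynomial.T_add]; simp

theorem qqi : (q : F) * qi = 1 := by
  unfold q qi; rw [← map_mul, LT, map_one]

theorem q0 : (q : F) ≠ 0 := left_ne_zero_of_mul_eq_one qqi
theorem qi_eq : (qi : F) = q⁻¹ := eq_inv_of_mul_eq_one_right qqi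

theorem s1q : P.s1 q = q := P.s1.commutes _
theorem s2q : P.s2 q = q := P.s2.commutes _

open MvPolynomial in
theorem ne_of {p : MvPolynomial (Fin 3) LP} (hp : p ≠ 0) :
    MvPolynomial.aeval ![P.y0, P.y1, P.y2] p ≠ 0 := fun h => hp (P.indep (by rw [h, map_zero]))

open MvPolynomial in
theorem X_sub_ne (c : LP) {i j : Fin 3} (h : i ≠ j) : (X i - C c * X j : MvPolynomial (Fin 3) LP) ≠ 0 := by
  intro h0
  have := congrArg (MvPolynomial.eval (fun k => if k = i then (1 : LP) else 0)) h0
  simp [h.symm] at this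

theorem y0ne : P.y0 ≠ 0 := by simpa using P.ne_of (MvPolynomial.X_ne_zero 0)
theorem y1ne : P.y1 ≠ 0 := by simpa using P.ne_of (MvPolynomial.X_ne_zero 1)
theorem y2ne : P.y2 ≠ 0 := by simpa using P.ne_of (MvPolynomial.X_ne_zero 2)
theorem d01 : P.y0 - P.y1 ≠ 0 := by simpa using P.ne_of (X_sub_ne 1 (i := 0) (j := 1) (by decide))
theorem d12 : P.y1 - P.y2 ≠ 0 := by simpa using P.ne_of (X_sub_ne 1 (i := 1) (j := 2) (by decide))
theorem d02 : P.y0 - P.y2 ≠ 0 := by simpa using P.ne_of (X_sub_ne 1 (i := 0) (j := 2) (by decide))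
theorem c01 : P.y0 - q * P.y1 ≠ 0 := by
  simpa [q] using P.ne_of (X_sub_ne (LaurentPolynomial.T 1) (i := 0) (j := 1) (by decide))
theorem c12 : P.y1 - q * P.y2 ≠ 0 := by
  simpa [q] using P.ne_of (X_sub_ne (LaurentPolynomial.T 1) (i := 1) (j := 2) (by decide))
theorem c02 : P.y0 - q * P.y2 ≠ 0 := by
  simpa [q] using P.ne_of (X_sub_ne (LaurentPolynomial.T 1) (i := 0) (j := 2) (by decide))

/-- multiplication operator -/
noncomputable def mu (f : F) : Module.End LP F := LinearMap.mulLeft LP f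

noncomputable def th1 : Module.End LP F :=
  mu ((P.y0 - q * P.y1) / (P.y0 - P.y1)) * (1 - P.s1.toLinearMap)
noncomputable def th2 : Module.End LP F :=
  mu ((P.y1 - q * P.y2) / (P.y1 - P.y2)) * (1 - P.s2.toLinearMap)

theorem mu_apply (f g : F) : mu f g = f * g := rfl
theorem th1_apply (f : F) : P.th1 f = (P.y0 - q * P.y1) / (P.y0 - P.y1) * (f - P.s1 f) := rfl
theorem th2_apply (f : F) : P.th2 f = (P.y1 - q * P.y2) / (P.y1 - P.y2) * (f - P.s2 f) := rfl

theorem mu_mul (f g : F) : mu (f * g) = mu f * mu g := by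
  ext x; simp [mu_apply, mul_assoc]
theorem mu_alg (c : LP) : (mu (algebraMap LP F c) : Module.End LP F) = algebraMap LP _ c := by
  ext x; simp [mu_apply, Algebra.smul_def]
theorem mu_one : (mu 1 : Module.End LP F) = 1 := by ext x; simp [mu_apply]

noncomputable def oS1 : Module.End LP F := P.th1 - 1
noncomputable def oS2 : Module.End LP F := P.th2 - 1
noncomputable def oS1i : Module.End LP F := mu qi * (P.oS1 - mu q + 1)
noncomputable def oS2i : Module.End LP F := mu qi * (P.oS2 - mu q + 1)
noncomputable def oT : Module.End LP F := mu q * (mu P.y2 * (P.oS2i * P.oS1i))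
noncomputable def oTi : Module.End LP F := P.oS1 * (P.oS2 * (mu P.y2⁻¹ * mu qi))

theorem oS1_apply (f : F) :
    P.oS1 f = (P.y0 - q * P.y1) / (P.y0 - P.y1) * (f - P.s1 f) - f := rfl
theorem oS2_apply (f : F) :
    P.oS2 f = (P.y1 - q * P.y2) / (P.y1 - P.y2) * (f - P.s2 f) - f := rfl

theorem quad1 : P.oS1 * P.oS1 = mu q * P.oS1 - P.oS1 + mu q := by
  ext f
  have h := P.d01
  have h' : P.y1 - P.y0 ≠ 0 := by rw [← neg_sub]; exact neg_ne_zero.mpr h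
  simp only [Module.End.mul_apply, LinearMap.add_apply, LinearMap.sub_apply, mu_apply, oS1_apply,
    map_sub, map_mul, map_div₀, P.s1s1, P.s1y0, P.s1y1, P.s1y2, P.s1q]
  field_simp
  ring

theorem quad2 : P.oS2 * P.oS2 = mu q * P.oS2 - P.oS2 + mu q := by
  ext f
  have h := P.d12
  have h' : P.y2 - P.y1 ≠ 0 := by rw [← neg_sub]; exact neg_ne_zero.mpr h
  simp only [Module.End.mul_apply, LinearMap.add_apply, LinearMap.sub_apply, mu_apply, oS2_apply,
    map_sub, map_mul, map_div₀, P.s2s2, P.s2y0, P.s2y1, P.s2y2, P.s2q]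
  field_simp
  ring

set_option maxHeartbeats 2000000 in
theorem braidOp : P.oS1 * (P.oS2 * P.oS1) = P.oS2 * (P.oS1 * P.oS2) := by
  ext f
  have h := P.d01
  have h' : P.y1 - P.y0 ≠ 0 := by rw [← neg_sub]; exact neg_ne_zero.mpr h
  have h2 := P.d12
  have h2' : P.y2 - P.y1 ≠ 0 := by rw [← neg_sub]; exact neg_ne_zero.mpr h2
  have h3 := P.d02
  have h3' : P.y2 - P.y0 ≠ 0 := by rw [← neg_sub]; exact neg_ne_zero.mpr h3
  simp only [Module.End.mul_apply, LinearMap.add_apply, LinearMap.sub_apply, mu_apply, oS2_apply,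
    oS1_apply, P.s1s1, P.s1y0, P.s1y1, P.s1y2, P.s1q, P.braid,
    map_sub, map_mul, map_div₀, P.s2s2, P.s2y0, P.s2y1, P.s2y2, P.s2q]
  generalize P.s1 (P.s2 f) = f12
  generalize P.s2 (P.s1 f) = f21
  generalize P.s2 (P.s1 (P.s2 f)) = f0
  generalize P.s2 f = f2
  generalize P.s1 f = f1
  generalize P.y0 = a at *
  generalize P.y1 = b at *
  generalize P.y2 = c at *
  generalize (q : F) = q at *
  field_simp
  ring

end PolRep
end partB

section partC
namespace PolRep
variable {F : Type} [Field F] [Algebra LP F] (P : PolRep F)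

theorem mu_comm_of {f : F} (x : Module.End LP F) (h : ∃ c : LP, f = algebraMap LP F c) :
    mu f * x = x * mu f := by
  obtain ⟨c, rfl⟩ := h
  rw [mu_alg]; exact Algebra.commutes c x

theorem mu_qc (x : Module.End LP F) : mu q * x = x * mu q := mu_comm_of x ⟨_, rfl⟩
theorem mu_qic (x : Module.End LP F) : mu qi * x = x * mu qi := mu_comm_of x ⟨_, rfl⟩
theorem mu_qqi : (mu q * mu qi : Module.End LP F) = 1 := by rw [← mu_mul, qqi, mu_one]

theorem inv_of_quad {A : Type*} [Ring A] {q qi a : A} (qc : ∀ x, q * x = x * q)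
    (qic : ∀ x, qi * x = x * qi) (qqi : q * qi = 1) (h : a * a = q * a - a + q) :
    a * (qi * (a - q + 1)) = 1 ∧ (qi * (a - q + 1)) * a = 1 := by
  have h1 := qc a
  have qiq : qi * q = 1 := by rw [qic, qqi]
  have e1 : a * (a - q + 1) = q := by
    simp only [mul_add, mul_sub, h, mul_one, h1]; abel
  have e3 : (a - q + 1) * a = q := by
    simp only [add_mul, sub_mul, h, one_mul, h1]; abel
  constructor
  · rw [← mul_assoc, ← qic, mul_assoc, e1, qiq]
  · rw [mul_assoc, e3, qiq]

theorem oS1_mu (g : F) (hg : P.s1 g = g) : P.oS1 * mu g = mu g * P.oS1 := by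
  ext f
  simp only [Module.End.mul_apply, mu_apply, oS1_apply, map_mul, hg]; ring

theorem oS2_mu (g : F) (hg : P.s2 g = g) : P.oS2 * mu g = mu g * P.oS2 := by
  ext f
  simp only [Module.End.mul_apply, mu_apply, oS2_apply, map_mul, hg]; ring

theorem opE1 : P.oS1 * (mu P.y0 * P.oS1) = mu q * mu P.y1 := by
  ext f
  have h := P.d01
  have h' : P.y1 - P.y0 ≠ 0 := by rw [← neg_sub]; exact neg_ne_zero.mpr h
  simp only [Module.End.mul_apply, LinearMap.add_apply, LinearMap.sub_apply, mu_apply, oS1_apply,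
    map_sub, map_mul, map_div₀, P.s1s1, P.s1y0, P.s1y1, P.s1y2, P.s1q]
  field_simp
  ring

theorem opE2 : P.oS2 * (mu P.y1 * P.oS2) = mu q * mu P.y2 := by
  ext f
  have h := P.d12
  have h' : P.y2 - P.y1 ≠ 0 := by rw [← neg_sub]; exact neg_ne_zero.mpr h
  simp only [Module.End.mul_apply, LinearMap.add_apply, LinearMap.sub_apply, mu_apply, oS2_apply,
    map_sub, map_mul, map_div₀, P.s2s2, P.s2y0, P.s2y1, P.s2y2, P.s2q]
  field_simp
  ring

theorem sig_s1 : P.s1 (P.y0 * (P.y1 * P.y2)) = P.y0 * (P.y1 * P.y2) := by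
  simp only [map_mul, P.s1y0, P.s1y1, P.s1y2]; ring
theorem sig_s2 : P.s2 (P.y0 * (P.y1 * P.y2)) = P.y0 * (P.y1 * P.y2) := by
  simp only [map_mul, P.s2y0, P.s2y1, P.s2y2]; ring

theorem oT_rel : P.oT * P.oTi = 1 ∧ P.oTi * P.oT = 1 ∧ P.oT * P.oS2 = P.oS1 * P.oT ∧
    P.oT ^ 3 = mu (P.y0 * (P.y1 * P.y2)) := by
  have i1 := inv_of_quad mu_qc mu_qic mu_qqi P.quad1
  have i2 := inv_of_quad mu_qc mu_qic mu_qqi P.quad2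
  have sg : (mu (P.y0 * (P.y1 * P.y2)) : Module.End LP F) = mu P.y0 * (mu P.y1 * mu P.y2) := by
    rw [mu_mul, mu_mul]
  have := bern_T (y0 := mu P.y0) (y1 := mu P.y1) (y2 := mu P.y2) (y2i := mu P.y2⁻¹)
    mu_qc mu_qic mu_qqi i1.1 i1.2 i2.1 i2.2 P.braidOp
    (by rw [← mu_mul, mul_inv_cancel₀ P.y2ne, mu_one])
    (by rw [← mu_mul, inv_mul_cancel₀ P.y2ne, mu_one]) P.opE1 P.opE2
    (P.oS2_mu _ P.s2y0) (P.oS1_mu _ P.s1y2) (by rw [← sg]; exact P.oS1_mu _ P.sig_s1)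
    (by rw [← sg]; exact P.oS2_mu _ P.sig_s2)
  rw [sg]
  exact this

noncomputable def gens : Fin 4 → Module.End LP F := ![P.oT, P.oTi, P.oS1, P.oS2]

/-- The polynomial representation. -/
noncomputable def rho : HLau →ₐ[LP] Module.End LP F :=
  RingQuot.liftAlgHom LP ⟨FreeAlgebra.lift LP P.gens, by
    have k0 : FreeAlgebra.lift LP P.gens (FreeAlgebra.ι LP 0) = P.oT := FreeAlgebra.lift_ι_apply _ _
    have k1 : FreeAlgebra.lift LP P.gens (FreeAlgebra.ι LP 1) = P.oTi := FreeAlgebra.lift_ι_apply _ _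
    have k2 : FreeAlgebra.lift LP P.gens (FreeAlgebra.ι LP 2) = P.oS1 := FreeAlgebra.lift_ι_apply _ _
    have k3 : FreeAlgebra.lift LP P.gens (FreeAlgebra.ι LP 3) = P.oS2 := FreeAlgebra.lift_ι_apply _ _
    intro x y h
    cases h with
    | TTinv => simpa only [map_mul, k0, k1, map_one] using P.oT_rel.1
    | TinvT => simpa only [map_mul, k0, k1, map_one] using P.oT_rel.2.1
    | quad =>
      simp only [map_mul, map_add, map_sub, k2, map_one, map_zero, AlgHom.commutes]
      rw [← mu_alg]
      have h1 := P.quad1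
      have h2 := mu_qc P.oS1
      change (P.oS1 + 1) * (P.oS1 - mu q) = 0
      rw [add_mul, mul_sub, one_mul, h1, ← h2]; abel
    | T3S1 =>
      simp only [map_mul, map_pow, k0, k2]
      rw [P.oT_rel.2.2.2]; exact (P.oS1_mu _ P.sig_s1).symm
    | braid => simpa only [map_mul, k2, k3, mul_assoc] using P.braidOp
    | TS2 => simpa only [map_mul, k0, k2, k3] using P.oT_rel.2.2.1⟩

theorem rho_gen (i : Fin 4) : P.rho (HeckeAlg.gen LP _ i) = P.gens i := by
  unfold rho HeckeAlg.gen
  rw [RingQuot.liftAlgHom_mkAlgHom_apply, FreeAlgebra.lift_ι_apply]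

theorem rho_T : P.rho (HeckeAlg.T LP _) = P.oT := P.rho_gen 0
theorem rho_Tinv : P.rho (HeckeAlg.Tinv LP _) = P.oTi := P.rho_gen 1
theorem rho_S1 : P.rho (HeckeAlg.S1 LP _) = P.oS1 := P.rho_gen 2
theorem rho_S2 : P.rho (HeckeAlg.S2 LP _) = P.oS2 := P.rho_gen 3
theorem rho_alg (c : LP) : P.rho (algebraMap LP HLau c) = mu (algebraMap LP F c) := by
  rw [AlgHom.commutes, mu_alg]
end PolRep

/-! The algebra `HLau`. -/
theorem HLau_triple : HTriple (A := HLau) qLau (HeckeAlg.T LP _) (HeckeAlg.Tinv LP _)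
    (HeckeAlg.S1 LP _) (HeckeAlg.S2 LP _)
    (HeckeAlg.T LP _ * HeckeAlg.S1 LP _ * HeckeAlg.Tinv LP _) :=
  HTriple.mk' (fun x => Algebra.commutes _ x) (HeckeAlg.T_mul_Tinv _ _) (HeckeAlg.Tinv_mul_T _ _)
    (HeckeAlg.T_mul_S2 _ _) (HeckeAlg.T3_mul_S1 _ _) (HeckeAlg.quad_rel _ _)
    (HeckeAlg.braid_rel _ _)

theorem HPoly_triple : HTriple (A := HPoly) (algebraMap (Polynomial ℤ) HPoly Polynomial.X)
    (HeckeAlg.T _ _) (HeckeAlg.Tinv _ _) (HeckeAlg.S1 _ _) (HeckeAlg.S2 _ _)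
    (HeckeAlg.T _ _ * HeckeAlg.S1 _ _ * HeckeAlg.Tinv _ _) :=
  HTriple.mk' (fun x => Algebra.commutes _ x) (HeckeAlg.T_mul_Tinv _ _) (HeckeAlg.Tinv_mul_T _ _)
    (HeckeAlg.T_mul_S2 _ _) (HeckeAlg.T3_mul_S1 _ _) (HeckeAlg.quad_rel _ _)
    (HeckeAlg.braid_rel _ _)

theorem HLau_inv : HInv (A := HLau) qLau qLauInv (HeckeAlg.T LP _) (HeckeAlg.Tinv LP _)
    (HeckeAlg.S1 LP _) (HeckeAlg.S1i LP _ (LaurentPolynomial.T (-1)))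
    (HeckeAlg.S2 LP _) (HeckeAlg.S2i LP _ (LaurentPolynomial.T (-1)))
    (HeckeAlg.T LP _ * HeckeAlg.S1 LP _ * HeckeAlg.Tinv LP _) :=
  HLau_triple.toInv (fun x => Algebra.commutes _ x) (by
    unfold qLau qLauInv; rw [← map_mul, PolRep.LT, map_one])

/-- induction principle for Hecke algebras -/
theorem HeckeAlg.ind {R : Type} [CommRing R] {q : R} (S : Subalgebra R (HeckeAlg R q))
    (h : ∀ i, HeckeAlg.gen R q i ∈ S) (x : HeckeAlg R q) : x ∈ S := by
  obtain ⟨y, rfl⟩ := RingQuot.mkAlgHom_surjective R (HeckeRel R q) x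
  induction y using FreeAlgebra.induction with
  | grade0 r => rw [AlgHom.commutes]; exact S.algebraMap_mem r
  | grade1 i => exact h i
  | mul a b ha hb => rw [map_mul]; exact S.mul_mem ha hb
  | add a b ha hb => rw [map_add]; exact S.add_mem ha hb

/-- An element commuting with generators is central. -/
theorem HeckeAlg.central_of {R : Type} [CommRing R] {q : R} {z : HeckeAlg R q}
    (h : ∀ i, z * HeckeAlg.gen R q i = HeckeAlg.gen R q i * z) : z ∈ Subring.center (HeckeAlg R q) := by
  rw [Subring.mem_center_iff]
  intro g
  have := HeckeAlg.ind (Subalgebra.centralizer R {z}) (fun i => by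
    rw [Subalgebra.mem_centralizer_iff]; intro g hg; rw [Set.mem_singleton_iff.mp hg]; exact h i) g
  rw [Subalgebra.mem_centralizer_iff] at this
  exact (this z rfl).symm

theorem HeckeAlg.map_gen {R S : Type} [CommRing R] [CommRing S] (f : R →+* S) (q : R) (q' : S)
    (h : f q = q') (i : Fin 4) : HeckeAlg.map f q q' h (HeckeAlg.gen R q i) = HeckeAlg.gen S q' i := by
  subst h
  unfold HeckeAlg.map
  letI : Algebra R (HeckeAlg S (f q)) :=
    RingHom.toAlgebra' ((algebraMap S (HeckeAlg S (f q))).comp f)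
      (fun c x => by simpa using Algebra.commutes (f c) x)
  have : HeckeAlg.gen R q i = RingQuot.mkRingHom (HeckeRel R q) (FreeAlgebra.ι R i) := by
    unfold HeckeAlg.gen; rw [← RingQuot.mkAlgHom_coe R]; rfl
  rw [this]
  refine (RingQuot.lift_mkRingHom_apply _ _ _).trans ?_
  exact FreeAlgebra.lift_ι_apply _ _

theorem HeckeAlg.map_alg {R S : Type} [CommRing R] [CommRing S] (f : R →+* S) (q : R) (q' : S)
    (h : f q = q') (c : R) : HeckeAlg.map f q q' h (algebraMap R _ c) = algebraMap S _ (f c) := by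
  subst h
  unfold HeckeAlg.map
  letI : Algebra R (HeckeAlg S (f q)) :=
    RingHom.toAlgebra' ((algebraMap S (HeckeAlg S (f q))).comp f)
      (fun c x => by simpa using Algebra.commutes (f c) x)
  have : algebraMap R (HeckeAlg R q) c =
      RingQuot.mkRingHom (HeckeRel R q) (algebraMap R (FreeAlgebra R (Fin 4)) c) := by
    rw [← RingQuot.mkAlgHom_coe R]; exact (AlgHom.commutes _ _).symm
  rw [this]
  refine (RingQuot.lift_mkRingHom_apply _ _ _).trans ?_
  exact AlgHom.commutes (FreeAlgebra.lift R fun i => gen S (f q) i) c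

theorem iota_gen (i : Fin 4) : ιLau (HeckeAlg.gen _ _ i) = HeckeAlg.gen LP _ i :=
  HeckeAlg.map_gen _ _ _ _ i

theorem iota_alg (c : Polynomial ℤ) : ιLau (algebraMap _ HPoly c) = structZq c :=
  HeckeAlg.map_alg _ _ _ _ c
end partC

section partD
theorem bern_Y {A : Type*} [Ring A] {q qi a ai b bi y0 y1 y2 : A} (qc : ∀ x, q * x = x * q)
    (qic : ∀ x, qi * x = x * qi) (qqi : q * qi = 1) (aai : a * ai = 1) (aia : ai * a = 1)
    (bbi : b * bi = 1) (bib : bi * b = 1)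
    (e1 : a * (y0 * a) = q * y1) (e2 : b * (y1 * b) = q * y2) :
    q * ai * bi * (q * (y2 * (bi * ai))) = y0 ∧ bi * (q * (y2 * (bi * ai))) * a = y1 ∧
    qi * (q * (y2 * (bi * ai))) * a * b = y2 := by
  have qiq : qi * q = 1 := by rw [qic, qqi]
  refine ⟨?_, ?_, ?_⟩
  · rw [← mul_assoc q y2, ← e2]
    simp only [mul_assoc, ra bbi, one_mul, ra bib]
    rw [ra (qc ai), mul_assoc, ra e1.symm]
    simp only [mul_assoc, aai, ra aia, one_mul, mul_one]
  · rw [← mul_assoc q y2, ← e2]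
    simp only [mul_assoc, ra bbi, one_mul, ra bib, aia, mul_one]
  · simp only [mul_assoc, ra aia, bib, one_mul, ra qiq, mul_one]

namespace PolRep
variable {F : Type} [Field F] [Algebra LP F] (P : PolRep F)

theorem rho_q : P.rho qLau = mu q := P.rho_alg _
theorem rho_qi : P.rho qLauInv = mu qi := P.rho_alg _
theorem rho_S1i : P.rho (HeckeAlg.S1i LP _ (LaurentPolynomial.T (-1))) = P.oS1i := by
  unfold HeckeAlg.S1i
  simp only [map_mul, map_add, map_sub, map_one, rho_alg, rho_S1]; rfl
theorem rho_S2i : P.rho (HeckeAlg.S2i LP _ (LaurentPolynomial.T (-1))) = P.oS2i := by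
  unfold HeckeAlg.S2i
  simp only [map_mul, map_add, map_sub, map_one, rho_alg, rho_S2]; rfl

theorem YLau0_eq : YLau 0 = qLau * HeckeAlg.S1i LP _ (LaurentPolynomial.T (-1)) *
  HeckeAlg.S2i LP _ (LaurentPolynomial.T (-1)) * HeckeAlg.T LP _ := rfl
theorem YLau1_eq : YLau 1 =
  HeckeAlg.S2i LP _ (LaurentPolynomial.T (-1)) * HeckeAlg.T LP _ * HeckeAlg.S1 LP _ := rfl
theorem YLau2_eq : YLau 2 =
  qLauInv * HeckeAlg.T LP _ * HeckeAlg.S1 LP _ * HeckeAlg.S2 LP _ := rfl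

theorem rho_Y : P.rho (YLau 0) = mu P.y0 ∧ P.rho (YLau 1) = mu P.y1 ∧ P.rho (YLau 2) = mu P.y2 := by
  have i1 := inv_of_quad mu_qc mu_qic mu_qqi P.quad1
  have i2 := inv_of_quad mu_qc mu_qic mu_qqi P.quad2
  rw [YLau0_eq, YLau1_eq, YLau2_eq]
  simp only [map_mul, rho_q, rho_qi, rho_S1i, rho_S2i, rho_T, rho_S1, rho_S2]
  exact bern_Y mu_qc mu_qic mu_qqi i1.1 i1.2 i2.1 i2.2 P.opE1 P.opE2
end PolRep
open PolRep

/-! The superset inclusion. -/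
theorem iota_T : ιLau (HeckeAlg.T _ _) = HeckeAlg.T LP _ := iota_gen 0
theorem iota_Tinv : ιLau (HeckeAlg.Tinv _ _) = HeckeAlg.Tinv LP _ := iota_gen 1
theorem iota_S1 : ιLau (HeckeAlg.S1 _ _) = HeckeAlg.S1 LP _ := iota_gen 2
theorem iota_S2 : ιLau (HeckeAlg.S2 _ _) = HeckeAlg.S2 LP _ := iota_gen 3
theorem iota_q : ιLau (algebraMap (Polynomial ℤ) HPoly Polynomial.X) = qLau := by
  rw [iota_alg]; unfold structZq qLau; simp

theorem central_of_ta {z : HPoly} (ht : z * HeckeAlg.T _ _ = HeckeAlg.T _ _ * z)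
    (ha : z * HeckeAlg.S1 _ _ = HeckeAlg.S1 _ _ * z) : z ∈ Subring.center HPoly := by
  apply HeckeAlg.central_of
  intro i
  fin_cases i
  · exact ht
  · exact comm_inv (HeckeAlg.T_mul_Tinv _ _) (HeckeAlg.Tinv_mul_T _ _) ht
  · exact ha
  · exact comm_b_of HPoly_triple ht ha

theorem sigma3_eq : YLau 0 * YLau 1 * YLau 2 = HeckeAlg.T LP _ ^ 3 := HLau_inv.Y012

theorem qs1_mem : qLau * (YLau 0 + YLau 1 + YLau 2) ∈ (Subring.center HPoly).map ιLau := by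
  refine ⟨zOne (algebraMap (Polynomial ℤ) HPoly Polynomial.X) (HeckeAlg.T _ _) (HeckeAlg.S1 _ _) (HeckeAlg.S2 _ _)
    (HeckeAlg.T _ _ * HeckeAlg.S1 _ _ * HeckeAlg.Tinv _ _),
    central_of_ta HPoly_triple.zOne_t HPoly_triple.zOne_a, ?_⟩
  refine Eq.trans ?_ HLau_inv.sig1.symm
  unfold zOne
  simp only [map_mul, map_add, map_sub, map_one, map_pow, iota_T, iota_Tinv, iota_S1, iota_S2, iota_q]

theorem qs2_mem : qLau * (YLau 0 * YLau 1 + YLau 1 * YLau 2 + YLau 0 * YLau 2) ∈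
    (Subring.center HPoly).map ιLau := by
  refine ⟨zTwo (algebraMap (Polynomial ℤ) HPoly Polynomial.X) (HeckeAlg.T _ _) (HeckeAlg.S1 _ _) (HeckeAlg.S2 _ _)
    (HeckeAlg.T _ _ * HeckeAlg.S1 _ _ * HeckeAlg.Tinv _ _),
    central_of_ta HPoly_triple.zTwo_t HPoly_triple.zTwo_a, ?_⟩
  refine Eq.trans ?_ HLau_inv.sig2.symm
  unfold zTwo
  simp only [map_mul, map_add, map_sub, map_one, map_pow, iota_T, iota_Tinv, iota_S1, iota_S2, iota_q]

theorem T3_mem : HeckeAlg.T (Polynomial ℤ) Polynomial.X ^ 3 ∈ Subring.center HPoly :=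
  central_of_ta (by rw [← pow_succ, ← pow_succ']) (HeckeAlg.T3_mul_S1 _ _)

theorem w_eq {w : HLau}
    (hw : (YLau 0 * YLau 1 * YLau 2) * w = 1 ∧ w * (YLau 0 * YLau 1 * YLau 2) = 1) :
    w = HeckeAlg.Tinv LP _ ^ 3 := by
  rw [sigma3_eq] at hw
  have h : HeckeAlg.T LP _ ^ 3 * HeckeAlg.Tinv LP (LaurentPolynomial.T 1) ^ 3 = 1 := by
    have := HeckeAlg.T_mul_Tinv LP (LaurentPolynomial.T 1)
    simp only [pow_succ, pow_zero, one_mul, mul_assoc, ra this, this]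
  calc w = w * (HeckeAlg.T LP _ ^ 3 * HeckeAlg.Tinv LP (LaurentPolynomial.T 1) ^ 3) := by
        rw [h, mul_one]
    _ = _ := by rw [← mul_assoc, hw.2, one_mul]

theorem Tinv3_mem : HeckeAlg.Tinv (Polynomial ℤ) Polynomial.X ^ 3 ∈ Subring.center HPoly := by
  have h1 : HeckeAlg.T (Polynomial ℤ) Polynomial.X ^ 3 *
      HeckeAlg.Tinv (Polynomial ℤ) Polynomial.X ^ 3 = 1 := by
    have := HeckeAlg.T_mul_Tinv (Polynomial ℤ) Polynomial.X
    simp only [pow_succ, pow_zero, one_mul, mul_assoc, ra this, this]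
  have h2 : HeckeAlg.Tinv (Polynomial ℤ) Polynomial.X ^ 3 *
      HeckeAlg.T (Polynomial ℤ) Polynomial.X ^ 3 = 1 := by
    have := HeckeAlg.Tinv_mul_T (Polynomial ℤ) Polynomial.X
    simp only [pow_succ, pow_zero, one_mul, mul_assoc, ra this, this]
  rw [Subring.mem_center_iff]
  intro g
  exact comm_inv h1 h2 (Subring.mem_center_iff.mp T3_mem g)

/-- The generating set. -/
def genSet (w : HLau) : Set HLau :=
  ({YLau 0 * YLau 1 * YLau 2, w,
         qLau * (YLau 0 + YLau 1 + YLau 2),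
         qLau * (YLau 0 * YLau 1 + YLau 1 * YLau 2 + YLau 0 * YLau 2)} : Set HLau) ∪
        Set.range structZq

theorem closure_le_map {w : HLau}
    (hw : (YLau 0 * YLau 1 * YLau 2) * w = 1 ∧ w * (YLau 0 * YLau 1 * YLau 2) = 1) :
    Subring.closure (genSet w) ≤ (Subring.center HPoly).map ιLau := by
  rw [Subring.closure_le]
  rintro x ((rfl | rfl | rfl | rfl) | ⟨c, rfl⟩)
  · exact ⟨_, T3_mem, by rw [sigma3_eq, map_pow, iota_T]⟩
  · exact ⟨_, Tinv3_mem, by rw [w_eq hw, map_pow, iota_Tinv]⟩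
  · exact qs1_mem
  · exact qs2_mem
  · refine ⟨algebraMap _ _ c, ?_, iota_alg c⟩
    apply HeckeAlg.central_of
    intro i; exact Algebra.commutes c _

theorem iota_central {z : HPoly} (hz : z ∈ Subring.center HPoly) : ιLau z ∈ Subring.center HLau := by
  apply HeckeAlg.central_of
  intro i
  rw [← iota_gen, ← map_mul, ← map_mul, Subring.mem_center_iff.mp hz]
end partD

section partE
/-! Existence of the polynomial representation. -/
abbrev MP := MvPolynomial (Fin 3) LP
abbrev KF := FractionRing MP

noncomputable def permPre (e : Fin 3 ≃ Fin 3) : MP →ₐ[LP] KF :=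
  (Algebra.algHom LP MP KF).comp (MvPolynomial.rename e)

theorem permPre_inj (e : Fin 3 ≃ Fin 3) : Function.Injective (permPre e) :=
  (IsFractionRing.injective MP KF).comp (MvPolynomial.rename_injective _ e.injective)

noncomputable def permF (e : Fin 3 ≃ Fin 3) : KF →ₐ[LP] KF :=
  IsFractionRing.liftAlgHom (permPre_inj e)

noncomputable def yK (i : Fin 3) : KF := algebraMap MP KF (MvPolynomial.X i)

theorem permF_y (e : Fin 3 ≃ Fin 3) (i : Fin 3) : permF e (yK i) = yK (e i) := by
  unfold permF yK
  have := IsFractionRing.liftAlgHom_apply (K := KF) (permPre_inj e)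
    (x := algebraMap MP KF (MvPolynomial.X i))
  rw [this]
  refine (IsFractionRing.lift_algebraMap _ _).trans ?_
  change algebraMap MP KF (MvPolynomial.rename e (MvPolynomial.X i)) = _
  rw [MvPolynomial.rename_X]

theorem KF_ext {f g : KF →ₐ[LP] KF} (h : ∀ i, f (yK i) = g (yK i)) : f = g := by
  apply IsLocalization.algHom_ext (A := MP) (nonZeroDivisors MP)
  apply MvPolynomial.algHom_ext
  exact h

noncomputable def stdRep : PolRep KF where
  y0 := yK 0
  y1 := yK 1
  y2 := yK 2
  indep := by
    have : MvPolynomial.aeval (R := LP) ![yK 0, yK 1, yK 2] = Algebra.algHom LP MP KF := by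
      apply MvPolynomial.algHom_ext
      intro i
      rw [MvPolynomial.aeval_X]
      fin_cases i <;> rfl
    rw [this]; exact IsFractionRing.injective MP KF
  s1 := permF (Equiv.swap 0 1)
  s2 := permF (Equiv.swap 1 2)
  s1y0 := by rw [permF_y]; rfl
  s1y1 := by rw [permF_y]; rfl
  s1y2 := by rw [permF_y]; rfl
  s2y0 := by rw [permF_y]; rfl
  s2y1 := by rw [permF_y]; rfl
  s2y2 := by rw [permF_y]; rfl
  s1s1 f := by
    have : (permF (Equiv.swap 0 1)).comp (permF (Equiv.swap 0 1)) = AlgHom.id LP KF :=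
      KF_ext fun i => by simp only [AlgHom.comp_apply, permF_y, AlgHom.id_apply, Equiv.swap_apply_self]
    exact DFunLike.congr_fun this f
  s2s2 f := by
    have : (permF (Equiv.swap 1 2)).comp (permF (Equiv.swap 1 2)) = AlgHom.id LP KF :=
      KF_ext fun i => by simp only [AlgHom.comp_apply, permF_y, AlgHom.id_apply, Equiv.swap_apply_self]
    exact DFunLike.congr_fun this f
  braid f := by
    have : (permF (Equiv.swap 0 1)).comp ((permF (Equiv.swap 1 2)).comp (permF (Equiv.swap 0 1))) =
        (permF (Equiv.swap 1 2)).comp ((permF (Equiv.swap 0 1)).comp (permF (Equiv.swap 1 2))) :=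
      KF_ext fun i => by
        simp only [AlgHom.comp_apply, permF_y]
        congr 1
        revert i; decide
    exact DFunLike.congr_fun this f
end partE

section partG
open PolRep
/-! The Bernstein basis spans, and faithfulness on central elements. -/

theorem bern_theta {A : Type*} [Ring A] {q qi a y y' : A} (qc : ∀ x, q * x = x * q)
    (qic : ∀ x, qi * x = x * qi) (qqi : q * qi = 1) (qa : a * a = q * a - a + q)
    (e1 : a * y * a = q * y') :
    (a + 1) * y = y' * (a + 1) + (y - q * y') ∧ (a + 1) * y' = y * (a + 1) - (y - q * y') := by
  have qiq : qi * q = 1 := by rw [qic, qqi]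
  have i := inv_of_quad qc qic qqi qa
  have h1 : a * y = y' * (a - q + 1) := by
    calc a * y = (a * y * a) * (qi * (a - q + 1)) := by rw [mul_assoc, i.1, mul_one]
      _ = y' * (a - q + 1) := by
        rw [e1, qc, mul_assoc, ← mul_assoc q, qqi, one_mul]
  have h2 : a * y' = (q - 1) * y' + y * a := by
    have : q * (a * y') = q * ((q - 1) * y' + y * a) := by
      calc q * (a * y') = a * (q * y') := by rw [← mul_assoc, qc, mul_assoc]
        _ = (a * a) * (y * a) := by rw [← e1]; simp only [mul_assoc]
        _ = _ := by
          rw [qa, add_mul, sub_mul, mul_assoc, ← mul_assoc a, e1]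
          have := qc q
          noncomm_ring
    calc a * y' = qi * (q * (a * y')) := by rw [← mul_assoc, qiq, one_mul]
      _ = _ := by rw [this, ← mul_assoc, qiq, one_mul]
  have h3 := qc y'
  constructor
  · rw [add_mul, h1, one_mul, h3]; noncomm_ring
  · rw [add_mul, h2, one_mul]; noncomm_ring

theorem Y_comm : ∀ i j, YLau i * YLau j = YLau j * YLau i := by
  have h01 : YLau 0 * YLau 1 = YLau 1 * YLau 0 := HLau_inv.c01
  have h02 : YLau 0 * YLau 2 = YLau 2 * YLau 0 := HLau_inv.c02
  have h12 : YLau 1 * YLau 2 = YLau 2 * YLau 1 := HLau_inv.c12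
  intro i j
  fin_cases i <;> fin_cases j <;> first | rfl | assumption | (symm; assumption)

noncomputable abbrev BY : Subalgebra LP HLau := Algebra.adjoin LP (Set.range YLau)
noncomputable instance BYcomm : CommSemiring BY :=
  { (inferInstance : Semiring BY) with
    mul_comm := by
      have := Algebra.isMulCommutative_adjoin LP (s := Set.range YLau)
        (by rintro _ ⟨i, rfl⟩ _ ⟨j, rfl⟩; exact Y_comm i j)
      exact fun a b => this.1.1 a b }

noncomputable def Phi : MP →ₐ[LP] HLau :=
  BY.val.comp (MvPolynomial.aeval (fun i => (⟨YLau i, Algebra.subset_adjoin ⟨i, rfl⟩⟩ : BY)))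

theorem Phi_X (i : Fin 3) : Phi (MvPolynomial.X i) = YLau i := by
  unfold Phi
  rw [AlgHom.comp_apply, MvPolynomial.aeval_X]; rfl

theorem Phi_C (c : LP) : Phi (MvPolynomial.C c) = algebraMap LP HLau c := Phi.commutes c

theorem Phi_q : Phi (MvPolynomial.C (LaurentPolynomial.T 1)) = qLau := Phi.commutes _
theorem Phi_qi : Phi (MvPolynomial.C (LaurentPolynomial.T (-1))) = qLauInv := Phi.commutes _

noncomputable def tA : HLau := HeckeAlg.S1 LP _ + 1
noncomputable def tB : HLau := HeckeAlg.S2 LP _ + 1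
noncomputable def tC : HLau := tA * (tB * tA) - qLau * tA

theorem tA_Y : tA * YLau 0 = YLau 1 * tA + (YLau 0 - qLau * YLau 1) ∧
    tA * YLau 1 = YLau 0 * tA - (YLau 0 - qLau * YLau 1) ∧ tA * YLau 2 = YLau 2 * tA := by
  have h := bern_theta HLau_inv.qc HLau_inv.qic HLau_inv.qqi HLau_inv.qa (y := YLau 0)
    (y' := YLau 1) HLau_inv.L1
  refine ⟨h.1, h.2, ?_⟩
  have : HeckeAlg.S1 LP _ * YLau 2 = YLau 2 * HeckeAlg.S1 LP _ := HLau_inv.L4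
  unfold tA; rw [add_mul, this, mul_add, one_mul, mul_one]

theorem tB_Y : tB * YLau 1 = YLau 2 * tB + (YLau 1 - qLau * YLau 2) ∧
    tB * YLau 2 = YLau 1 * tB - (YLau 1 - qLau * YLau 2) ∧ tB * YLau 0 = YLau 0 * tB := by
  have h := bern_theta HLau_inv.qc HLau_inv.qic HLau_inv.qqi HLau_inv.qb (y := YLau 1)
    (y' := YLau 2) HLau_inv.L2
  refine ⟨h.1, h.2, ?_⟩
  have : HeckeAlg.S2 LP _ * YLau 0 = YLau 0 * HeckeAlg.S2 LP _ := HLau_inv.L3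
  unfold tB; rw [add_mul, this, mul_add, one_mul, mul_one]

theorem Phi_push {t : HLau} (h : ∀ i, ∃ p r : MP, t * YLau i = Phi p * t + Phi r) (f : MP) :
    ∃ p r : MP, t * Phi f = Phi p * t + Phi r := by
  induction f using MvPolynomial.induction_on with
  | C c => exact ⟨MvPolynomial.C c, 0, by rw [Phi_C, map_zero, add_zero, Algebra.commutes]⟩
  | add f g hf hg =>
    obtain ⟨p, r, h1⟩ := hf
    obtain ⟨p', r', h2⟩ := hg
    exact ⟨p + p', r + r', by simp only [map_add, mul_add, h1, h2, add_mul]; abel⟩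
  | mul_X f i hf =>
    obtain ⟨p, r, h1⟩ := hf
    obtain ⟨p', r', h2⟩ := h i
    refine ⟨p * p', p * r' + r * MvPolynomial.X i, ?_⟩
    simp only [map_add, map_mul, Phi_X]
    rw [← mul_assoc, h1, add_mul, mul_assoc, h2, mul_add, mul_assoc, add_assoc]

theorem tA_push (f : MP) : ∃ p r : MP, tA * Phi f = Phi p * tA + Phi r := by
  refine Phi_push (fun i => ?_) f
  obtain rfl | rfl | rfl : i = 0 ∨ i = 1 ∨ i = 2 := by fin_cases i <;> simp
  · exact ⟨MvPolynomial.X 1, MvPolynomial.X 0 - MvPolynomial.C (LaurentPolynomial.T 1) *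
      MvPolynomial.X 1, by simpa only [map_sub, map_mul, Phi_X, Phi_q] using tA_Y.1⟩
  · exact ⟨MvPolynomial.X 0, -(MvPolynomial.X 0 - MvPolynomial.C (LaurentPolynomial.T 1) *
      MvPolynomial.X 1), by
        rw [map_neg, ← sub_eq_add_neg]; simpa only [map_neg, map_sub, map_mul, Phi_X, Phi_q] using tA_Y.2.1⟩
  · exact ⟨MvPolynomial.X 2, 0, by
        simpa only [map_zero, Phi_X, add_zero] using tA_Y.2.2⟩

theorem tB_push (f : MP) : ∃ p r : MP, tB * Phi f = Phi p * tB + Phi r := by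
  refine Phi_push (fun i => ?_) f
  obtain rfl | rfl | rfl : i = 0 ∨ i = 1 ∨ i = 2 := by fin_cases i <;> simp
  · exact ⟨MvPolynomial.X 0, 0, by
        simpa only [map_zero, Phi_X, add_zero] using tB_Y.2.2⟩
  · exact ⟨MvPolynomial.X 2, MvPolynomial.X 1 - MvPolynomial.C (LaurentPolynomial.T 1) *
      MvPolynomial.X 2, by simpa only [map_sub, map_mul, Phi_X, Phi_q] using tB_Y.1⟩
  · exact ⟨MvPolynomial.X 1, -(MvPolynomial.X 1 - MvPolynomial.C (LaurentPolynomial.T 1) *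
      MvPolynomial.X 2), by
        rw [map_neg, ← sub_eq_add_neg]; simpa only [map_neg, map_sub, map_mul, Phi_X, Phi_q] using tB_Y.2.1⟩

noncomputable def bas : Fin 6 → HLau := ![1, tA, tB, tB * tA, tA * tB, tC]

def InV (x : HLau) : Prop := ∃ p : Fin 6 → MP, x = ∑ i, Phi (p i) * bas i

theorem InV.add {x y : HLau} (hx : InV x) (hy : InV y) : InV (x + y) := by
  obtain ⟨p, rfl⟩ := hx
  obtain ⟨r, rfl⟩ := hy
  exact ⟨p + r, by simp only [Pi.add_apply, map_add, add_mul, Finset.sum_add_distrib]⟩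

theorem InV.phi {x : HLau} (hx : InV x) (r : MP) : InV (Phi r * x) := by
  obtain ⟨p, rfl⟩ := hx
  exact ⟨fun i => r * p i, by simp only [Finset.mul_sum, map_mul, mul_assoc]⟩

theorem InV.zero : InV 0 := ⟨0, by simp⟩
theorem InV.bas (i : Fin 6) : InV (bas i) := by
  refine ⟨Pi.single i 1, ?_⟩
  rw [Finset.sum_eq_single i]
  · simp
  · intro j _ hj; simp [hj]
  · simp

theorem InV.alg {x : HLau} (hx : InV x) (c : LP) : InV (algebraMap LP HLau c * x) := by
  rw [← Phi_C]; exact hx.phi _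
theorem InV.neg {x : HLau} (hx : InV x) : InV (-x) := by
  have := hx.phi (-1); rw [map_neg, map_one] at this; convert this using 1; exact (neg_one_mul x).symm
theorem InV.sub {x y : HLau} (hx : InV x) (hy : InV y) : InV (x - y) := by
  rw [sub_eq_add_neg]; exact hx.add hy.neg

theorem InV.sum {f : Fin 6 → HLau} (h : ∀ i, InV (f i)) : InV (∑ i, f i) :=
  Finset.sum_induction f InV (fun _ _ => InV.add) InV.zero (fun i _ => h i)

theorem InV.push {t : HLau} (h : ∀ f : MP, ∃ p r : MP, t * Phi f = Phi p * t + Phi r)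
    (hb : ∀ i, InV (t * _root_.bas i)) {x : HLau} (hx : InV x) : InV (t * x) := by
  obtain ⟨p, rfl⟩ := hx
  rw [Finset.mul_sum]
  apply InV.sum
  intro i
  obtain ⟨u, v, huv⟩ := h (p i)
  rw [← mul_assoc, huv, add_mul, mul_assoc]
  exact ((hb i).phi u).add ((InV.bas i).phi v)

theorem theta_sq {A : Type*} [Ring A] {q a : A} (qc : ∀ x, q * x = x * q)
    (h : a * a = q * a - a + q) : (a + 1) * (a + 1) = (q + 1) * (a + 1) := by
  rw [add_mul, mul_add, h]; noncomm_ring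

theorem tA_sq : tA * tA = (qLau + 1) * tA := theta_sq HLau_inv.qc HLau_inv.qa
theorem tB_sq : tB * tB = (qLau + 1) * tB := theta_sq HLau_inv.qc HLau_inv.qb

theorem theta_braid {A : Type*} [Ring A] {q a b : A} (qc : ∀ x, q * x = x * q)
    (h : a * a = q * a - a + q) (h' : b * b = q * b - b + q) (ab : a * (b * a) = b * (a * b)) :
    (a + 1) * ((b + 1) * (a + 1)) - q * (a + 1) = (b + 1) * ((a + 1) * (b + 1)) - q * (b + 1) := by
  simp only [add_mul, mul_add, one_mul, mul_one, h, h', ab]; abel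

theorem tC_eq : tC = tB * (tA * tB) - qLau * tB :=
  theta_braid HLau_inv.qc HLau_inv.qa HLau_inv.qb HLau_inv.ab

theorem theta_C {A : Type*} [Ring A] {q a b : A} (qc : ∀ x, q * x = x * q)
    (h : a * a = (q + 1) * a) :
    a * (a * (b * a) - q * a) = (q + 1) * (a * (b * a) - q * a) := by
  have : a * (q * a) = q * (a * a) := by rw [← mul_assoc, ← qc, mul_assoc]
  rw [mul_sub, ← mul_assoc, h, this, h, mul_sub, mul_assoc]
  congr 1
  noncomm_ring

theorem tA_tC : tA * tC = (qLau + 1) * tC := theta_C HLau_inv.qc tA_sq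
theorem tB_tC : tB * tC = (qLau + 1) * tC := by
  rw [tC_eq]; exact theta_C HLau_inv.qc tB_sq

theorem InV.q {x : HLau} (hx : InV x) : InV (qLau * x) := hx.alg _
theorem InV.q1 {x : HLau} (hx : InV x) : InV ((qLau + 1) * x) := by
  rw [add_mul, one_mul]; exact hx.q.add hx

theorem InV.tA {x : HLau} (hx : InV x) : InV (tA * x) := by
  refine InV.push tA_push (fun i => ?_) hx
  fin_cases i
  · change InV (_root_.tA * 1); rw [mul_one]; exact InV.bas 1
  · change InV (_root_.tA * _root_.tA); rw [tA_sq]; exact (InV.bas 1).q1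
  · exact InV.bas 4
  · change InV (_root_.tA * (tB * _root_.tA))
    have : _root_.tA * (tB * _root_.tA) = tC + qLau * _root_.tA := by unfold tC; abel
    rw [this]; exact (InV.bas 5).add (InV.bas 1).q
  · change InV (_root_.tA * (_root_.tA * tB))
    rw [← mul_assoc, tA_sq, mul_assoc]; exact (InV.bas 4).q1
  · change InV (_root_.tA * tC)
    rw [tA_tC]; exact (InV.bas 5).q1

theorem InV.tB {x : HLau} (hx : InV x) : InV (tB * x) := by
  refine InV.push tB_push (fun i => ?_) hx
  fin_cases i
  · change InV (_root_.tB * 1); rw [mul_one]; exact InV.bas 2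
  · exact InV.bas 3
  · change InV (_root_.tB * _root_.tB); rw [tB_sq]; exact (InV.bas 2).q1
  · change InV (_root_.tB * (_root_.tB * _root_.tA))
    rw [← mul_assoc, tB_sq, mul_assoc]; exact (InV.bas 3).q1
  · change InV (_root_.tB * (_root_.tA * _root_.tB))
    have : _root_.tB * (_root_.tA * _root_.tB) = tC + qLau * _root_.tB := by rw [tC_eq]; abel
    rw [this]; exact (InV.bas 5).add (InV.bas 2).q
  · change InV (_root_.tB * tC)
    rw [tB_tC]; exact (InV.bas 5).q1

theorem InV.S1 {x : HLau} (hx : InV x) : InV (HeckeAlg.S1 LP _ * x) := by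
  have : HeckeAlg.S1 LP _ * x = _root_.tA * x - x := by unfold _root_.tA; rw [add_mul]; simp
  rw [this]; exact hx.tA.sub hx
theorem InV.S2 {x : HLau} (hx : InV x) : InV (HeckeAlg.S2 LP _ * x) := by
  have : HeckeAlg.S2 LP _ * x = _root_.tB * x - x := by unfold _root_.tB; rw [add_mul]; simp
  rw [this]; exact hx.tB.sub hx
theorem InV.S1i {x : HLau} (hx : InV x) :
    InV (HeckeAlg.S1i LP _ (LaurentPolynomial.T (-1)) * x) := by
  unfold HeckeAlg.S1i
  rw [mul_assoc, add_mul, sub_mul, one_mul]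
  exact ((hx.S1.sub (hx.alg _)).add hx).alg _
theorem InV.S2i {x : HLau} (hx : InV x) :
    InV (HeckeAlg.S2i LP _ (LaurentPolynomial.T (-1)) * x) := by
  unfold HeckeAlg.S2i
  rw [mul_assoc, add_mul, sub_mul, one_mul]
  exact ((hx.S2.sub (hx.alg _)).add hx).alg _

theorem T_eq : HeckeAlg.T LP _ = qLau * YLau 2 * HeckeAlg.S2i LP _ (LaurentPolynomial.T (-1)) *
    HeckeAlg.S1i LP _ (LaurentPolynomial.T (-1)) := HLau_inv.teq

theorem InV.T {x : HLau} (hx : InV x) : InV (HeckeAlg.T LP _ * x) := by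
  rw [T_eq]
  simp only [mul_assoc]
  rw [← Phi_X]
  exact (hx.S1i.S2i.phi _).q

theorem T3_central (x : HLau) : HeckeAlg.T LP (LaurentPolynomial.T 1) ^ 3 * x =
    x * HeckeAlg.T LP (LaurentPolynomial.T 1) ^ 3 := by
  have := iota_central T3_mem
  rw [map_pow, iota_T] at this
  exact (Subring.mem_center_iff.mp this x).symm

theorem InV.Tpow {x : HLau} (hx : InV x) (n : ℕ) : InV ((HeckeAlg.T LP _ ^ 3) ^ n * x) := by
  induction n with
  | zero => simpa
  | succ n ih =>
    rw [pow_succ', mul_assoc]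
    have := ih.T.T.T
    simpa only [pow_succ, pow_zero, one_mul, mul_assoc] using this

def InW (x : HLau) : Prop := ∃ n : ℕ, InV ((HeckeAlg.T LP _ ^ 3) ^ n * x)

theorem T3n_central (n : ℕ) (x : HLau) : (HeckeAlg.T LP (LaurentPolynomial.T 1) ^ 3) ^ n * x =
    x * (HeckeAlg.T LP (LaurentPolynomial.T 1) ^ 3) ^ n :=
  (Commute.pow_left (T3_central x) n)

theorem InW.add {x y : HLau} (hx : InW x) (hy : InW y) : InW (x + y) := by
  obtain ⟨n, h⟩ := hx
  obtain ⟨m, h'⟩ := hy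
  refine ⟨n + m, ?_⟩
  rw [mul_add]
  refine InV.add ?_ ?_
  · rw [add_comm, pow_add, mul_assoc]; exact h.Tpow m
  · rw [pow_add, mul_assoc]; exact h'.Tpow n

theorem InW.of {x y : HLau} (h : ∀ z, InV z → InV (x * z)) (hy : InW y) : InW (x * y) := by
  obtain ⟨n, h'⟩ := hy
  refine ⟨n, ?_⟩
  rw [← mul_assoc, T3n_central, mul_assoc]; exact h _ h'

theorem InW.Tinv {y : HLau} (hy : InW y) : InW (HeckeAlg.Tinv LP _ * y) := by
  obtain ⟨n, h⟩ := hy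
  refine ⟨n + 1, ?_⟩
  have e : HeckeAlg.T LP (LaurentPolynomial.T 1) ^ 3 * HeckeAlg.Tinv LP _ =
      HeckeAlg.T LP _ * HeckeAlg.T LP _ := by
    have := HeckeAlg.T_mul_Tinv LP (LaurentPolynomial.T 1)
    simp only [pow_succ, pow_zero, one_mul, mul_assoc, this, mul_one]
  rw [pow_succ, mul_assoc, ← mul_assoc _ _ y, e, ← mul_assoc, T3n_central, mul_assoc, mul_assoc]
  exact h.T.T

def WSub : Subalgebra LP HLau where
  carrier := {x | ∀ y, InW y → InW (x * y)}
  mul_mem' {a b} ha hb y hy := by rw [mul_assoc]; exact ha _ (hb _ hy)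
  add_mem' {a b} ha hb y hy := by rw [add_mul]; exact (ha _ hy).add (hb _ hy)
  algebraMap_mem' c y hy := InW.of (fun z hz => hz.alg c) hy

theorem InW.all (x : HLau) : InW x := by
  have h := HeckeAlg.ind WSub (fun i => by
    intro y hy
    fin_cases i
    · exact InW.of (fun z hz => hz.T) hy
    · exact hy.Tinv
    · exact InW.of (fun z hz => hz.S1) hy
    · exact InW.of (fun z hz => hz.S2) hy) x
  have := h 1 ⟨0, by rw [pow_zero, one_mul]; exact InV.bas 0⟩
  simpa using this
end partG

section partK
open PolRep

namespace PolRep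
variable {F : Type} [Field F] [Algebra LP F] (P : PolRep F)

theorem mu_add (f g : F) : (mu (f + g) : Module.End LP F) = mu f + mu g := by
  ext x; simp [mu_apply, add_mul]

noncomputable def ev : MP →ₐ[LP] F := MvPolynomial.aeval ![P.y0, P.y1, P.y2]

theorem rho_Phi (f : MP) : P.rho (Phi f) = mu (P.ev f) := by
  induction f using MvPolynomial.induction_on with
  | C c =>
    rw [Phi_C, rho_alg]
    congr 1
    exact (P.ev.commutes c).symm
  | add f g hf hg => simp only [map_add, hf, hg, mu_add]
  | mul_X f i hf =>
    have : P.rho (YLau i) = mu (P.ev (MvPolynomial.X i)) := by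
      have h := P.rho_Y
      unfold ev
      rw [MvPolynomial.aeval_X]
      fin_cases i
      · exact h.1
      · exact h.2.1
      · exact h.2.2
    simp only [map_mul, hf, mu_mul, Phi_X, this]

theorem rho_tA : P.rho tA = P.th1 := by
  unfold tA; rw [map_add, rho_S1, map_one]; unfold oS1; abel
theorem rho_tB : P.rho tB = P.th2 := by
  unfold tB; rw [map_add, rho_S2, map_one]; unfold oS2; abel

theorem th1_of {f : F} (g : F) (h : f - P.s1 f = (P.y0 - P.y1) * g) :
    P.th1 f = (P.y0 - q * P.y1) * g := by
  have := P.d01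
  rw [th1_apply, h]; field_simp
theorem th2_of {f : F} (g : F) (h : f - P.s2 f = (P.y1 - P.y2) * g) :
    P.th2 f = (P.y1 - q * P.y2) * g := by
  have := P.d12
  rw [th2_apply, h]; field_simp

/-- Expansion of the action of an element of `V`. -/
theorem rho_V (p : Fin 6 → MP) (f : F) : P.rho (∑ i, Phi (p i) * bas i) f =
    P.ev (p 0) * f + P.ev (p 1) * P.th1 f + P.ev (p 2) * P.th2 f
    + P.ev (p 3) * P.th2 (P.th1 f) + P.ev (p 4) * P.th1 (P.th2 f)
    + P.ev (p 5) * (P.th1 (P.th2 (P.th1 f)) - q * P.th1 f) := by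
  have b0 : bas 0 = 1 := rfl
  have b1 : bas 1 = tA := rfl
  have b2 : bas 2 = tB := rfl
  have b3 : bas 3 = tB * tA := rfl
  have b4 : bas 4 = tA * tB := rfl
  have b5 : bas 5 = tA * (tB * tA) - qLau * tA := rfl
  simp only [Fin.sum_univ_six, b0, b1, b2, b3, b4, b5, map_add, map_mul, map_sub, map_one, rho_Phi,
    rho_tA, rho_tB, rho_q, LinearMap.add_apply, LinearMap.sub_apply, Module.End.mul_apply,
    mu_apply, Module.End.one_apply]
  ring

theorem coeffs_zero (p : Fin 6 → MP)
    (h : ∀ g : HLau, P.rho (∑ i, Phi (p i) * bas i) (P.rho g 1) = 0) : ∀ i, p i = 0 := by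
  have key : ∀ f : MP, P.rho (∑ i, Phi (p i) * bas i) (P.ev f) = 0 := by
    intro f
    have := h (Phi f)
    rwa [rho_Phi, mu_apply, mul_one] at this
  have hy0 : P.ev (MvPolynomial.X 0) = P.y0 := by unfold ev; rw [MvPolynomial.aeval_X]; rfl
  have hy1 : P.ev (MvPolynomial.X 1) = P.y1 := by unfold ev; rw [MvPolynomial.aeval_X]; rfl
  have hy2 : P.ev (MvPolynomial.X 2) = P.y2 := by unfold ev; rw [MvPolynomial.aeval_X]; rfl
  have k0 := key 1
  have k1 := key (MvPolynomial.X 0)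
  have k2 := key (MvPolynomial.X 0 ^ 2)
  have k3 := key (MvPolynomial.X 2)
  have k4 := key (MvPolynomial.X 2 ^ 2)
  have k5 := key (MvPolynomial.X 0 ^ 2 * MvPolynomial.X 1)
  rw [rho_V] at k0 k1 k2 k3 k4 k5
  simp only [map_mul, map_pow, map_one, hy0, hy1, hy2] at k0 k1 k2 k3 k4 k5
  have c1 := P.c01
  have c2 := P.c12
  have c3 := P.c02
  have e1 : P.th1 1 = 0 := by rw [th1_apply, map_one]; ring
  have e2 : P.th2 1 = 0 := by rw [th2_apply, map_one]; ring
  have z0 : P.ev (p 0) = 0 := by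
    simpa only [e1, e2, map_zero, mul_zero, add_zero, sub_zero, mul_one] using k0
  rw [z0] at k1 k2 k3 k4 k5
  have a1 := P.th1_of (f := P.y0) 1 (by rw [P.s1y0]; ring)
  have a2 := P.th2_of (f := P.y0) 0 (by rw [P.s2y0]; ring)
  have a3 := P.th2_of (f := (P.y0 - q * P.y1) * 1) (-q) (by
    simp only [map_mul, map_sub, map_one, P.s2y0, P.s2y1, P.s2q]; ring)
  have a4 := P.th1_of (f := (P.y1 - q * P.y2) * (-q)) q (by
    simp only [map_mul, map_sub, map_neg, P.s1y1, P.s1y2, P.s1q]; ring)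
  rw [a1, a2, a3, a4, mul_zero, map_zero] at k1
  have b1 := P.th1_of (f := P.y0 ^ 2) (P.y0 + P.y1) (by rw [map_pow, P.s1y0]; ring)
  have b2 := P.th2_of (f := P.y0 ^ 2) 0 (by rw [map_pow, P.s2y0]; ring)
  have b3 := P.th2_of (f := (P.y0 - q * P.y1) * (P.y0 + P.y1))
    ((1 - q) * P.y0 - q * P.y1 - q * P.y2) (by
    simp only [map_mul, map_sub, map_add, map_one, P.s2y0, P.s2y1, P.s2q]; ring)
  have b4 := P.th1_of (f := (P.y1 - q * P.y2) * ((1 - q) * P.y0 - q * P.y1 - q * P.y2))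
    (q * (P.y0 + P.y1)) (by
    simp only [map_mul, map_sub, map_neg, map_one, P.s1y0, P.s1y1, P.s1y2, P.s1q]; ring)
  rw [b1, b2, b3, b4, mul_zero, map_zero] at k2
  have d1 := P.th1_of (f := P.y2) 0 (by rw [P.s1y2]; ring)
  have d2 := P.th2_of (f := P.y2) (-1) (by rw [P.s2y2]; ring)
  have d3 := P.th1_of (f := (P.y1 - q * P.y2) * (-1)) 1 (by
    simp only [map_mul, map_sub, map_neg, map_one, P.s1y1, P.s1y2, P.s1q]; ring)
  rw [d1, d2, d3, mul_zero, map_zero, map_zero] at k3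
  have f1 := P.th1_of (f := P.y2 ^ 2) 0 (by rw [map_pow, P.s1y2]; ring)
  have f2 := P.th2_of (f := P.y2 ^ 2) (-(P.y1 + P.y2)) (by rw [map_pow, P.s2y2]; ring)
  have f3 := P.th1_of (f := (P.y1 - q * P.y2) * (-(P.y1 + P.y2)))
    (P.y0 + P.y1 + (1 - q) * P.y2) (by
    simp only [map_mul, map_sub, map_add, map_neg, map_one, P.s1y1, P.s1y2, P.s1q]; ring)
  rw [f1, f2, f3, mul_zero, map_zero, map_zero] at k4
  have g1 := P.th1_of (f := P.y0 ^ 2 * P.y1) (P.y0 * P.y1) (by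
    simp only [map_mul, map_pow, P.s1y0, P.s1y1]; ring)
  have g2 := P.th2_of (f := (P.y0 - q * P.y1) * (P.y0 * P.y1))
    (P.y0 ^ 2 - q * P.y0 * (P.y1 + P.y2)) (by
    simp only [map_mul, map_sub, P.s2y0, P.s2y1, P.s2q]; ring)
  have g3 := P.th1_of (f := (P.y1 - q * P.y2) * (P.y0 ^ 2 - q * P.y0 * (P.y1 + P.y2)))
    ((1 + q) * (P.y0 * P.y1) - q * P.y2 * (P.y0 + P.y1) + q ^ 2 * P.y2 ^ 2) (by
    simp only [map_mul, map_sub, map_add, map_pow, P.s1y0, P.s1y1, P.s1y2, P.s1q]; ring)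
  rw [g1, g2, g3] at k5
  have z3 : P.ev (p 3) = 0 := by
    have : P.ev (p 3) * ((P.y1 - q * P.y2) * (P.y0 - q * P.y2)) = 0 := by
      linear_combination k2 - (P.y0 + P.y1) * k1
    exact (mul_eq_zero.mp this).resolve_right (mul_ne_zero c2 c3)
  rw [z3] at k1 k5
  have z1 : P.ev (p 1) = 0 := by
    have : P.ev (p 1) * (P.y0 - q * P.y1) = 0 := by linear_combination k1
    exact (mul_eq_zero.mp this).resolve_right c1
  have z4 : P.ev (p 4) = 0 := by
    have : P.ev (p 4) * ((P.y0 - q * P.y1) * (P.y0 - q * P.y2)) = 0 := by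
      linear_combination k4 - (P.y1 + P.y2) * k3
    exact (mul_eq_zero.mp this).resolve_right (mul_ne_zero c1 c3)
  rw [z4] at k3 k5
  have z2 : P.ev (p 2) = 0 := by
    have : P.ev (p 2) * (P.y1 - q * P.y2) = 0 := by linear_combination - k3
    exact (mul_eq_zero.mp this).resolve_right c2
  rw [z1, z2] at k5
  have z5 : P.ev (p 5) = 0 := by
    have : P.ev (p 5) * ((P.y0 - q * P.y1) * ((P.y1 - q * P.y2) * (P.y0 - q * P.y2))) = 0 := by
      linear_combination k5
    exact (mul_eq_zero.mp this).resolve_right (mul_ne_zero c1 (mul_ne_zero c2 c3))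
  have inj : ∀ f : MP, P.ev f = 0 → f = 0 := fun f hf => P.indep (by rw [map_zero]; exact hf)
  intro i
  apply inj
  fin_cases i <;> assumption

theorem faithful {x : HLau} (hx : x ∈ Subring.center HLau) (h1 : P.rho x 1 = 0) : x = 0 := by
  obtain ⟨n, p, hp⟩ := InW.all x
  have hz : ∀ i, p i = 0 := by
    apply P.coeffs_zero
    intro g
    rw [← hp]
    have : P.rho ((HeckeAlg.T LP _ ^ 3) ^ n * x) (P.rho g 1) =
        P.rho (((HeckeAlg.T LP _ ^ 3) ^ n * x) * g) 1 := by rw [map_mul P.rho _ g]; rfl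
    rw [this, mul_assoc, ← Subring.mem_center_iff.mp hx g, ← mul_assoc, map_mul, Module.End.mul_apply,
      h1, map_zero]
  have h0 : (HeckeAlg.T LP (LaurentPolynomial.T 1) ^ 3) ^ n * x = 0 := by
    rw [hp]; apply Finset.sum_eq_zero; intro i _; rw [hz, map_zero, zero_mul]
  have hu : IsUnit ((HeckeAlg.T LP (LaurentPolynomial.T 1) ^ 3) ^ n) :=
    IsUnit.pow n (IsUnit.pow 3 ⟨⟨HeckeAlg.T LP _, HeckeAlg.Tinv LP _, HeckeAlg.T_mul_Tinv _ _,
      HeckeAlg.Tinv_mul_T _ _⟩, rfl⟩)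
  exact hu.mul_right_eq_zero.mp h0
end PolRep
end partK

section partM
open PolRep

namespace PolRep
variable {F : Type} [Field F] [Algebra LP F] (P : PolRep F)

noncomputable def w3 : F := P.y0 * P.y1 * P.y2
noncomputable def z1 : F := q * (P.y0 + P.y1 + P.y2)
noncomputable def z2 : F := q * (P.y0 * P.y1 + P.y1 * P.y2 + P.y0 * P.y2)
noncomputable def polF : Polynomial ℤ →+* F := (algebraMap LP F).comp Polynomial.toLaurent

def ZF : Subring F := Subring.closure
  (({P.w3, P.w3⁻¹, P.z1, P.z2} : Set F) ∪ Set.range (polF (F := F)))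

theorem ZF_s {c : F} (hc : c ∈ P.ZF) : P.s1 c = c ∧ P.s2 c = c := by
  induction hc using Subring.closure_induction with
  | mem x hx =>
    rcases hx with (rfl | rfl | rfl | rfl) | ⟨c, rfl⟩
    · unfold w3
      simp only [map_mul, P.s1y0, P.s1y1, P.s1y2, P.s2y0, P.s2y1, P.s2y2]; constructor <;> ring
    · unfold w3
      simp only [map_inv₀, map_mul, P.s1y0, P.s1y1, P.s1y2, P.s2y0, P.s2y1, P.s2y2]
      constructor <;> congr 1 <;> ring
    · unfold z1
      simp only [map_mul, map_add, P.s1q, P.s2q, P.s1y0, P.s1y1, P.s1y2, P.s2y0, P.s2y1, P.s2y2]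
      constructor <;> ring
    · unfold z2
      simp only [map_mul, map_add, P.s1q, P.s2q, P.s1y0, P.s1y1, P.s1y2, P.s2y0, P.s2y1, P.s2y2]
      constructor <;> ring
    · exact ⟨P.s1.commutes _, P.s2.commutes _⟩
  | zero => simp
  | one => simp
  | add x y _ _ hx hy => simp only [map_add, hx.1, hy.1, hx.2, hy.2, and_self]
  | neg x _ hx => simp only [map_neg, hx.1, hx.2, and_self]
  | mul x y _ _ hx hy => simp only [map_mul, hx.1, hy.1, hx.2, hy.2, and_self]

noncomputable def wZ : P.ZF := ⟨P.w3, Subring.subset_closure (by simp)⟩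
noncomputable def wiZ : P.ZF := ⟨P.w3⁻¹, Subring.subset_closure (by simp)⟩
noncomputable def z1Z : P.ZF := ⟨P.z1, Subring.subset_closure (by simp)⟩
noncomputable def z2Z : P.ZF := ⟨P.z2, Subring.subset_closure (by simp)⟩
noncomputable def pZ (c : Polynomial ℤ) : P.ZF := ⟨polF c, Subring.subset_closure (by simp)⟩
noncomputable def qZ : P.ZF := P.pZ Polynomial.X

theorem qZ_coe : (P.qZ : F) = q := by
  change polF Polynomial.X = _
  unfold polF q; simp
theorem wZ_coe : (P.wZ : F) = P.y0 * P.y1 * P.y2 := rfl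
theorem z1Z_coe : (P.z1Z : F) = q * (P.y0 + P.y1 + P.y2) := rfl
theorem z2Z_coe : (P.z2Z : F) = q * (P.y0 * P.y1 + P.y1 * P.y2 + P.y0 * P.y2) := rfl

/-- The lattice generated by `1` under the integral Hecke algebra. -/
def InL (f : F) : Prop := ∃ c0 c1 c2 c3 c4 c5 : P.ZF, f = c0 + c1 * (q * P.y0) + c2 * (q * P.y1) +
  c3 * (q * P.y0 * P.y1) + c4 * (q * P.y0 * P.y2) + c5 * (q ^ 2 * P.y0 ^ 2 * P.y1)

variable {P}
theorem InL.add {f g : F} (hf : P.InL f) (hg : P.InL g) : P.InL (f + g) := by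
  obtain ⟨c0, c1, c2, c3, c4, c5, rfl⟩ := hf
  obtain ⟨d0, d1, d2, d3, d4, d5, rfl⟩ := hg
  exact ⟨c0 + d0, c1 + d1, c2 + d2, c3 + d3, c4 + d4, c5 + d5, by push_cast; ring⟩

theorem InL.smul {f : F} (hf : P.InL f) (c : P.ZF) : P.InL (c * f) := by
  obtain ⟨c0, c1, c2, c3, c4, c5, rfl⟩ := hf
  exact ⟨c * c0, c * c1, c * c2, c * c3, c * c4, c * c5, by push_cast; ring⟩

theorem InL.op {o : Module.End LP F} (h : ∀ (c : P.ZF) (f : F), o (c * f) = c * o f)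
    (h0 : P.InL (o 1)) (h1 : P.InL (o (q * P.y0))) (h2 : P.InL (o (q * P.y1)))
    (h3 : P.InL (o (q * P.y0 * P.y1))) (h4 : P.InL (o (q * P.y0 * P.y2)))
    (h5 : P.InL (o (q ^ 2 * P.y0 ^ 2 * P.y1))) {f : F} (hf : P.InL f) : P.InL (o f) := by
  obtain ⟨c0, c1, c2, c3, c4, c5, rfl⟩ := hf
  simp only [map_add, h]
  have h0' : o (c0 : F) = c0 * o 1 := by rw [← h, mul_one]
  rw [h0']
  exact (((((h0.smul c0).add (h1.smul c1)).add (h2.smul c2)).add (h3.smul c3)).add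
    (h4.smul c4)).add (h5.smul c5)
variable (P)

theorem oS1_ZF (c : P.ZF) (f : F) : P.oS1 (c * f) = c * P.oS1 f :=
  DFunLike.congr_fun (P.oS1_mu c (P.ZF_s c.2).1) f
theorem oS2_ZF (c : P.ZF) (f : F) : P.oS2 (c * f) = c * P.oS2 f :=
  DFunLike.congr_fun (P.oS2_mu c (P.ZF_s c.2).2) f

theorem oT_apply (f : F) : P.oT f =
    q * (P.y2 * (qi * (P.oS2 (qi * (P.oS1 f - q * f + f)) - q * (qi * (P.oS1 f - q * f + f)) +
      (qi * (P.oS1 f - q * f + f))))) := rfl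

theorem oT_ZF (c : P.ZF) (f : F) : P.oT (c * f) = c * P.oT f := by
  rw [oT_apply, oT_apply, oS1_ZF]
  have : qi * (↑c * P.oS1 f - q * (↑c * f) + ↑c * f) = c * (qi * (P.oS1 f - q * f + f)) := by ring
  rw [this, oS2_ZF]; ring

theorem InL_S1 {f : F} (hf : P.InL f) : P.InL (P.oS1 f) := by
  have h := P.d01
  have h' : P.y1 - P.y0 ≠ 0 := by rw [← neg_sub]; exact neg_ne_zero.mpr h
  refine InL.op P.oS1_ZF ?_ ?_ ?_ ?_ ?_ ?_ hf
  · refine ⟨-1, 0, 0, 0, 0, 0, ?_⟩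
    simp only [oS1_apply, map_mul, map_pow, map_one, P.s1q, P.s1y0, P.s1y1, P.s1y2]
    push_cast; field_simp; ring
  · refine ⟨0, 0, -P.qZ, 0, 0, 0, ?_⟩
    simp only [oS1_apply, map_mul, map_pow, map_one, P.s1q, P.s1y0, P.s1y1, P.s1y2]
    push_cast; (try simp only [qZ_coe, z1Z_coe, z2Z_coe, wZ_coe]); field_simp; ring
  · refine ⟨0, -1, P.qZ - 1, 0, 0, 0, ?_⟩
    simp only [oS1_apply, map_mul, map_pow, map_one, P.s1q, P.s1y0, P.s1y1, P.s1y2]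
    push_cast; (try simp only [qZ_coe, z1Z_coe, z2Z_coe, wZ_coe]); field_simp; ring
  · refine ⟨0, 0, 0, -1, 0, 0, ?_⟩
    simp only [oS1_apply, map_mul, map_pow, map_one, P.s1q, P.s1y0, P.s1y1, P.s1y2]
    push_cast; (try simp only [qZ_coe, z1Z_coe, z2Z_coe, wZ_coe]); field_simp; ring
  · refine ⟨-P.qZ * P.z2Z, 0, 0, P.qZ, P.qZ, 0, ?_⟩
    simp only [oS1_apply, map_mul, map_pow, map_one, P.s1q, P.s1y0, P.s1y1, P.s1y2]
    push_cast; (try simp only [qZ_coe, z1Z_coe, z2Z_coe, wZ_coe]); field_simp; ring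
  · refine ⟨P.qZ ^ 3 * P.wZ, 0, 0, -P.qZ * P.z1Z, 0, P.qZ, ?_⟩
    simp only [oS1_apply, map_mul, map_pow, map_one, P.s1q, P.s1y0, P.s1y1, P.s1y2]
    push_cast; (try simp only [qZ_coe, z1Z_coe, z2Z_coe, wZ_coe]); field_simp; ring

theorem InL_S2 {f : F} (hf : P.InL f) : P.InL (P.oS2 f) := by
  have h := P.d12
  have h' : P.y2 - P.y1 ≠ 0 := by rw [← neg_sub]; exact neg_ne_zero.mpr h
  refine InL.op P.oS2_ZF ?_ ?_ ?_ ?_ ?_ ?_ hf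
  · refine ⟨-1, 0, 0, 0, 0, 0, ?_⟩
    simp only [oS2_apply, map_mul, map_pow, map_one, P.s2q, P.s2y0, P.s2y1, P.s2y2]
    push_cast; field_simp; ring
  · refine ⟨0, -1, 0, 0, 0, 0, ?_⟩
    simp only [oS2_apply, map_mul, map_pow, map_one, P.s2q, P.s2y0, P.s2y1, P.s2y2]
    push_cast; (try simp only [qZ_coe, z1Z_coe, z2Z_coe, wZ_coe]); field_simp; ring
  · refine ⟨-P.qZ * P.z1Z, P.qZ, P.qZ, 0, 0, 0, ?_⟩
    simp only [oS2_apply, map_mul, map_pow, map_one, P.s2q, P.s2y0, P.s2y1, P.s2y2]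
    push_cast; (try simp only [qZ_coe, z1Z_coe, z2Z_coe, wZ_coe]); field_simp; ring
  · refine ⟨0, 0, 0, 0, -P.qZ, 0, ?_⟩
    simp only [oS2_apply, map_mul, map_pow, map_one, P.s2q, P.s2y0, P.s2y1, P.s2y2]
    push_cast; (try simp only [qZ_coe, z1Z_coe, z2Z_coe, wZ_coe]); field_simp; ring
  · refine ⟨0, 0, 0, -1, P.qZ - 1, 0, ?_⟩
    simp only [oS2_apply, map_mul, map_pow, map_one, P.s2q, P.s2y0, P.s2y1, P.s2y2]
    push_cast; (try simp only [qZ_coe, z1Z_coe, z2Z_coe, wZ_coe]); field_simp; ring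
  · refine ⟨P.qZ ^ 3 * P.wZ, -P.qZ * P.z2Z, 0, 0, 0, P.qZ, ?_⟩
    simp only [oS2_apply, map_mul, map_pow, map_one, P.s2q, P.s2y0, P.s2y1, P.s2y2]
    push_cast; (try simp only [qZ_coe, z1Z_coe, z2Z_coe, wZ_coe]); field_simp; ring

set_option maxHeartbeats 2000000 in
theorem InL_T {f : F} (hf : P.InL f) : P.InL (P.oT f) := by
  have h := P.d12
  have h' : P.y2 - P.y1 ≠ 0 := by rw [← neg_sub]; exact neg_ne_zero.mpr h
  have h1 := P.d01
  have h1' : P.y1 - P.y0 ≠ 0 := by rw [← neg_sub]; exact neg_ne_zero.mpr h1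
  have h2 := P.d02
  have h2' : P.y2 - P.y0 ≠ 0 := by rw [← neg_sub]; exact neg_ne_zero.mpr h2
  have hq := q0 (F := F)
  refine InL.op P.oT_ZF ?_ ?_ ?_ ?_ ?_ ?_ hf
  · refine ⟨P.z1Z, -1, -1, 0, 0, 0, ?_⟩
    simp only [oT_apply, qi_eq, oS1_apply, oS2_apply, map_mul, map_pow, map_one, map_add, map_sub, map_inv₀, map_div₀,
      P.s1q, P.s1y0, P.s1y1, P.s1y2, P.s2q, P.s2y0, P.s2y1, P.s2y2]
    push_cast; (try simp only [qZ_coe, z1Z_coe, z2Z_coe, wZ_coe]); field_simp; ring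
  · refine ⟨P.z1Z ^ 2 - P.z2Z, -P.z1Z, -P.z1Z, 1, 0, 0, ?_⟩
    simp only [oT_apply, qi_eq, oS1_apply, oS2_apply, map_mul, map_pow, map_one, map_add, map_sub, map_inv₀, map_div₀,
      P.s1q, P.s1y0, P.s1y1, P.s1y2, P.s2q, P.s2y0, P.s2y1, P.s2y2]
    push_cast; (try simp only [qZ_coe, z1Z_coe, z2Z_coe, wZ_coe]); field_simp; ring
  · refine ⟨0, 0, 0, 0, 1, 0, ?_⟩
    simp only [oT_apply, qi_eq, oS1_apply, oS2_apply, map_mul, map_pow, map_one, map_add, map_sub, map_inv₀, map_div₀,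
      P.s1q, P.s1y0, P.s1y1, P.s1y2, P.s2q, P.s2y0, P.s2y1, P.s2y2]
    push_cast; (try simp only [qZ_coe, z1Z_coe, z2Z_coe, wZ_coe]); field_simp; ring
  · refine ⟨(P.qZ ^ 2 - P.qZ) * P.wZ, -P.z2Z, 0, 0, P.z1Z, 1, ?_⟩
    simp only [oT_apply, qi_eq, oS1_apply, oS2_apply, map_mul, map_pow, map_one, map_add, map_sub, map_inv₀, map_div₀,
      P.s1q, P.s1y0, P.s1y1, P.s1y2, P.s2q, P.s2y0, P.s2y1, P.s2y2]
    push_cast; (try simp only [qZ_coe, z1Z_coe, z2Z_coe, wZ_coe]); field_simp; ring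
  · refine ⟨(-1 + P.qZ - P.qZ ^ 2) * P.wZ + P.z1Z * P.z2Z, 0, -P.z2Z, 0, -P.z1Z, -1, ?_⟩
    simp only [oT_apply, qi_eq, oS1_apply, oS2_apply, map_mul, map_pow, map_one, map_add, map_sub, map_inv₀, map_div₀,
      P.s1q, P.s1y0, P.s1y1, P.s1y2, P.s2q, P.s2y0, P.s2y1, P.s2y2]
    push_cast; (try simp only [qZ_coe, z1Z_coe, z2Z_coe, wZ_coe]); field_simp; ring
  · refine ⟨0, (1 - P.qZ + P.qZ ^ 2) * P.wZ - P.z1Z * P.z2Z, (P.qZ ^ 2 - P.qZ) * P.wZ, 0,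
      P.z1Z ^ 2 - P.z2Z, P.z1Z, ?_⟩
    simp only [oT_apply, qi_eq, oS1_apply, oS2_apply, map_mul, map_pow, map_one, map_add, map_sub, map_inv₀, map_div₀,
      P.s1q, P.s1y0, P.s1y1, P.s1y2, P.s2q, P.s2y0, P.s2y1, P.s2y2]
    push_cast; (try simp only [qZ_coe, z1Z_coe, z2Z_coe, wZ_coe]); field_simp; ring
end PolRep
end partM

section partN
open PolRep

namespace PolRep
variable {F : Type} [Field F] [Algebra LP F] (P : PolRep F)

theorem w3ne : P.w3 ≠ 0 := mul_ne_zero (mul_ne_zero P.y0ne P.y1ne) P.y2ne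

theorem oTi_apply (f : F) : P.oTi f = P.w3⁻¹ * P.oT (P.oT f) := by
  obtain ⟨h1, h2, -, h3⟩ := P.oT_rel
  have : P.oT ^ 3 * P.oTi = P.oT * P.oT := by
    simp only [pow_succ, pow_zero, one_mul, mul_assoc, h1, mul_one]
  rw [h3] at this
  have := DFunLike.congr_fun this f
  simp only [Module.End.mul_apply, mu_apply] at this
  rw [← this]
  have hw := P.w3ne
  have e : P.y0 * (P.y1 * P.y2) = P.w3 := by unfold w3; ring
  rw [e, inv_mul_cancel_left₀ hw]

theorem InL_Ti {f : F} (hf : P.InL f) : P.InL (P.oTi f) := by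
  rw [oTi_apply]; exact (P.InL_T (P.InL_T hf)).smul P.wiZ

/-- elements of `HPoly` preserving the lattice -/
def LSub : Subalgebra (Polynomial ℤ) HPoly where
  carrier := {x | ∀ f, P.InL f → P.InL (P.rho (ιLau x) f)}
  mul_mem' {a b} ha hb f hf := by
    rw [map_mul, map_mul]; exact ha _ (hb _ hf)
  add_mem' {a b} ha hb f hf := by
    rw [map_add, map_add]; exact (ha _ hf).add (hb _ hf)
  algebraMap_mem' c f hf := by
    rw [iota_alg]
    unfold structZq
    rw [RingHom.comp_apply, rho_alg]
    exact hf.smul (P.pZ c)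

theorem InL_one : P.InL 1 := ⟨1, 0, 0, 0, 0, 0, by push_cast; ring⟩

theorem InL_all (x : HPoly) : P.InL (P.rho (ιLau x) 1) := by
  refine HeckeAlg.ind P.LSub (fun i f hf => ?_) x 1 P.InL_one
  rw [iota_gen, rho_gen]
  fin_cases i
  · exact P.InL_T hf
  · exact P.InL_Ti hf
  · exact P.InL_S1 hf
  · exact P.InL_S2 hf

theorem fixed_of_central {x : HLau} (hx : x ∈ Subring.center HLau) :
    P.s1 (P.rho x 1) = P.rho x 1 ∧ P.s2 (P.rho x 1) = P.rho x 1 := by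
  have e1 : P.th1 1 = 0 := by rw [th1_apply, map_one]; ring
  have e2 : P.th2 1 = 0 := by rw [th2_apply, map_one]; ring
  have k1 : P.th1 (P.rho x 1) = 0 := by
    have := congrArg (fun y => P.rho y 1) (Subring.mem_center_iff.mp hx tA)
    simpa only [map_mul, Module.End.mul_apply, rho_tA, e1, map_zero] using this
  have k2 : P.th2 (P.rho x 1) = 0 := by
    have := congrArg (fun y => P.rho y 1) (Subring.mem_center_iff.mp hx tB)
    simpa only [map_mul, Module.End.mul_apply, rho_tB, e2, map_zero] using this
  rw [th1_apply] at k1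
  rw [th2_apply] at k2
  exact ⟨(sub_eq_zero.mp ((mul_eq_zero.mp k1).resolve_left (div_ne_zero P.c01 P.d01))).symm,
    (sub_eq_zero.mp ((mul_eq_zero.mp k2).resolve_left (div_ne_zero P.c12 P.d12))).symm⟩

theorem ZF_of_fixed {f : F} (h : P.InL f) (h1 : P.s1 f = f) (h2 : P.s2 f = f) : f ∈ P.ZF := by
  obtain ⟨c0, c1, c2, c3, c4, c5, hf⟩ := h
  have s1c (c : P.ZF) : P.s1 (c : F) = c := (P.ZF_s c.2).1
  have s2c (c : P.ZF) : P.s2 (c : F) = c := (P.ZF_s c.2).2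
  have f1 := congrArg P.s1 hf
  have f2 := congrArg P.s2 hf
  rw [h1] at f1
  rw [h2] at f2
  have f12 := congrArg P.s1 f2
  have f21 := congrArg P.s2 f1
  rw [h1] at f12
  rw [h2] at f21
  have f121 := congrArg P.s1 f21
  rw [h1] at f121
  have key : f = c0 + c1 * P.z1Z + c3 * P.z2Z + c5 * (P.z1Z * P.z2Z - P.qZ ^ 2 * P.wZ) := by
    have hV : (P.y0 - P.y1) * ((P.y0 - P.y2) * (P.y1 - P.y2)) ≠ 0 :=
      mul_ne_zero P.d01 (mul_ne_zero P.d02 P.d12)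
    apply mul_left_cancel₀ hV
    simp only [z1Z_coe, z2Z_coe, qZ_coe, wZ_coe]
    simp only [map_add, map_mul, map_pow, s1c, s2c, P.s1q, P.s1y0, P.s1y1, P.s1y2, P.s2q, P.s2y0,
      P.s2y1, P.s2y2] at f1 f2 f12 f21 f121
    linear_combination P.y0 ^ 2 * P.y1 * hf - P.y1 ^ 2 * P.y0 * f1 - P.y0 ^ 2 * P.y2 * f2
      + P.y1 ^ 2 * P.y2 * f12 + P.y2 ^ 2 * P.y0 * f21 - P.y2 ^ 2 * P.y1 * f121
  have : f = ((c0 + c1 * P.z1Z + c3 * P.z2Z + c5 * (P.z1Z * P.z2Z - P.qZ ^ 2 * P.wZ) : P.ZF) : F) := by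
    rw [key]; push_cast; ring
  rw [this]; exact Subtype.mem _

theorem rho_w {w : HLau}
    (hw : (YLau 0 * YLau 1 * YLau 2) * w = 1 ∧ w * (YLau 0 * YLau 1 * YLau 2) = 1) :
    P.rho w = mu P.w3⁻¹ := by
  have h := congrArg P.rho hw.2
  simp only [map_mul, P.rho_Y.1, P.rho_Y.2.1, P.rho_Y.2.2, ← mu_mul, map_one] at h
  have h3 : (mu P.w3 * mu P.w3⁻¹ : Module.End LP F) = 1 := by
    rw [← mu_mul, mul_inv_cancel₀ P.w3ne, mu_one]
  calc P.rho w = P.rho w * (mu P.w3 * mu P.w3⁻¹) := by rw [h3, mul_one]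
    _ = mu P.w3⁻¹ := by
      rw [← mul_assoc]; unfold w3 at *; rw [h, one_mul]

theorem lift_ZF {w : HLau}
    (hw : (YLau 0 * YLau 1 * YLau 2) * w = 1 ∧ w * (YLau 0 * YLau 1 * YLau 2) = 1)
    {c : F} (hc : c ∈ P.ZF) : ∃ x ∈ Subring.closure (genSet w), P.rho x = mu c := by
  have hY := P.rho_Y
  induction hc using Subring.closure_induction with
  | mem x hx =>
    rcases hx with (rfl | rfl | rfl | rfl) | ⟨c, rfl⟩
    · refine ⟨YLau 0 * YLau 1 * YLau 2, Subring.subset_closure (by simp [genSet]), ?_⟩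
      simp only [map_mul, hY.1, hY.2.1, hY.2.2, ← mu_mul]; rfl
    · exact ⟨w, Subring.subset_closure (by simp [genSet]), P.rho_w hw⟩
    · refine ⟨_, Subring.subset_closure (Or.inl (Or.inr (Or.inr (Or.inl rfl)))), ?_⟩
      simp only [map_mul, map_add, hY.1, hY.2.1, hY.2.2, ← mu_mul, ← mu_add, rho_q]; rfl
    · refine ⟨_, Subring.subset_closure (Or.inl (Or.inr (Or.inr (Or.inr rfl)))), ?_⟩
      simp only [map_mul, map_add, hY.1, hY.2.1, hY.2.2, ← mu_mul, ← mu_add, rho_q]; rfl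
    · exact ⟨structZq c, Subring.subset_closure (Or.inr ⟨c, rfl⟩), P.rho_alg _⟩
  | zero => exact ⟨0, Subring.zero_mem _, by rw [map_zero]; ext; simp [mu_apply]⟩
  | one => exact ⟨1, Subring.one_mem _, by rw [map_one, mu_one]⟩
  | add x y _ _ hx hy =>
    obtain ⟨a, ha, ha'⟩ := hx
    obtain ⟨b, hb, hb'⟩ := hy
    exact ⟨a + b, Subring.add_mem _ ha hb, by rw [map_add, mu_add, ha', hb']⟩
  | neg x _ hx =>
    obtain ⟨a, ha, ha'⟩ := hx
    exact ⟨-a, Subring.neg_mem _ ha, by rw [map_neg, ha']; ext; simp [mu_apply]⟩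
  | mul x y _ _ hx hy =>
    obtain ⟨a, ha, ha'⟩ := hx
    obtain ⟨b, hb, hb'⟩ := hy
    exact ⟨a * b, Subring.mul_mem _ ha hb, by rw [map_mul, mu_mul, ha', hb']⟩
end PolRep

theorem center_image_mem {w : HLau}
    (hw : (YLau 0 * YLau 1 * YLau 2) * w = 1 ∧ w * (YLau 0 * YLau 1 * YLau 2) = 1)
    {z : HPoly} (hz : z ∈ Subring.center HPoly) : ιLau z ∈ Subring.closure (genSet w) := by
  have hc := iota_central hz
  have hfix := stdRep.fixed_of_central hc
  obtain ⟨x, hx, hx'⟩ := stdRep.lift_ZF hw (stdRep.ZF_of_fixed (stdRep.InL_all z) hfix.1 hfix.2)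
  have hxc : x ∈ Subring.center HLau := by
    obtain ⟨y, hy, rfl⟩ := closure_le_map hw hx
    exact iota_central hy
  have h0 : ιLau z - x = 0 := by
    apply stdRep.faithful (Subring.sub_mem _ hc hxc)
    rw [map_sub, hx', LinearMap.sub_apply, mu_apply, mul_one, sub_self]
  rw [sub_eq_zero.mp h0]; exact hx
end partN

/-- The image under `ι` of the center of `H` equals the `ℤ[q]`-subalgebra of
`H_{ℤ[q^{±1}]}` generated by `σ_3`, `σ_3⁻¹`, `qσ_1` and `qσ_2`, where
`σ_1 = Y_1 + Y_2 + Y_3`, `σ_2 = Y_1Y_2 + Y_2Y_3 + Y_1Y_3` and `σ_3 = Y_1Y_2Y_3`.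
Here `w` denotes the (two-sided) inverse `σ_3⁻¹`. -/
theorem statement1 (w : HLau)
    (hw : (YLau 0 * YLau 1 * YLau 2) * w = 1 ∧ w * (YLau 0 * YLau 1 * YLau 2) = 1) :
    ιLau '' (Subring.center HPoly : Set HPoly) =
    (Subring.closure
      (({YLau 0 * YLau 1 * YLau 2, w,
         qLau * (YLau 0 + YLau 1 + YLau 2),
         qLau * (YLau 0 * YLau 1 + YLau 1 * YLau 2 + YLau 0 * YLau 2)} : Set HLau) ∪
        Set.range structZq) : Set HLau) := by
  apply Set.Subset.antisymm
  · rintro _ ⟨z, hz, rfl⟩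
    exact center_image_mem hw hz
  · intro x hx
    exact closure_le_map hw hx
end
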